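/- Let G be a connected triangle-free planar graph on at least 2 vertices. Then the 2-surviving rate satisfies ρ₂(G) > 1/9. -/

import Mathlib

/-- The set of vertices on fire after `t` fire-spread rounds, when the fire breaks out
at `v` and the firefighters protect the vertices of `P s` in round `s + 1` (protection
happens just before the `s`-th spread step and is permanent). -/
def burnedSet {V : Type*} (G : SimpleGraph V) (v : V) (P : ℕ → Set V) : ℕ → Set V
  | 0 => {v}
  | t + 1 => burnedSet G v P t ∪
      {w | (∃ u ∈ burnedSet G v P t, G.Adj u w) ∧ ∀ s ≤ t, w ∉ P s}

/-- A strategy `P` is valid for the per-round budgets `b` if in each round it protects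
at most `b t` vertices, none of which are already on fire. -/
def ValidStrategy {V : Type*} (G : SimpleGraph V) (b : ℕ → ℕ) (v : V) (P : ℕ → Set V) : Prop :=
  ∀ t, (P t).Finite ∧ (P t).ncard ≤ b t ∧ Disjoint (P t) (burnedSet G v P t)

/-- `sn G b v` is the maximum number of vertices that can be saved (i.e. that never
catch fire) when the fire breaks out at `v` and the firefighters may protect at most
`b t` vertices in round `t + 1`. -/
noncomputable def sn {V : Type*} (G : SimpleGraph V) (b : ℕ → ℕ) (v : V) : ℕ :=
  sSup {m | ∃ P, ValidStrategy G b v P ∧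
    m = Nat.card {w : V | ∀ t, w ∉ burnedSet G v P t}}

/-- The surviving rate of `G` with per-round budgets `b` : the expected fraction of
vertices that can be saved when the starting vertex is chosen uniformly at random. -/
noncomputable def survivingRate {V : Type*} [Fintype V] (G : SimpleGraph V) (b : ℕ → ℕ) : ℝ :=
  (∑ v : V, (sn G b v : ℝ)) / (Fintype.card V : ℝ) ^ 2

/-- A plane embedding of a simple graph: vertices are points of the plane and edges are
simple arcs between their endpoints, such that arcs avoid all other vertices and two
arcs of distinct edges meet only in common endpoints. -/
structure PlaneEmbedding {V : Type*} (G : SimpleGraph V) where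
  pos : V → ℝ × ℝ
  arc : V → V → ℝ → ℝ × ℝ
  pos_inj : Function.Injective pos
  arc_cont : ∀ ⦃u v⦄, G.Adj u v → Continuous (arc u v)
  arc_injOn : ∀ ⦃u v⦄, G.Adj u v → Set.InjOn (arc u v) (Set.Icc 0 1)
  arc_zero : ∀ ⦃u v⦄, G.Adj u v → arc u v 0 = pos u
  arc_one : ∀ ⦃u v⦄, G.Adj u v → arc u v 1 = pos v
  arc_symm : ∀ ⦃u v⦄, G.Adj u v → ∀ t, arc v u t = arc u v (1 - t)
  arc_avoid : ∀ ⦃u v⦄, G.Adj u v → ∀ w : V, pos w ∉ arc u v '' Set.Ioo 0 1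
  arc_meet : ∀ ⦃u v x y⦄, G.Adj u v → G.Adj x y → s(u, v) ≠ s(x, y) →
      arc u v '' Set.Icc 0 1 ∩ arc x y '' Set.Icc 0 1 ⊆
        ({pos u, pos v} : Set (ℝ × ℝ)) ∩ {pos x, pos y}

/-- A graph is planar if it admits a plane embedding. -/
def IsPlanar {V : Type*} (G : SimpleGraph V) : Prop :=
  Nonempty (PlaneEmbedding G)



/-- Strategy lemma: if every vertex on the inner boundary of `U` can be protected before
its deadline `D`, then all of `U` is saved. -/
theorem sn_ge {V : Type} [Fintype V] (G : SimpleGraph V) (v : V) (U X : Finset V)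
    (D : V → ℕ) (hv : v ∉ U) (hD0 : D v = 0)
    (hD : ∀ y, y ∉ U → ∀ z, G.Adj y z → D z ≤ D y + 1)
    (hX : ∀ y, y ∉ U → ∀ z, z ∈ U → G.Adj y z → z ∈ X) (hXU : X ⊆ U)
    (hc : ∀ t, (X.filter (fun x => D x ≤ t)).card ≤ 2 * t) :
    U.card ≤ sn G (fun _ => 2) v := by
  classical
  set e := Fintype.equivFin V
  set N := Fintype.card V
  let k : V → ℕ := fun x => D x * N + (e x : ℕ)
  have hkinj : ∀ x y, k x = k y → x = y := by
    intro x y h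
    have h1 : (k x) % N = (e x : ℕ) := by
      simp only [k]; rw [mul_comm, Nat.mul_add_mod]; exact Nat.mod_eq_of_lt (e x).2
    have h2 : (k y) % N = (e y : ℕ) := by
      simp only [k]; rw [mul_comm, Nat.mul_add_mod]; exact Nat.mod_eq_of_lt (e y).2
    rw [h, h2] at h1
    exact e.injective (Fin.ext h1.symm)
  have hkD : ∀ x y, k x ≤ k y → D x ≤ D y := by
    intro x y h
    by_contra hlt
    push Not at hlt
    have : D y * N + N ≤ D x * N := by nlinarith
    have h2 := (e y).2
    simp only [k] at h
    omega
  let r : V → ℕ := fun x => (X.filter (fun y => k y < k x)).card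
  have hrlt : ∀ x ∈ X, ∀ y ∈ X, k x < k y → r x < r y := by
    intro x hx y hy h
    apply Finset.card_lt_card
    rw [Finset.ssubset_iff_of_subset]
    · exact ⟨x, by simp [hx, h], by simp⟩
    · intro z hz
      simp only [Finset.mem_filter] at hz ⊢
      exact ⟨hz.1, hz.2.trans h⟩
  have hrinj : ∀ x ∈ X, ∀ y ∈ X, r x = r y → x = y := by
    intro x hx y hy h
    apply hkinj
    rcases lt_trichotomy (k x) (k y) with h1 | h1 | h1
    · have := hrlt x hx y hy h1; omega
    · exact h1
    · have := hrlt y hy x hx h1; omega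
  have hrD : ∀ x ∈ X, r x < 2 * D x := by
    intro x hx
    refine lt_of_lt_of_le ?_ (hc (D x))
    apply Finset.card_lt_card
    rw [Finset.ssubset_iff_of_subset]
    · exact ⟨x, by simp [hx], by simp⟩
    · intro z hz
      simp only [Finset.mem_filter] at hz ⊢
      exact ⟨hz.1, hkD _ _ hz.2.le⟩
  let P : ℕ → Set V := fun t => {x | x ∈ X ∧ r x / 2 = t}
  have hb : ∀ t, ∀ z ∈ burnedSet G v P t, z ∉ U ∧ D z ≤ t := by
    intro t
    induction t with
    | zero =>
      intro z hz
      have : z = v := hz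
      subst this
      exact ⟨hv, hD0.le⟩
    | succ t ih =>
      intro z hz
      rcases hz with hz | ⟨⟨u, hu, huz⟩, hP⟩
      · exact ⟨(ih z hz).1, (ih z hz).2.trans (Nat.le_succ t)⟩
      · obtain ⟨h1, h2⟩ := ih u hu
        have h3 := hD u h1 z huz
        refine ⟨fun hzU => ?_, by omega⟩
        have hzX := hX u h1 z hzU huz
        have := hrD z hzX
        exact hP (r z / 2) (by omega) ⟨hzX, rfl⟩
  have hval : ValidStrategy G (fun _ => 2) v P := by
    intro t
    refine ⟨Set.toFinite _, ?_, ?_⟩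
    · have : (P t) = ((X.filter (fun x => r x / 2 = t) : Finset V) : Set V) := by
        ext x; simp [P]
      rw [this, Set.ncard_coe_finset]
      have h2 : ((X.filter (fun x => r x / 2 = t)).image r).card ≤ ({2 * t, 2 * t + 1} : Finset ℕ).card := by
        apply Finset.card_le_card
        intro a ha
        simp only [Finset.mem_image, Finset.mem_filter] at ha
        obtain ⟨x, hx, rfl⟩ := ha
        simp only [Finset.mem_insert, Finset.mem_singleton]
        omega
      rw [Finset.card_image_of_injOn] at h2
      · exact h2.trans Finset.card_le_two
      · intro x hx y hy h
        simp only [Finset.coe_filter, Set.mem_setOf_eq] at hx hy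
        exact hrinj x hx.1 y hy.1 h
    · rw [Set.disjoint_left]
      intro x hx hxb
      exact (hb t x hxb).1 (hXU hx.1)
  have hle : Nat.card {w : V | ∀ t, w ∉ burnedSet G v P t} ≤ sn G (fun _ => 2) v := by
    apply le_csSup
    · refine ⟨Fintype.card V, ?_⟩
      rintro m ⟨P, -, rfl⟩
      rw [← Nat.card_eq_fintype_card]
      exact Finite.card_subtype_le _
    · exact ⟨P, hval, rfl⟩
  refine le_trans ?_ hle
  rw [← Set.ncard_coe_finset U, ← Nat.card_coe_set_eq]
  apply Nat.card_mono (Set.toFinite _)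
  intro x hx
  simp only [Set.mem_setOf_eq]
  intro t ht
  exact (hb t x ht).1 hx



theorem card_le_of_dist_injOn {V : Type} (G : SimpleGraph V) (v : V) (A P : Finset V) (a b : ℕ)
    (hinj : Set.InjOn (fun z => G.dist v z) (P : Set V)) (hA : A ⊆ P)
    (h : ∀ z ∈ A, a ≤ G.dist v z ∧ G.dist v z < b) : A.card ≤ b - a := by
  classical
  have h1 : (A.image (fun z => G.dist v z)).card ≤ (Finset.Ico a b).card := by
    apply Finset.card_le_card
    intro n hn
    simp only [Finset.mem_image] at hn
    obtain ⟨z, hz, rfl⟩ := hn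
    simpa using h z hz
  rw [Finset.card_image_of_injOn (hinj.mono (by exact_mod_cast hA))] at h1
  simpa using h1

theorem save_F1 {V : Type} [Fintype V] [DecidableEq V] (G : SimpleGraph V) (hconn : G.Connected)
    (v : V) (Pp Pq S : Finset V)
    (hp : Set.InjOn (fun z => G.dist v z) (Pp : Set V))
    (hq : Set.InjOn (fun z => G.dist v z) (Pq : Set V))
    (hS : ∀ y z, G.Adj y z → z ∈ S → y = v ∨ y ∈ Pp ∪ Pq ∪ S)
    (hvS : v ∉ S) (N : Finset V) (hNc : N.card ≤ 2)
    (hN : ∀ w ∈ Pp ∪ Pq ∪ S, G.Adj v w → w ∈ N) :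
    ((Pp ∪ Pq ∪ S).erase v).card ≤ sn G (fun _ => 2) v := by
  classical
  refine sn_ge G v _ (((Pp ∪ Pq ∪ S).erase v).filter (fun z => z ∈ Pp ∪ Pq ∨ G.Adj v z))
    (fun z => G.dist v z) (by simp) (by simp) ?_ ?_ (Finset.filter_subset _ _) ?_
  · intro y _ z hyz
    have := hconn.dist_triangle (u := v) (v := y) (w := z)
    rw [SimpleGraph.dist_eq_one_iff_adj.2 hyz] at this
    exact this
  · intro y hy z hz hyz
    simp only [Finset.mem_erase, Finset.mem_filter, Finset.mem_union, not_and, ne_eq] at *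
    refine ⟨hz, ?_⟩
    by_contra hcon
    push Not at hcon
    have h1 : z ∈ S := by tauto
    rcases hS y z hyz h1 with rfl | h
    · exact hcon.2 hyz
    · apply hy _ h
      rintro rfl
      exact hcon.2 hyz
  · intro t
    rcases Nat.eq_zero_or_pos t with rfl | ht
    · simp only [Nat.le_zero, mul_zero, Finset.card_eq_zero]
      ext z
      simp only [Finset.mem_filter, Finset.mem_erase, Finset.notMem_empty, iff_false, not_and]
      intro h1 h2
      exact h1.1.1 ((hconn.dist_eq_zero_iff).1 h2).symm
    · have hsub : ((((Pp ∪ Pq ∪ S).erase v).filter (fun z => z ∈ Pp ∪ Pq ∨ G.Adj v z)).filter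
          (fun z => G.dist v z ≤ t)) ⊆ N ∪ Pp.filter (fun z => 2 ≤ G.dist v z ∧ G.dist v z < t + 1)
            ∪ Pq.filter (fun z => 2 ≤ G.dist v z ∧ G.dist v z < t + 1) := by
        intro z hz
        simp only [Finset.mem_filter, Finset.mem_erase] at hz
        obtain ⟨⟨⟨hzv, hzU⟩, hz2⟩, hzt⟩ := hz
        by_cases hadj : G.Adj v z
        · have := hN z hzU hadj
          simp [this]
        · have hd0 : G.dist v z ≠ 0 := fun h => hzv ((hconn.dist_eq_zero_iff).1 h).symm
          have hd1 : G.dist v z ≠ 1 := fun h => hadj (SimpleGraph.dist_eq_one_iff_adj.1 h)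
          have h2 : z ∈ Pp ∪ Pq := by tauto
          simp only [Finset.mem_union, Finset.mem_filter] at h2 ⊢
          have : 2 ≤ G.dist v z ∧ G.dist v z < t + 1 := by omega
          tauto
      have c1 := card_le_of_dist_injOn G v
        (Pp.filter (fun z => 2 ≤ G.dist v z ∧ G.dist v z < t + 1)) Pp 2 (t+1) hp
        (Finset.filter_subset _ _) (by simp)
      have c2 := card_le_of_dist_injOn G v
        (Pq.filter (fun z => 2 ≤ G.dist v z ∧ G.dist v z < t + 1)) Pq 2 (t+1) hq
        (Finset.filter_subset _ _) (by simp)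
      have c3 := Finset.card_le_card hsub
      have c4 := Finset.card_union_le (N ∪ Pp.filter (fun z => 2 ≤ G.dist v z ∧ G.dist v z < t + 1)) (Pq.filter (fun z => 2 ≤ G.dist v z ∧ G.dist v z < t + 1))
      have c5 := Finset.card_union_le N (Pp.filter (fun z => 2 ≤ G.dist v z ∧ G.dist v z < t + 1))
      omega

theorem save_F2 {V : Type} [Fintype V] [DecidableEq V] (G : SimpleGraph V) (hconn : G.Connected)
    (v : V) (Pp Pq S : Finset V)
    (hp : Set.InjOn (fun z => G.dist v z) (Pp : Set V))
    (hq : Set.InjOn (fun z => G.dist v z) (Pq : Set V))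
    (hS : ∀ y z, G.Adj y z → z ∈ S → y = v ∨ y ∈ Pp ∪ Pq ∪ S)
    (p1 q1 r : V) (hp1 : p1 ∈ Pp) (hvp : G.Adj v p1) (hvq : G.Adj v q1)
    (hpq : p1 ≠ q1)
    (hpure : ∀ z ∈ Pp, z ≠ v → ∀ h, G.Adj v h → G.dist h z + 1 = G.dist v z → h = p1)
    (hNP : ∀ w ∈ Pp ∪ Pq, G.Adj v w → w = p1 ∨ w = q1)
    (hNS : ∀ w ∈ S, G.Adj v w → w = r)
    (hq2 : ∀ z ∈ Pq, G.dist v z = 2 → G.Adj q1 z)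
    (B : Finset V) (hBc : B.card ≤ 2)
    (hB : ∀ w ∈ Pq ∪ S, w ≠ v → G.Adj q1 w → w ∈ B) :
    (((Pp ∪ Pq ∪ S).erase v).erase q1).card ≤ sn G (fun _ => 2) v := by
  classical
  let pure : V → Prop := fun z => z ≠ v ∧ z ≠ p1 ∧
    ∀ h, G.Adj v h → G.dist h z + 1 = G.dist v z → h = p1
  have htri : ∀ a y z, G.Adj y z → G.dist a z ≤ G.dist a y + 1 := by
    intro a y z hyz
    have := hconn.dist_triangle (u := a) (v := y) (w := z)
    rw [SimpleGraph.dist_eq_one_iff_adj.2 hyz] at this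
    exact this
  refine sn_ge G v _ ((((Pp ∪ Pq ∪ S).erase v).erase q1).filter
      (fun z => z ∈ Pp ∪ Pq ∨ G.Adj v z ∨ G.Adj q1 z))
    (fun z => G.dist v z + if pure z then 1 else 0) (by simp) (by simp [pure]) ?_ ?_
      (Finset.filter_subset _ _) ?_
  · intro y hy z hyz
    have h1 := htri v y z hyz
    by_cases hz : pure z
    · have hyp : y ≠ p1 := by
        rintro rfl
        apply hy
        simp [hp1, hpq, hvp.ne']
      by_cases hlt : G.dist v z ≤ G.dist v y
      · simp only [hz, if_true]; omega
      · have heq : G.dist v z = G.dist v y + 1 := by omega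
        have hyv : y ≠ v := by
          rintro rfl
          exact hz.2.1 (hz.2.2 z hyz (by simp [heq]))
        have hypure : pure y := by
          refine ⟨hyv, hyp, fun h hvh hh => hz.2.2 h hvh ?_⟩
          have h2 := htri h y z hyz
          have h3 := hconn.dist_triangle (u := v) (v := h) (w := z)
          rw [SimpleGraph.dist_eq_one_iff_adj.2 hvh] at h3
          omega
        simp only [hz, hypure, if_true]; omega
    · simp only [hz, if_false]; omega
  · intro y hy z hz hyz
    simp only [Finset.mem_erase, Finset.mem_filter, Finset.mem_union, not_and, ne_eq] at *
    refine ⟨hz, ?_⟩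
    by_contra hcon
    push Not at hcon
    have h1 : z ∈ S := by tauto
    rcases hS y z hyz h1 with rfl | h
    · exact hcon.2.1 hyz
    · apply hy _ _ h
      · rintro rfl
        exact hcon.2.2 hyz
      · rintro rfl
        exact hcon.2.1 hyz
  · intro t
    rcases Nat.eq_zero_or_pos t with rfl | ht
    · simp only [Nat.le_zero, mul_zero, Finset.card_eq_zero]
      ext z
      simp only [Finset.mem_filter, Finset.mem_erase, Finset.notMem_empty, iff_false, not_and]
      intro h1 h2
      exact h1.1.2.1 ((hconn.dist_eq_zero_iff).1 (by omega)).symm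
    · set Cp := Pp.filter (fun z => 2 ≤ G.dist v z ∧ G.dist v z < t)
      set Cq := Pq.filter (fun z => 3 ≤ G.dist v z ∧ G.dist v z < t + 1)
      set B' : Finset V := if t = 1 then ∅ else B
      have hsub : ((((((Pp ∪ Pq ∪ S).erase v).erase q1).filter
          (fun z => z ∈ Pp ∪ Pq ∨ G.Adj v z ∨ G.Adj q1 z))).filter
          (fun z => (G.dist v z + if pure z then 1 else 0) ≤ t)) ⊆ ({p1, r} ∪ B') ∪ (Cp ∪ Cq) := by
        intro z hz
        simp only [Finset.mem_filter, Finset.mem_erase] at hz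
        obtain ⟨⟨⟨hzq, hzv, hzU⟩, hz2⟩, hzt⟩ := hz
        have hd0 : G.dist v z ≠ 0 := fun h => hzv ((hconn.dist_eq_zero_iff).1 h).symm
        simp only [Finset.mem_union, Finset.mem_insert, Finset.mem_singleton]
        have hB'mem : z ∈ B → t ≠ 1 → z ∈ B' := by
          intro h1 h2; simp [B', h1, h2]
        by_cases hadj : G.Adj v z
        · by_cases hzS : z ∈ S
          · have := hNS z hzS hadj
            tauto
          · have : z ∈ Pp ∪ Pq := by
              simp only [Finset.mem_union] at hzU ⊢; tauto
            have := hNP z this hadj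
            tauto
        · have hd1 : G.dist v z ≠ 1 := fun h => hadj (SimpleGraph.dist_eq_one_iff_adj.1 h)
          have hzp1 : z ≠ p1 := by rintro rfl; exact hadj hvp
          have ht1 : t ≠ 1 := by
            rintro rfl
            split_ifs at hzt <;> omega
          by_cases hzPp : z ∈ Pp
          · have : pure z := ⟨hzv, hzp1, hpure z hzPp hzv⟩
            simp only [this, if_true] at hzt
            have : z ∈ Cp := by
              simp only [Cp, Finset.mem_filter]; exact ⟨hzPp, by omega, by omega⟩
            tauto
          · by_cases hzPq : z ∈ Pq
            · by_cases hd2 : G.dist v z = 2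
              · have := hB z (by simp [hzPq]) hzv (hq2 z hzPq hd2)
                have := hB'mem this ht1
                tauto
              · have : z ∈ Cq := by
                  simp only [Cq, Finset.mem_filter]
                  exact ⟨hzPq, by omega, by split_ifs at hzt <;> omega⟩
                tauto
            · have hzS : z ∈ S := by simp only [Finset.mem_union] at hzU; tauto
              have hq1z : G.Adj q1 z := by
                simp only [Finset.mem_union] at hz2; tauto
              have := hB'mem (hB z (by simp [hzS]) hzv hq1z) ht1
              tauto
      have c1 := card_le_of_dist_injOn G v Cp Pp 2 t hp (Finset.filter_subset _ _) (by simp [Cp])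
      have c2 := card_le_of_dist_injOn G v Cq Pq 3 (t+1) hq (Finset.filter_subset _ _) (by simp [Cq])
      have c3 := Finset.card_le_card hsub
      have c4 := Finset.card_union_le ({p1, r} ∪ B') (Cp ∪ Cq)
      have c5 := Finset.card_union_le {p1, r} B'
      have c6 := Finset.card_union_le Cp Cq
      have c7 : ({p1, r} : Finset V).card ≤ 2 := Finset.card_le_two
      have c8 : B'.card ≤ if t = 1 then 0 else 2 := by
        simp only [B']; split_ifs <;> simp [hBc]
      split_ifs at c8 <;> omega



/-! ### Sums of cochains along walks -/

/-- Sum of a mod 2 cochain along a walk. -/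
def wsum {α : Type*} {H : SimpleGraph α} (c : α → α → ZMod 2) :
    ∀ {p q : α}, H.Walk p q → ZMod 2
  | _, _, SimpleGraph.Walk.nil => 0
  | _, _, SimpleGraph.Walk.cons (u := u) (v := v) _ w => c u v + wsum c w

theorem zmod2_add_self (a : ZMod 2) : a + a = 0 := by revert a; decide

theorem zmod2_ne {a b c : ZMod 2} (h1 : a ≠ b) (h2 : c ≠ b) : a = c := by
  revert a b c; decide

section
variable {α : Type*} {H : SimpleGraph α}

theorem wsum_append (c : α → α → ZMod 2) {p q r : α} (w : H.Walk p q) (w' : H.Walk q r) :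
    wsum c (w.append w') = wsum c w + wsum c w' := by
  induction w with
  | nil => simp [wsum]
  | cons h w ih => simp [wsum, ih, add_assoc]

theorem wsum_reverse (c : α → α → ZMod 2) (hc : ∀ p q, c p q = c q p) {p q : α}
    (w : H.Walk p q) : wsum c w.reverse = wsum c w := by
  induction w with
  | nil => simp [wsum]
  | cons h w ih =>
    rw [SimpleGraph.Walk.reverse_cons, wsum_append, ih]
    simp only [wsum, add_zero]
    rw [hc, add_comm]

theorem wsum_add (c d : α → α → ZMod 2) {p q : α} (w : H.Walk p q) :
    wsum (fun a b => c a b + d a b) w = wsum c w + wsum d w := by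
  induction w with
  | nil => simp [wsum]
  | cons h w ih => simp only [wsum, ih]; ring

theorem wsum_exact (f : α → ZMod 2) {p q : α} (w : H.Walk p q) :
    wsum (fun a b => f a + f b) w = f p + f q := by
  induction w with
  | nil => simp [wsum, zmod2_add_self]
  | cons h w ih =>
    simp only [wsum, ih]
    rename_i u v w'
    have := zmod2_add_self (f v)
    linear_combination this

theorem wsum_congr (c d : α → α → ZMod 2) {p q : α} (w : H.Walk p q)
    (h : ∀ a b, H.Adj a b → a ∈ w.support → b ∈ w.support → c a b = d a b) :
    wsum c w = wsum d w := by
  induction w with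
  | nil => simp [wsum]
  | cons hadj w ih =>
    simp only [wsum]
    rw [h _ _ hadj (by simp) (by simp), ih]
    intro a b hab ha hb
    exact h a b hab (by simp [ha]) (by simp [hb])

theorem wsum_zero {p q : α} (w : H.Walk p q) : wsum (fun _ _ => 0) w = 0 := by
  induction w with
  | nil => simp [wsum]
  | cons h w ih => simp [wsum, ih]

end

/-- Indicator cochain of the unordered pair `{a, b}`. -/
def ed {α : Type*} [DecidableEq α] (a b p q : α) : ZMod 2 :=
  if (p = a ∧ q = b) ∨ (p = b ∧ q = a) then 1 else 0

theorem ed_symm {α : Type*} [DecidableEq α] (a b p q : α) : ed a b p q = ed a b q p := by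
  unfold ed
  congr 1
  apply propext
  tauto

theorem ed_comm {α : Type*} [DecidableEq α] (a b p q : α) : ed a b p q = ed b a p q := by
  unfold ed
  congr 1
  apply propext
  tauto

/-! ### The triangular lattice -/

/-- The triangular lattice on `ℤ × ℤ`. -/
def TriLat : SimpleGraph (ℤ × ℤ) where
  Adj p q := (q.1 = p.1 + 1 ∧ q.2 = p.2) ∨ (q.1 = p.1 ∧ q.2 = p.2 + 1) ∨
    (q.1 = p.1 + 1 ∧ q.2 = p.2 + 1) ∨ (p.1 = q.1 + 1 ∧ p.2 = q.2) ∨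
    (p.1 = q.1 ∧ p.2 = q.2 + 1) ∨ (p.1 = q.1 + 1 ∧ p.2 = q.2 + 1)
  symm := ⟨by intro p q h; omega⟩
  loopless := ⟨by intro p h; omega⟩

theorem lat_adj (p q : ℤ × ℤ) : TriLat.Adj p q ↔ ((q.1 = p.1 + 1 ∧ q.2 = p.2) ∨
    (q.1 = p.1 ∧ q.2 = p.2 + 1) ∨
    (q.1 = p.1 + 1 ∧ q.2 = p.2 + 1) ∨ (p.1 = q.1 + 1 ∧ p.2 = q.2) ∨
    (p.1 = q.1 ∧ p.2 = q.2 + 1) ∨ (p.1 = q.1 + 1 ∧ p.2 = q.2 + 1)) := Iff.rfl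

/-- Third vertex of the triangle to the left of the dart `s → t`. -/
def third (s t : ℤ × ℤ) : ℤ × ℤ := (s.1 + (t.1 - s.1) - (t.2 - s.2), s.2 + (t.1 - s.1))

/-- Label of the lattice triangle with the given vertices. -/
def tri (a b c : ℤ × ℤ) : ℤ × ℤ :=
  ((2 * (a.1 + b.1 + c.1) + 3) / 3, min a.2 (min b.2 c.2))

/-- Label of the triangle to the left of a dart. -/
def leftTri (s t : ℤ × ℤ) : ℤ × ℤ := tri s t (third s t)

theorem third_cycle (s t : ℤ × ℤ) : third t (third s t) = s := by
  ext
  · simp only [third]; ring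
  · simp only [third]; ring

theorem third_cycle' (s t : ℤ × ℤ) : third (third s t) s = t := by
  ext
  · simp only [third]; ring
  · simp only [third]; ring

theorem leftTri_cycle (s t : ℤ × ℤ) : leftTri t (third s t) = leftTri s t := by
  unfold leftTri
  rw [third_cycle]
  unfold tri
  ext
  · simp only; congr 2; ring
  · simp only; omega

theorem leftTri_cycle' (s t : ℤ × ℤ) : leftTri (third s t) s = leftTri s t := by
  have := leftTri_cycle t (third s t)
  rw [third_cycle, leftTri_cycle] at this
  exact this

theorem third_adj {s t : ℤ × ℤ} (h : TriLat.Adj s t) : TriLat.Adj s (third s t) := by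
  rw [lat_adj] at *; simp only [third]; omega

theorem third_adj' {s t : ℤ × ℤ} (h : TriLat.Adj s t) : TriLat.Adj t (third s t) := by
  rw [lat_adj] at *; simp only [third]; omega

/-- The ray cochain of the triangle labelled `τ`. -/
def rho (τ p q : ℤ × ℤ) : ZMod 2 :=
  if ((p.2 = τ.2 ∧ q.2 = τ.2 + 1) ∨ (q.2 = τ.2 ∧ p.2 = τ.2 + 1)) ∧ τ.1 ≤ p.1 + q.1 then 1 else 0

theorem rho_symm (τ p q : ℤ × ℤ) : rho τ p q = rho τ q p := by
  unfold rho
  congr 1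
  apply propext
  rw [add_comm q.1]
  tauto

set_option maxHeartbeats 1600000 in
theorem rho_share_aux {s t : ℤ × ℤ} (h : (t.1 = s.1 + 1 ∧ t.2 = s.2) ∨ (t.1 = s.1 ∧ t.2 = s.2 + 1) ∨
    (t.1 = s.1 + 1 ∧ t.2 = s.2 + 1)) : ∃ f : ℤ × ℤ → ZMod 2, ∀ p q,
    TriLat.Adj p q → rho (leftTri s t) p q + rho (leftTri t s) p q = f p + f q + ed s t p q := by
  obtain ⟨sx, sy⟩ := s
  obtain ⟨tx, ty⟩ := t
  simp only at h
  rcases h with ⟨rfl, rfl⟩ | ⟨rfl, rfl⟩ | ⟨rfl, rfl⟩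
  · have e1 : leftTri (sx, ty) (sx + 1, ty) = (2 * sx + 2, ty) := by
      ext <;> simp [leftTri, tri, third] <;> omega
    have e2 : leftTri (sx + 1, ty) (sx, ty) = (2 * sx + 1, ty - 1) := by
      ext <;> simp [leftTri, tri, third] <;> omega
    refine ⟨fun p => if p.2 = ty ∧ sx < p.1 then 1 else 0, ?_⟩
    rintro ⟨px, py⟩ ⟨qx, qy⟩ h
    rw [e1, e2]
    rw [lat_adj] at h
    simp only [rho, ed, Prod.mk.injEq] at h ⊢
    rcases h with ⟨rfl, rfl⟩ | ⟨rfl, rfl⟩ | ⟨rfl, rfl⟩ | ⟨rfl, rfl⟩ | ⟨rfl, rfl⟩ | ⟨rfl, rfl⟩ <;>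
    split_ifs <;> first | rfl | (exfalso; omega)
  · have e1 : leftTri (tx, sy) (tx, sy + 1) = (2 * tx, sy) := by
      ext <;> simp [leftTri, tri, third] <;> omega
    have e2 : leftTri (tx, sy + 1) (tx, sy) = (2 * tx + 1, sy) := by
      ext <;> simp [leftTri, tri, third] <;> omega
    refine ⟨fun p => 0, ?_⟩
    rintro ⟨px, py⟩ ⟨qx, qy⟩ h
    rw [e1, e2]
    rw [lat_adj] at h
    simp only [rho, ed, Prod.mk.injEq] at h ⊢
    rcases h with ⟨rfl, rfl⟩ | ⟨rfl, rfl⟩ | ⟨rfl, rfl⟩ | ⟨rfl, rfl⟩ | ⟨rfl, rfl⟩ | ⟨rfl, rfl⟩ <;>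
    split_ifs <;> first | rfl | (exfalso; omega)
  · have e1 : leftTri (sx, sy) (sx + 1, sy + 1) = (2 * sx + 1, sy) := by
      ext <;> simp [leftTri, tri, third] <;> omega
    have e2 : leftTri (sx + 1, sy + 1) (sx, sy) = (2 * sx + 2, sy) := by
      ext <;> simp [leftTri, tri, third] <;> omega
    refine ⟨fun p => 0, ?_⟩
    rintro ⟨px, py⟩ ⟨qx, qy⟩ h
    rw [e1, e2]
    rw [lat_adj] at h
    simp only [rho, ed, Prod.mk.injEq] at h ⊢
    rcases h with ⟨rfl, rfl⟩ | ⟨rfl, rfl⟩ | ⟨rfl, rfl⟩ | ⟨rfl, rfl⟩ | ⟨rfl, rfl⟩ | ⟨rfl, rfl⟩ <;>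
    split_ifs <;> first | rfl | (exfalso; omega)

theorem rho_share {s t : ℤ × ℤ} (h : TriLat.Adj s t) : ∃ f : ℤ × ℤ → ZMod 2, ∀ p q,
    TriLat.Adj p q → rho (leftTri s t) p q + rho (leftTri t s) p q = f p + f q + ed s t p q := by
  rw [lat_adj] at h
  by_cases h1 : (t.1 = s.1 + 1 ∧ t.2 = s.2) ∨ (t.1 = s.1 ∧ t.2 = s.2 + 1) ∨
    (t.1 = s.1 + 1 ∧ t.2 = s.2 + 1)
  · exact rho_share_aux h1
  · obtain ⟨f, hf⟩ := rho_share_aux (s := t) (t := s) (by tauto)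
    refine ⟨f, fun p q hpq => ?_⟩
    rw [add_comm, hf p q hpq, ed_comm]

/-- Winding parity of a closed walk around a triangle. -/
theorem wind_share {s t : ℤ × ℤ} (h : TriLat.Adj s t) {p : ℤ × ℤ} (C : TriLat.Walk p p) :
    wsum (rho (leftTri s t)) C + wsum (rho (leftTri t s)) C = wsum (ed s t) C := by
  obtain ⟨f, hf⟩ := rho_share h
  have h1 : wsum (fun a b => rho (leftTri s t) a b + rho (leftTri t s) a b) C =
      wsum (fun a b => (f a + f b) + ed s t a b) C :=
    wsum_congr _ _ _ (fun a b hab _ _ => hf a b hab)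
  rw [wsum_add, wsum_add, wsum_exact, zmod2_add_self, zero_add] at h1
  exact h1

theorem wsum_ed_eq_zero {α : Type*} [DecidableEq α] {H : SimpleGraph α} {s t p q : α}
    (C : H.Walk p q) (h : s ∉ C.support ∨ t ∉ C.support) : wsum (ed s t) C = 0 := by
  rw [← wsum_zero C]
  apply wsum_congr
  intro a b _ ha hb
  unfold ed
  rw [if_neg]
  rintro (⟨rfl, rfl⟩ | ⟨rfl, rfl⟩) <;> tauto

theorem zmod2_eq_of_add {a b : ZMod 2} (h : a + b = 0) : a = b := by
  revert a b; decide

/-- Winding parity at a point. -/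
def wpt (g : ℤ × ℤ) {p q : ℤ × ℤ} (C : TriLat.Walk p q) : ZMod 2 :=
  wsum (rho (leftTri g (g.1 + 1, g.2))) C

theorem wind_step {g t : ℤ × ℤ} (h : TriLat.Adj g t) {p : ℤ × ℤ} (C : TriLat.Walk p p)
    (hg : g ∉ C.support) : wsum (rho (leftTri g (third g t))) C = wsum (rho (leftTri g t)) C := by
  have h1 := wind_share (third_adj h) C
  rw [wsum_ed_eq_zero C (Or.inl hg), leftTri_cycle'] at h1
  exact zmod2_eq_of_add h1

theorem wind_pt {g t : ℤ × ℤ} (h : TriLat.Adj g t) {p : ℤ × ℤ} (C : TriLat.Walk p p)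
    (hg : g ∉ C.support) : wsum (rho (leftTri g t)) C = wpt g C := by
  have a0 : TriLat.Adj g (g.1 + 1, g.2) := by rw [lat_adj]; simp
  have key : ∀ t, TriLat.Adj g t → wsum (rho (leftTri g t)) C = wpt g C →
      wsum (rho (leftTri g (third g t))) C = wpt g C :=
    fun t ht h => (wind_step ht C hg).trans h
  have k0 : wsum (rho (leftTri g (g.1 + 1, g.2))) C = wpt g C := rfl
  have k1 := key _ a0 k0
  have a1 := third_adj a0
  have k2 := key _ a1 k1
  have a2 := third_adj a1
  have k3 := key _ a2 k2
  have a3 := third_adj a2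
  have k4 := key _ a3 k3
  have a4 := third_adj a3
  have k5 := key _ a4 k4
  rw [lat_adj] at h
  rcases h with h | h | h | h | h | h
  · rw [show t = (g.1 + 1, g.2) by ext <;> simp only [third] <;> omega]; exact k0
  · rw [show t = third g (third g (g.1 + 1, g.2)) by ext <;> simp only [third] <;> omega]; exact k2
  · rw [show t = third g (g.1 + 1, g.2) by ext <;> simp only [third] <;> omega]; exact k1
  · rw [show t = third g (third g (third g (g.1 + 1, g.2))) by ext <;> simp only [third] <;> omega]; exact k3
  · rw [show t = third g (third g (third g (third g (third g (g.1 + 1, g.2))))) by ext <;> simp only [third] <;> omega]; exact k5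
  · rw [show t = third g (third g (third g (third g (g.1 + 1, g.2)))) by ext <;> simp only [third] <;> omega]; exact k4

theorem wpt_adj {g g' : ℤ × ℤ} (h : TriLat.Adj g g') {p : ℤ × ℤ} (C : TriLat.Walk p p)
    (hg : g ∉ C.support) (hg' : g' ∉ C.support) : wpt g C = wpt g' C := by
  rw [← wind_pt h C hg, ← wind_pt (third_adj' h) C hg', leftTri_cycle]



theorem int_primitive (f : ℤ → ZMod 2) : ∃ F : ℤ → ZMod 2, ∀ n, F (n + 1) = F n + f n := by
  refine ⟨fun n => ∑ i ∈ Finset.Ico 0 n, f i + ∑ i ∈ Finset.Ico n 0, f i, fun n => ?_⟩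
  rcases le_or_gt 0 n with h | h
  · have e1 : Finset.Ico 0 (n + 1) = insert n (Finset.Ico 0 n) := by
      ext x; simp; omega
    have e2 : Finset.Ico (n + 1) 0 = ∅ := by ext x; simp; omega
    have e3 : Finset.Ico n 0 = ∅ := by ext x; simp; omega
    simp only [e1, e2, e3]
    rw [Finset.sum_insert (by simp)]
    simp [add_comm]
  · have e1 : Finset.Ico n 0 = insert n (Finset.Ico (n + 1) 0) := by
      ext x; simp; omega
    have e2 : Finset.Ico 0 (n + 1) = ∅ := by ext x; simp; omega
    have e3 : Finset.Ico 0 n = ∅ := by ext x; simp; omega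
    simp only [e1, e2, e3]
    rw [Finset.sum_insert (by simp)]
    have := zmod2_add_self (f n)
    simp only [Finset.sum_empty, zero_add]
    linear_combination -this

/-- On the triangular lattice closed cochains are exact. -/
theorem closed_exact (c : ℤ × ℤ → ℤ × ℤ → ZMod 2) (hs : ∀ p q, TriLat.Adj p q → c p q = c q p)
    (hc : ∀ s t, TriLat.Adj s t → c s t + c t (third s t) + c s (third s t) = 0) :
    ∃ f : ℤ × ℤ → ZMod 2, ∀ p q, TriLat.Adj p q → c p q = f p + f q := by
  obtain ⟨A, hA⟩ := int_primitive (fun x => c (x, 0) (x + 1, 0))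
  choose B hB using fun x => int_primitive (fun y => c (x, y) (x, y + 1))
  have hU : ∀ x y, c (x, y) (x + 1, y + 1) + c (x, y + 1) (x + 1, y + 1) + c (x, y) (x, y + 1) = 0 := by
    intro x y
    have := hc (x, y) (x + 1, y + 1) (by rw [lat_adj]; simp)
    rw [show third (x, y) (x + 1, y + 1) = (x, y + 1) by ext <;> simp [third]] at this
    rw [hs (x + 1, y + 1) (x, y + 1) (by rw [lat_adj]; simp)] at this
    exact this
  have hD : ∀ x y, c (x, y) (x + 1, y) + c (x + 1, y) (x + 1, y + 1) + c (x, y) (x + 1, y + 1) = 0 := by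
    intro x y
    have := hc (x, y) (x + 1, y) (by rw [lat_adj]; simp)
    rw [show third (x, y) (x + 1, y) = (x + 1, y + 1) by ext <;> simp [third]] at this
    exact this
  let f : ℤ × ℤ → ZMod 2 := fun p => A p.1 + (B p.1 0 + B p.1 p.2)
  have hV : ∀ x y, c (x, y) (x, y + 1) = f (x, y) + f (x, y + 1) := by
    intro x y
    simp only [f, hB x y]
    linear_combination -zmod2_add_self (A x) - zmod2_add_self (B x 0) - zmod2_add_self (B x y)
  have hsq : ∀ x y, c (x, y) (x + 1, y) + c (x, y + 1) (x + 1, y + 1) =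
      c (x + 1, y) (x + 1, y + 1) + c (x, y) (x, y + 1) := by
    intro x y
    linear_combination hU x y + hD x y - zmod2_add_self (c (x, y) (x + 1, y + 1))
      - zmod2_add_self (c (x + 1, y) (x + 1, y + 1)) - zmod2_add_self (c (x, y) (x, y + 1))
  have hH : ∀ x y, c (x, y) (x + 1, y) = f (x, y) + f (x + 1, y) := by
    intro x y
    have step : ∀ y, (c (x, y) (x + 1, y) + f (x, y) + f (x + 1, y)) =
        (c (x, y + 1) (x + 1, y + 1) + f (x, y + 1) + f (x + 1, y + 1)) := by
      intro y
      have h1 := hV x y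
      have h2 := hV (x + 1) y
      have h3 := hsq x y
      linear_combination h3 + h1 + h2 + zmod2_add_self (f (x, y)) + zmod2_add_self (f (x + 1, y))
        - zmod2_add_self (c (x, y + 1) (x + 1, y + 1))
    have base : c (x, 0) (x + 1, 0) + f (x, 0) + f (x + 1, 0) = 0 := by
      simp only [f, hA]
      linear_combination zmod2_add_self (c (x, 0) (x + 1, 0)) + zmod2_add_self (A x) + zmod2_add_self (B x 0) +
        zmod2_add_self (B (x + 1) 0)
    have all : ∀ y, c (x, y) (x + 1, y) + f (x, y) + f (x + 1, y) = 0 := by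
      intro y
      induction y using Int.induction_on with
      | zero => exact base
      | succ i ih => rw [← step]; exact ih
      | pred i ih =>
        rw [step]
        simp only [sub_add_cancel]
        exact ih
    apply zmod2_eq_of_add
    rw [← add_assoc]
    exact all y
  have hG : ∀ x y, c (x, y) (x + 1, y + 1) = f (x, y) + f (x + 1, y + 1) := by
    intro x y
    have h1 := hD x y
    rw [hH, hV] at h1
    linear_combination h1 - zmod2_add_self (f (x, y)) - zmod2_add_self (f (x + 1, y)) - zmod2_add_self (f (x + 1, y + 1))
  refine ⟨f, ?_⟩
  have hpos : ∀ p q : ℤ × ℤ, ((q.1 = p.1 + 1 ∧ q.2 = p.2) ∨ (q.1 = p.1 ∧ q.2 = p.2 + 1) ∨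
    (q.1 = p.1 + 1 ∧ q.2 = p.2 + 1)) → c p q = f p + f q := by
    rintro ⟨px, py⟩ ⟨qx, qy⟩ h
    simp only at h
    rcases h with ⟨h1, h2⟩ | ⟨h1, h2⟩ | ⟨h1, h2⟩
    · rw [h1, h2]; exact hH px py
    · rw [h1, h2]; exact hV px py
    · rw [h1, h2]; exact hG px py
  intro p q h
  have h' := h
  rw [lat_adj] at h'
  by_cases h1 : (q.1 = p.1 + 1 ∧ q.2 = p.2) ∨ (q.1 = p.1 ∧ q.2 = p.2 + 1) ∨
    (q.1 = p.1 + 1 ∧ q.2 = p.2 + 1)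
  · exact hpos p q h1
  · rw [hs p q h, add_comm]
    exact hpos q p (by tauto)

theorem const_of_step (F : ℤ → ZMod 2) (a b : ℤ) (hab : a ≤ b)
    (h : ∀ n, a ≤ n → n < b → F n = F (n + 1)) : F a = F b := by
  induction b, hab using Int.leInduction with
  | base => rfl
  | succ n hn ih =>
    rw [ih (fun m h1 h2 => h m h1 (by omega)), h n hn (by omega)]

theorem rho_closed {s t g : ℤ × ℤ} (h : TriLat.Adj s t) (h1 : g ≠ s) (h2 : g ≠ t)
    (h3 : g ≠ third s t) :
    rho (leftTri g (g.1 + 1, g.2)) s t + rho (leftTri g (g.1 + 1, g.2)) t (third s t) +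
      rho (leftTri g (g.1 + 1, g.2)) s (third s t) = 0 := by
  obtain ⟨gx, gy⟩ := g
  obtain ⟨sx, sy⟩ := s
  obtain ⟨tx, ty⟩ := t
  have e1 : leftTri (gx, gy) (gx + 1, gy) = (2 * gx + 2, gy) := by
    ext <;> simp [leftTri, tri, third] <;> omega
  simp only [e1]
  rw [lat_adj] at h
  obtain ⟨ux, hux⟩ : ∃ ux, ux = (third (sx, sy) (tx, ty)).1 := ⟨_, rfl⟩
  obtain ⟨uy, huy⟩ : ∃ uy, uy = (third (sx, sy) (tx, ty)).2 := ⟨_, rfl⟩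
  have hu : third (sx, sy) (tx, ty) = (ux, uy) := by rw [hux, huy]
  rw [hu] at h3 ⊢
  simp only [third] at hux huy
  simp only [rho, ne_eq, Prod.mk.injEq] at *
  clear e1 hu
  split_ifs <;> first | rfl | decide | (exfalso; omega)

/-- A model of the graph `G` inside the triangular lattice, with `v` at infinity. -/
structure LatModel {V : Type} (G : SimpleGraph V) (v : V) where
  π : ℤ × ℤ → V
  conn : ∀ g g', π g = π g' → ∃ w : TriLat.Walk g g', ∀ x ∈ w.support, π x = π g
  lift : ∀ a b, G.Adj a b → ∃ s t, TriLat.Adj s t ∧ π s = a ∧ π t = b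
  fin : ∃ M : ℤ, ∀ g, (M < |g.1| ∨ M < |g.2|) → π g = v
  cconn : ∀ g g', π g ≠ v → π g' ≠ v → ∃ w : TriLat.Walk g g', ∀ x ∈ w.support, π x ≠ v
  surj : ∀ a, ∃ g, π g = a

theorem wpt_walk {p : ℤ × ℤ} (C : TriLat.Walk p p) {g g' : ℤ × ℤ} (w : TriLat.Walk g g')
    (h : ∀ x ∈ w.support, x ∉ C.support) : wpt g C = wpt g' C := by
  induction w with
  | nil => rfl
  | cons hadj w ih =>
    rw [wpt_adj hadj C (h _ (by simp)) (h _ (by simp))]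
    exact ih (fun x hx => h x (by simp [hx]))

theorem not_cover {V : Type} [DecidableEq V] (W K1 K2 K3 : Finset V)
    (h1 : 3 * (K1 ∩ W).card < W.card) (h2 : 3 * (K2 ∩ W).card < W.card)
    (h3 : 3 * (K3 ∩ W).card < W.card) : ∃ w ∈ W, w ∉ K1 ∧ w ∉ K2 ∧ w ∉ K3 := by
  by_contra hcon
  push Not at hcon
  have : W ⊆ (K1 ∩ W) ∪ (K2 ∩ W) ∪ (K3 ∩ W) := by
    intro w hw
    have := hcon w hw
    simp only [Finset.mem_union, Finset.mem_inter]
    tauto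
  have c1 := Finset.card_le_card this
  have c2 := Finset.card_union_le ((K1 ∩ W) ∪ (K2 ∩ W)) (K3 ∩ W)
  have c3 := Finset.card_union_le (K1 ∩ W) (K2 ∩ W)
  omega

/-- The closed walk associated with a lattice edge `x y`. -/
def loopWalk {g0 x y : ℤ × ℤ} (Qx : TriLat.Walk g0 x) (h : TriLat.Adj x y) (Qy : TriLat.Walk g0 y) :
    TriLat.Walk g0 g0 := Qx.append (SimpleGraph.Walk.cons h Qy.reverse)

theorem loopWalk_wsum (c : ℤ × ℤ → ℤ × ℤ → ZMod 2) (hc : ∀ p q, c p q = c q p) {g0 x y : ℤ × ℤ}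
    (Qx : TriLat.Walk g0 x) (h : TriLat.Adj x y) (Qy : TriLat.Walk g0 y) :
    wsum c (loopWalk Qx h Qy) = wsum c Qx + c x y + wsum c Qy := by
  unfold loopWalk
  rw [wsum_append]
  simp only [wsum]
  rw [wsum_reverse c hc, add_assoc]

theorem loopWalk_support {g0 x y : ℤ × ℤ}
    (Qx : TriLat.Walk g0 x) (h : TriLat.Adj x y) (Qy : TriLat.Walk g0 y) (z : ℤ × ℤ) :
    z ∈ (loopWalk Qx h Qy).support ↔ z ∈ Qx.support ∨ z ∈ Qy.support := by
  unfold loopWalk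
  rw [SimpleGraph.Walk.mem_support_append_iff]
  simp only [SimpleGraph.Walk.support_cons, List.mem_cons, SimpleGraph.Walk.support_reverse,
    List.mem_reverse]
  constructor
  · rintro (h | rfl | h)
    · exact Or.inl h
    · exact Or.inl (SimpleGraph.Walk.end_mem_support _)
    · exact Or.inr h
  · tauto

/-- The separator lemma: not all lattice edges can be unbalanced. -/
theorem separator {V : Type} [DecidableEq V] {G : SimpleGraph V} {v : V} (M : LatModel G v)
    (g0 : ℤ × ℤ) (Q : ∀ x, TriLat.Walk g0 x)
    (hQ : ∀ x, M.π x = v → ∀ z ∈ (Q x).support, M.π z = v)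
    (W : Finset V) (hvW : v ∉ W)
    (H : ∀ x y, TriLat.Adj x y → ∃ (β : ZMod 2) (K : Finset V), 3 * (K ∩ W).card < W.card ∧
      M.π x ∈ K ∧ M.π y ∈ K ∧ ∀ g, M.π g ∉ K →
        wpt g (Q x) + rho (leftTri g (g.1 + 1, g.2)) x y + wpt g (Q y) = β) : False := by
  have H' : ∀ x y, ∃ (β : ZMod 2) (K : Finset V), TriLat.Adj x y →
      (3 * (K ∩ W).card < W.card ∧
      M.π x ∈ K ∧ M.π y ∈ K ∧ ∀ g, M.π g ∉ K →
        wpt g (Q x) + rho (leftTri g (g.1 + 1, g.2)) x y + wpt g (Q y) = β) := by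
    intro x y
    by_cases h : TriLat.Adj x y
    · obtain ⟨β, K, h1⟩ := H x y h
      exact ⟨β, K, fun _ => h1⟩
    · exact ⟨0, ∅, fun h' => absurd h' h⟩
  choose β K hK using H'
  obtain ⟨f, hf⟩ := closed_exact β (by
    intro p q hpq
    obtain ⟨a1, a2, a3, a4⟩ := hK p q hpq
    obtain ⟨b1, b2, b3, b4⟩ := hK q p hpq.symm
    obtain ⟨w, hw, h1, h2, -⟩ := not_cover W _ _ _ a1 b1 b1
    obtain ⟨g, rfl⟩ := M.surj w
    rw [← a4 g h1, ← b4 g h2, rho_symm]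
    ring) (by
    intro s t hst
    obtain ⟨a1, a2, a3, a4⟩ := hK s t hst
    obtain ⟨b1, b2, b3, b4⟩ := hK t (third s t) (third_adj' hst)
    obtain ⟨c1, c2, c3, c4⟩ := hK s (third s t) (third_adj hst)
    obtain ⟨w, hw, h1, h2, h3⟩ := not_cover W _ _ _ a1 b1 c1
    obtain ⟨g, rfl⟩ := M.surj w
    have := rho_closed (g := g) hst (by rintro rfl; exact h1 a2) (by rintro rfl; exact h1 a3)
      (by rintro rfl; exact h2 b3)
    rw [← a4 g h1, ← b4 g h2, ← c4 g h3]
    linear_combination this + zmod2_add_self (wpt g (Q s)) + zmod2_add_self (wpt g (Q t)) +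
      zmod2_add_self (wpt g (Q (third s t))))
  have hWne : ∃ w, w ∈ W := by
    obtain ⟨a1, -⟩ := hK (0, 0) (1, 0) (by rw [lat_adj]; simp)
    by_contra hcon
    push Not at hcon
    rw [Finset.eq_empty_of_forall_notMem hcon] at a1
    simp at a1
  obtain ⟨w0, hw0⟩ := hWne
  obtain ⟨g, hg⟩ := M.surj w0
  have hgv : M.π g ≠ v := by rw [hg]; rintro rfl; exact hvW hw0
  let φ : ℤ × ℤ → ZMod 2 := fun x => f x + wpt g (Q x)
  have hφ : ∀ x y, TriLat.Adj x y → M.π x = v → M.π y = v →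
      rho (leftTri g (g.1 + 1, g.2)) x y = φ x + φ y := by
    intro x y hxy hx hy
    obtain ⟨a1, a2, a3, a4⟩ := hK x y hxy
    obtain ⟨w, hw, h1, h2, -⟩ := not_cover W _ _ _ a1 a1 a1
    obtain ⟨g', rfl⟩ := M.surj w
    have hg'v : M.π g' ≠ v := by intro h; rw [h] at hw; exact hvW hw
    obtain ⟨p, hp⟩ := M.cconn g g' hgv hg'v
    have key := wpt_walk (loopWalk (Q x) hxy (Q y)) p (by
      intro z hz hz'
      rw [loopWalk_support] at hz'
      rcases hz' with h | h
      · exact hp z hz (hQ x hx z h)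
      · exact hp z hz (hQ y hy z h))
    unfold wpt at key
    rw [loopWalk_wsum _ (rho_symm _), loopWalk_wsum _ (rho_symm _)] at key
    have e1 := a4 g' h1
    unfold wpt at e1
    rw [e1, hf x y hxy] at key
    simp only [φ, wpt]
    linear_combination key - zmod2_add_self (wsum (rho (leftTri g (g.1 + 1, g.2))) (Q x)) -
      zmod2_add_self (wsum (rho (leftTri g (g.1 + 1, g.2))) (Q y))
  obtain ⟨m, hm⟩ := M.fin
  obtain ⟨gx, gy⟩ := g
  have e1 : leftTri (gx, gy) (gx + 1, gy) = (2 * gx + 2, gy) := by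
    ext <;> simp [leftTri, tri, third] <;> omega
  simp only [e1] at hφ
  obtain ⟨N, hN⟩ : ∃ N : ℤ, N = |m| + |gx| + |gy| + 2 := ⟨_, rfl⟩
  have hmN : m < N ∧ -N < gx ∧ gx < N ∧ -N < gy ∧ gy + 1 < N := by
    have := abs_nonneg m
    have := le_abs_self m
    have := le_abs_self gx
    have := neg_abs_le gx
    have := le_abs_self gy
    have := neg_abs_le gy
    have := abs_nonneg gx
    have := abs_nonneg gy
    omega
  obtain ⟨b1, b2, b3, b4, b5⟩ := hmN
  have habs : |N| = N := abs_of_nonneg (by omega)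
  have habs' : |-N| = N := by rw [abs_neg, habs]
  have z : ∀ x y, TriLat.Adj x y → M.π x = v → M.π y = v → rho (2 * gx + 2, gy) x y = 0 → φ x = φ y := by
    intro x y h1 h2 h3 h4
    have := hφ x y h1 h2 h3
    rw [h4] at this
    exact zmod2_eq_of_add this.symm
  have s1 : φ (N, gy + 1) = φ (N, N) := by
    apply const_of_step (fun y => φ (N, y)) (gy + 1) N (by omega)
    intro n h1 h2
    apply z _ _ (by rw [lat_adj]; simp) (hm _ (by simp only; omega)) (hm _ (by simp only; omega))
    simp only [rho]; rw [if_neg]; omega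
  have s2 : φ (-N, N) = φ (N, N) := by
    apply const_of_step (fun y => φ (y, N)) (-N) N (by omega)
    intro n h1 h2
    apply z _ _ (by rw [lat_adj]; simp) (hm _ (by simp only; omega)) (hm _ (by simp only; omega))
    simp only [rho]; rw [if_neg]; omega
  have s3 : φ (-N, -N) = φ (-N, N) := by
    apply const_of_step (fun y => φ (-N, y)) (-N) N (by omega)
    intro n h1 h2
    apply z _ _ (by rw [lat_adj]; simp) (hm _ (by simp only; omega)) (hm _ (by simp only; omega))
    simp only [rho]; rw [if_neg]; omega
  have s4 : φ (-N, -N) = φ (N, -N) := by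
    apply const_of_step (fun y => φ (y, -N)) (-N) N (by omega)
    intro n h1 h2
    apply z _ _ (by rw [lat_adj]; simp) (hm _ (by simp only; omega)) (hm _ (by simp only; omega))
    simp only [rho]; rw [if_neg]; omega
  have s5 : φ (N, -N) = φ (N, gy) := by
    apply const_of_step (fun y => φ (N, y)) (-N) gy (by omega)
    intro n h1 h2
    apply z _ _ (by rw [lat_adj]; simp) (hm _ (by simp only; omega)) (hm _ (by simp only; omega))
    simp only [rho]; rw [if_neg]; omega
  have s6 := hφ (N, gy) (N, gy + 1) (by rw [lat_adj]; simp) (hm _ (by simp only; omega))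
    (hm _ (by simp only; omega))
  rw [s1, ← s2, ← s3, s4, s5, zmod2_add_self] at s6
  simp only [rho] at s6
  rw [if_pos (by simp; omega)] at s6
  exact one_ne_zero s6



section rotation
variable {V : Type} {G : SimpleGraph V} {v : V}

/-- Leaving darts of the fiber of `v`. -/
def LatModel.Leaving (M : LatModel G v) (d : (ℤ × ℤ) × (ℤ × ℤ)) : Prop :=
  TriLat.Adj d.1 d.2 ∧ M.π d.1 = v ∧ M.π d.2 ≠ v

open Classical in
/-- Rotation of leaving darts. -/
noncomputable def LatModel.rot (M : LatModel G v) (d : (ℤ × ℤ) × (ℤ × ℤ)) : (ℤ × ℤ) × (ℤ × ℤ) :=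
  if M.π (third d.1 d.2) = v then (third d.1 d.2, d.2) else (d.1, third d.1 d.2)

open Classical in
/-- Inverse rotation of leaving darts. -/
noncomputable def LatModel.rot' (M : LatModel G v) (d : (ℤ × ℤ) × (ℤ × ℤ)) : (ℤ × ℤ) × (ℤ × ℤ) :=
  if M.π (third d.2 d.1) = v then (third d.2 d.1, d.2) else (d.1, third d.2 d.1)

theorem LatModel.rot_leaving (M : LatModel G v) {d} (h : M.Leaving d) : M.Leaving (M.rot d) := by
  obtain ⟨h1, h2, h3⟩ := h
  unfold LatModel.rot
  split_ifs with hu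
  · exact ⟨(third_adj' h1).symm, hu, h3⟩
  · exact ⟨third_adj h1, h2, hu⟩

theorem LatModel.rot_rot' (M : LatModel G v) {d} (h : M.Leaving d) : M.rot' (M.rot d) = d := by
  obtain ⟨h1, h2, h3⟩ := h
  unfold LatModel.rot
  split_ifs with hu
  · unfold LatModel.rot'
    simp only [third_cycle, h2, if_true]
  · unfold LatModel.rot'
    simp only [third_cycle', h3, if_false]

theorem LatModel.rot_wind (M : LatModel G v) {d} (h : M.Leaving d) {p} (C : TriLat.Walk p p) :
    wsum (rho (leftTri (M.rot d).1 (M.rot d).2)) C =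
      wsum (rho (leftTri d.1 d.2)) C + wsum (ed (M.rot d).1 (M.rot d).2) C := by
  have key := wind_share (M.rot_leaving h).1 C
  have : leftTri (M.rot d).2 (M.rot d).1 = leftTri d.1 d.2 := by
    unfold LatModel.rot
    split_ifs with hu
    · exact leftTri_cycle _ _
    · exact leftTri_cycle' _ _
  rw [this] at key
  linear_combination key - zmod2_add_self (wsum (rho (leftTri d.1 d.2)) C)

theorem LatModel.finite_leaving (M : LatModel G v) : {d | M.Leaving d}.Finite := by
  obtain ⟨m, hm⟩ := M.fin
  apply Set.Finite.subset (s := ((Set.Icc (-|m| - 1) (|m| + 1)) ×ˢ (Set.Icc (-|m| - 1) (|m| + 1))) ×ˢ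
    ((Set.Icc (-|m| - 1) (|m| + 1)) ×ˢ (Set.Icc (-|m| - 1) (|m| + 1))))
  · exact ((Set.finite_Icc _ _).prod (Set.finite_Icc _ _)).prod
      ((Set.finite_Icc _ _).prod (Set.finite_Icc _ _))
  · rintro ⟨⟨a, b⟩, ⟨c, d⟩⟩ ⟨h1, h2, h3⟩
    have := mt (hm (c, d)) h3
    rw [lat_adj] at h1
    simp only at h1 this
    push Not at this
    have e1 := le_abs_self m
    have e2 := abs_le.1 this.1
    have e3 := abs_le.1 this.2
    simp only [Set.mem_prod, Set.mem_Icc]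
    omega

/-- The rotation as a self map of the leaving darts. -/
noncomputable def LatModel.rotD (M : LatModel G v) (d : {d // M.Leaving d}) : {d // M.Leaving d} :=
  ⟨M.rot d.1, M.rot_leaving d.2⟩

theorem LatModel.rotD_inj (M : LatModel G v) : Function.Injective M.rotD := by
  intro a b h
  have h' : M.rot a.1 = M.rot b.1 := congrArg Subtype.val h
  apply Subtype.ext
  rw [← M.rot_rot' a.2, ← M.rot_rot' b.2, h']

theorem const_on_walk {f : ℤ × ℤ → ZMod 2} {P : ℤ × ℤ → Prop}
    (h : ∀ p q, TriLat.Adj p q → P p → P q → f p = f q) {a b} (w : TriLat.Walk a b)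
    (hw : ∀ x ∈ w.support, P x) : f a = f b := by
  induction w with
  | nil => rfl
  | cons hadj w ih =>
    rw [h _ _ hadj (hw _ (by simp)) (hw _ (by simp))]
    exact ih (fun x hx => hw x (by simp [hx]))

theorem LatModel.rot_trans (M : LatModel G v) (d0 d : {d // M.Leaving d}) :
    ∃ j < Function.minimalPeriod M.rotD d0, M.rotD^[j] d0 = d := by
  classical
  have : Finite {d // M.Leaving d} := M.finite_leaving
  have hper := M.rotD_inj.mem_periodicPts d0
  have hpos := Function.minimalPeriod_pos_of_mem_periodicPts hper
  let I : Set ((ℤ × ℤ) × (ℤ × ℤ)) := {d | ∃ j, (M.rotD^[j] d0).1 = d}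
  have hI : ∀ d, M.Leaving d → (M.rot d ∈ I ↔ d ∈ I) := by
    intro d hd
    constructor
    · rintro ⟨j, hj⟩
      have hj : M.rotD^[j] d0 = M.rotD ⟨d, hd⟩ := Subtype.ext hj
      rcases Nat.eq_zero_or_pos j with rfl | h
      · refine ⟨Function.minimalPeriod M.rotD d0 - 1, ?_⟩
        have h2 : M.rotD (M.rotD^[Function.minimalPeriod M.rotD d0 - 1] d0) = M.rotD ⟨d, hd⟩ := by
          rw [← Function.iterate_succ_apply' M.rotD, ← hj]
          rw [show (Function.minimalPeriod M.rotD d0 - 1).succ = Function.minimalPeriod M.rotD d0 by omega]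
          exact Function.iterate_minimalPeriod
        rw [M.rotD_inj h2]
      · refine ⟨j - 1, ?_⟩
        have h2 : M.rotD (M.rotD^[j - 1] d0) = M.rotD ⟨d, hd⟩ := by
          rw [← Function.iterate_succ_apply' M.rotD, ← hj]
          rw [show (j - 1).succ = j by omega]
        rw [M.rotD_inj h2]
    · rintro ⟨j, hj⟩
      refine ⟨j + 1, ?_⟩
      rw [Function.iterate_succ_apply']
      simp only [LatModel.rotD, hj]
  let c : ℤ × ℤ → ℤ × ℤ → ZMod 2 := fun p q =>
    if (M.Leaving (p, q) ∧ (p, q) ∈ I) ∨ (M.Leaving (q, p) ∧ (q, p) ∈ I) then 1 else 0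
  have cT : ∀ s t, M.π s = v → M.π t ≠ v → TriLat.Adj s t → c s t = if (s, t) ∈ I then 1 else 0 := by
    intro s t h1 h2 h3
    simp only [c]
    have hl : M.Leaving (s, t) := ⟨h3, h1, h2⟩
    have hl' : ¬ M.Leaving (t, s) := fun h => h2 h.2.1
    simp [hl, hl']
  have cS : ∀ s t, c s t = c t s := by
    intro s t
    simp only [c]
    congr 1
    apply propext
    tauto
  have c0 : ∀ s t, (M.π s = v ↔ M.π t = v) → c s t = 0 := by
    intro s t h
    simp only [c]
    rw [if_neg]
    rintro (⟨⟨-, h1, h2⟩, -⟩ | ⟨⟨-, h1, h2⟩, -⟩)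
    · exact h2 (h.1 h1)
    · exact h2 (h.2 h1)
  have tri : ∀ s t, TriLat.Adj s t → M.π s = v → M.π t ≠ v →
      c s t + c t (third s t) + c s (third s t) = 0 := by
    intro s t h h1 h2
    have hl : M.Leaving (s, t) := ⟨h, h1, h2⟩
    have e := hI _ hl
    by_cases h3 : M.π (third s t) = v
    · rw [c0 s (third s t) (by simp [h1, h3]), cT s t h1 h2 h, cS t,
        cT _ _ h3 h2 (third_adj' h).symm]
      simp only [LatModel.rot, h3, if_true] at e
      simp only [e, zmod2_add_self, add_zero]
    · rw [c0 t (third s t) (by simp [h2, h3]), cT s t h1 h2 h, 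
        cT _ _ h1 h3 (third_adj h)]
      simp only [LatModel.rot, h3, if_false] at e
      simp only [e, zmod2_add_self, add_zero]
  obtain ⟨f, hf⟩ := closed_exact c (fun p q _ => cS p q) (by
    intro s t h
    by_cases a : (M.π s = v ↔ M.π t = v)
    · by_cases b : (M.π t = v ↔ M.π (third s t) = v)
      · rw [c0 _ _ a, c0 _ _ b, c0 _ _ (a.trans b)]; simp
      · by_cases h1 : M.π t = v
        · have := tri t (third s t) (third_adj' h) h1 (by tauto)
          rw [third_cycle] at this
          rw [cS s t, cS s (third s t)]
          linear_combination this
        · have := tri (third s t) s (third_adj h).symm (by tauto) (by tauto)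
          rw [third_cycle'] at this
          rw [cS s (third s t), cS t]
          linear_combination this
    · by_cases h1 : M.π s = v
      · exact tri s t h h1 (by tauto)
      · by_cases h2 : M.π (third s t) = v
        · have := tri (third s t) s (third_adj h).symm (by tauto) (by tauto)
          rw [third_cycle'] at this
          rw [cS s (third s t), cS t]
          linear_combination this
        · have := tri t (third s t) (third_adj' h) (by tauto) (by tauto)
          rw [third_cycle] at this
          rw [cS s t, cS s (third s t)]
          linear_combination this)
  have k1 : ∀ p q, TriLat.Adj p q → M.π p = v → M.π q = v → f p = f q := by
    intro p q h h1 h2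
    have := hf p q h
    rw [c0 _ _ (by simp [h1, h2])] at this
    exact zmod2_eq_of_add this.symm
  have k2 : ∀ p q, TriLat.Adj p q → M.π p ≠ v → M.π q ≠ v → f p = f q := by
    intro p q h h1 h2
    have := hf p q h
    rw [c0 _ _ (by simp [h1, h2])] at this
    exact zmod2_eq_of_add this.symm
  have hdI : d.1 ∈ I := by
    obtain ⟨⟨s, t⟩, hd⟩ := d
    obtain ⟨⟨s0, t0⟩, hd0⟩ := d0
    obtain ⟨w1, hw1⟩ := M.conn s s0 (by rw [hd.2.1, hd0.2.1])
    obtain ⟨w2, hw2⟩ := M.cconn t t0 hd.2.2 hd0.2.2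
    have e1 := const_on_walk (P := fun x => M.π x = v) k1 w1 (by
      intro x hx; rw [hw1 x hx, hd.2.1])
    have e2 := const_on_walk (P := fun x => M.π x ≠ v) k2 w2 hw2
    have e3 := hf s t hd.1
    rw [e1, e2, ← hf s0 t0 hd0.1, cT _ _ hd.2.1 hd.2.2 hd.1, cT _ _ hd0.2.1 hd0.2.2 hd0.1] at e3
    have : (s0, t0) ∈ I := ⟨0, rfl⟩
    rw [if_pos this] at e3
    by_contra hcon
    rw [if_neg hcon] at e3
    exact zero_ne_one e3
  obtain ⟨j, hj⟩ := hdI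
  refine ⟨j % Function.minimalPeriod M.rotD d0, Nat.mod_lt _ hpos, ?_⟩
  rw [Function.iterate_mod_minimalPeriod_eq]
  exact Subtype.ext hj

theorem LatModel.rotation (M : LatModel G v) (E : V → (ℤ × ℤ) × (ℤ × ℤ)) (N : Finset V)
    (hN : N.card = 4) (hv : v ∉ N)
    (hE : ∀ c ∈ N, TriLat.Adj (E c).1 (E c).2 ∧ M.π (E c).1 = v ∧ M.π (E c).2 = c) :
    ∃ n : Fin 4 → V, Function.Injective n ∧ (∀ i, n i ∈ N) ∧
      ∀ (i : Fin 4) (p) (C : TriLat.Walk p p),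
        (∀ d, M.Leaving d → d ≠ E (n i) → d ≠ E (n (i + 1)) → wsum (ed d.1 d.2) C = 0) →
        wsum (rho (leftTri (E (n (i + 2))).1 (E (n (i + 2))).2)) C =
          wsum (rho (leftTri (E (n (i + 3))).1 (E (n (i + 3))).2)) C := by
  classical
  have : Finite {d // M.Leaving d} := M.finite_leaving
  have hEl : ∀ c ∈ N, M.Leaving (E c) := fun c hc =>
    ⟨(hE c hc).1, (hE c hc).2.1, by rw [(hE c hc).2.2]; rintro rfl; exact hv hc⟩
  obtain ⟨c0, hc0⟩ : N.Nonempty := by rw [← Finset.card_pos]; omega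
  set d0 : {d // M.Leaving d} := ⟨E c0, hEl c0 hc0⟩ with hd0
  set T := Function.minimalPeriod M.rotD d0 with hT
  have hTpos : 0 < T := Function.minimalPeriod_pos_of_mem_periodicPts (M.rotD_inj.mem_periodicPts d0)
  have hinj : ∀ i j, i < T → j < T → M.rotD^[i] d0 = M.rotD^[j] d0 → i = j := by
    intro i j hi hj h
    exact Function.iterate_injOn_Iio_minimalPeriod (f := M.rotD) (x := d0) hi hj h
  have hpos : ∀ c, ∃ j, c ∈ N → j < T ∧ (M.rotD^[j] d0).1 = E c := by
    intro c
    by_cases hc : c ∈ N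
    · obtain ⟨j, h1, h2⟩ := M.rot_trans d0 ⟨E c, hEl c hc⟩
      exact ⟨j, fun _ => ⟨h1, by rw [h2]⟩⟩
    · exact ⟨0, fun h => absurd h hc⟩
  choose pos hpos using hpos
  have posinj : Set.InjOn pos N := by
    intro a ha b hb h
    have h1 := (hpos a ha).2
    have h2 := (hpos b hb).2
    rw [h, h2] at h1
    rw [← (hE a ha).2.2, ← (hE b hb).2.2, h1]
  have hpos0 : pos c0 = 0 := by
    apply hinj _ _ (hpos c0 hc0).1 hTpos
    apply Subtype.ext
    exact (hpos c0 hc0).2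
  have hcard : (N.image pos).card = 4 := by rw [Finset.card_image_of_injOn posinj, hN]
  let e := (N.image pos).orderEmbOfFin hcard
  have he : ∀ i, ∃ c ∈ N, pos c = e i := by
    intro i
    have := Finset.orderEmbOfFin_mem (N.image pos) hcard i
    exact Finset.mem_image.1 this
  choose n hnN hn using he
  have he0 : e 0 = 0 := by
    have h0 : 0 ∈ Set.range e := by
      rw [Finset.range_orderEmbOfFin]
      simp only [Finset.coe_image, Set.mem_image, Finset.mem_coe]
      exact ⟨c0, hc0, hpos0⟩
    obtain ⟨i, hi⟩ := h0
    have : e 0 ≤ e i := e.monotone (Fin.zero_le i)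
    omega
  have heT : ∀ i, e i < T := by
    intro i; rw [← hn i]; exact (hpos _ (hnN i)).1
  have hit : ∀ i, (M.rotD^[e i] d0).1 = E (n i) := by
    intro i; rw [← hn i]; exact (hpos _ (hnN i)).2
  have l01 : e 0 < e 1 := e.strictMono (by decide)
  have l12 : e 1 < e 2 := e.strictMono (by decide)
  have l23 : e 2 < e 3 := e.strictMono (by decide)
  refine ⟨n, ?_, hnN, ?_⟩
  · intro i j h
    apply e.injective
    rw [← hn i, ← hn j, h]
  intro i p C hC
  let F : ℕ → ZMod 2 := fun j => wsum (rho (leftTri (M.rotD^[j] d0).1.1 (M.rotD^[j] d0).1.2)) C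
  have hFs : ∀ j, j + 1 < T → j + 1 ≠ e i → j + 1 ≠ e (i + 1) → F j = F (j + 1) := by
    intro j h1 h2 h3
    simp only [F]
    rw [Function.iterate_succ_apply']
    have := M.rot_wind (M.rotD^[j] d0).2 C
    simp only [LatModel.rotD] at this ⊢
    rw [this]
    have h4 := hC (M.rotD^[j + 1] d0).1 (M.rotD^[j + 1] d0).2 (by
      rw [← hit i]
      intro h
      exact h2 (hinj _ _ h1 (heT _) (Subtype.ext h))) (by
      rw [← hit (i + 1)]
      intro h
      exact h3 (hinj _ _ h1 (heT _) (Subtype.ext h)))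
    rw [Function.iterate_succ_apply'] at h4
    simp only [LatModel.rotD] at h4
    rw [h4, add_zero]
  have hF : ∀ a b, a ≤ b → b < T → (∀ j, a < j → j ≤ b → j ≠ e i ∧ j ≠ e (i + 1)) → F a = F b := by
    intro a b hab
    induction b, hab using Nat.le_induction with
    | base => intros; rfl
    | succ b hab ih =>
      intro h1 h2
      rw [ih (by omega) (fun j h3 h4 => h2 j h3 (by omega))]
      exact hFs b h1 (h2 _ (by omega) le_rfl).1 (h2 _ (by omega) le_rfl).2
  have hFe : ∀ k, wsum (rho (leftTri (E (n k)).1 (E (n k)).2)) C = F (e k) := by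
    intro k; simp only [F]; rw [hit]
  rw [hFe, hFe]
  fin_cases i
  · exact hF (e 2) (e 3) (by omega) (heT _) (by
      intro j h1 h2
      change j ≠ e 0 ∧ j ≠ e 1
      omega)
  · change F (e 3) = F (e 0)
    have h1 : F (e 3) = F (T - 1) := by
      have := heT 3
      apply hF _ _ (by omega) (by omega)
      intro j h1 h2
      change j ≠ e 1 ∧ j ≠ e 2
      omega
    rw [h1, he0]
    have h2 : M.rotD^[T] d0 = d0 := Function.iterate_minimalPeriod
    have h3 : M.rotD (M.rotD^[T - 1] d0) = d0 := by
      rw [← Function.iterate_succ_apply' M.rotD]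
      rw [show (T - 1).succ = T by omega]
      exact h2
    have := M.rot_wind (M.rotD^[T - 1] d0).2 C
    have h4 : M.rot (M.rotD^[T - 1] d0).1 = E c0 := congrArg Subtype.val h3
    rw [h4] at this
    have h5 : d0 = M.rotD^[0] d0 := rfl
    have h6 := hC d0.1 d0.2 (by
      rw [← hit]
      intro h
      have h7 := hinj 0 _ hTpos (heT _) (Subtype.ext h)
      change 0 = e 1 at h7
      omega) (by
      rw [← hit]
      intro h
      have h7 := hinj 0 _ hTpos (heT _) (Subtype.ext h)
      change 0 = e 2 at h7
      omega)
    change wsum (ed (E c0).1 (E c0).2) C = 0 at h6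
    rw [h6, add_zero] at this
    exact this.symm
  · exact hF (e 0) (e 1) (by omega) (heT _) (by
      intro j h1 h2
      change j ≠ e 2 ∧ j ≠ e 3
      omega)
  · exact hF (e 1) (e 2) (by omega) (heT _) (by
      intro j h1 h2
      change j ≠ e 3 ∧ j ≠ e 0
      omega)

end rotation



section geo
variable {V : Type} {G : SimpleGraph V} {v : V}

theorem geo_exists (hconn : G.Connected) {v z c : V} (hvc : G.Adj v c)
    (hL : G.dist c z + 1 = G.dist v z) :
    ∃ p : G.Walk c z, v ∉ p.support ∧
      (∀ a ∈ p.support, G.dist v a = G.dist c a + 1 ∧ G.dist v a + G.dist a z = G.dist v z) ∧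
      (∀ a ∈ p.support, ∀ b ∈ p.support, G.dist v a = G.dist v b → a = b) ∧
      (∀ a ∈ p.support, G.dist v a = 2 → G.Adj c a) := by
  obtain ⟨p, hp⟩ := hconn.exists_walk_length_eq_dist c z
  have tri : ∀ a b d, G.dist a d ≤ G.dist a b + G.dist b d := fun a b d => hconn.dist_triangle
  have h1 : G.dist v c = 1 := SimpleGraph.dist_eq_one_iff_adj.2 hvc
  have key : ∀ i ≤ p.length, G.dist c (p.getVert i) = i ∧ G.dist (p.getVert i) z = p.length - i := by
    intro i hi
    have a1 : G.dist c (p.getVert i) ≤ i := by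
      have := SimpleGraph.dist_le (p.take i)
      simp at this
      omega
    have a2 : G.dist (p.getVert i) z ≤ p.length - i := by
      have := SimpleGraph.dist_le (p.drop i)
      simp at this
      omega
    have := tri c (p.getVert i) z
    omega
  have key2 : ∀ i ≤ p.length, G.dist v (p.getVert i) = i + 1 := by
    intro i hi
    have := key i hi
    have := tri v (p.getVert i) z
    have := tri v c (p.getVert i)
    omega
  refine ⟨p, ?_, ?_, ?_, ?_⟩
  · intro h
    obtain ⟨i, hi, hi'⟩ := SimpleGraph.Walk.mem_support_iff_exists_getVert.1 h
    have := key2 i hi'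
    rw [hi] at this
    simp at this
  · intro a h
    obtain ⟨i, rfl, hi'⟩ := SimpleGraph.Walk.mem_support_iff_exists_getVert.1 h
    have := key2 i hi'
    have := key i hi'
    omega
  · intro a h b h'
    obtain ⟨i, rfl, hi'⟩ := SimpleGraph.Walk.mem_support_iff_exists_getVert.1 h
    obtain ⟨j, rfl, hj'⟩ := SimpleGraph.Walk.mem_support_iff_exists_getVert.1 h'
    rw [key2 i hi', key2 j hj']
    intro h
    rw [show i = j by omega]
  · intro a h
    obtain ⟨i, rfl, hi'⟩ := SimpleGraph.Walk.mem_support_iff_exists_getVert.1 h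
    rw [key2 i hi']
    intro h
    have hi : i = 1 := by omega
    subst hi
    have := p.adj_getVert_succ (i := 0) (by omega)
    simpa using this

theorem LatModel.lift_walk (M : LatModel G v) {a b : V} (p : G.Walk a b) :
    ∀ (g x : ℤ × ℤ), M.π g = a → M.π x = b →
    ∃ Q : TriLat.Walk g x, ∀ y ∈ Q.support, M.π y ∈ p.support := by
  induction p with
  | nil =>
    intro g x hg hx
    obtain ⟨w, hw⟩ := M.conn g x (by rw [hg, hx])
    exact ⟨w, fun y hy => by rw [hw y hy, hg]; simp⟩
  | cons h p ih =>
    intro g x hg hx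
    obtain ⟨s, t, hst, hs, ht⟩ := M.lift _ _ h
    obtain ⟨w, hw⟩ := M.conn g s (by rw [hg, hs])
    obtain ⟨Q, hQ⟩ := ih t x ht hx
    refine ⟨w.append (SimpleGraph.Walk.cons hst Q), ?_⟩
    intro y hy
    rw [SimpleGraph.Walk.mem_support_append_iff, SimpleGraph.Walk.support_cons, List.mem_cons] at hy
    rw [SimpleGraph.Walk.support_cons, List.mem_cons]
    rcases hy with hy | rfl | hy
    · left; rw [hw y hy, hg]
    · left; exact hs
    · right; exact hQ y hy

/-- `Q` is a lift of a geodesic with vertex set `P` and head `c`. -/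
structure GeoL (M : LatModel G v) (E : V → (ℤ × ℤ) × (ℤ × ℤ)) (g0 x : ℤ × ℤ) (c : V)
    (P : Finset V) (Q : TriLat.Walk g0 x) : Prop where
  hv : v ∈ P
  hx : M.π x ∈ P
  hc : M.π x ≠ v → c ∈ P
  null : M.π x = v → P = {v}
  inj : Set.InjOn (fun z => G.dist v z) (P : Set V)
  sup : ∀ z ∈ Q.support, M.π z ∈ P
  nb : ∀ a ∈ P, G.Adj v a → a = c
  two : ∀ a ∈ P, G.dist v a = 2 → G.Adj c a
  heads : ∀ a ∈ P, a ≠ v → ∀ h, G.Adj v h → G.dist h a + 1 = G.dist v a →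
    G.dist h (M.π x) + 1 = G.dist v (M.π x)
  leav : ∀ d, M.Leaving d → d ≠ E c → wsum (ed d.1 d.2) Q = 0

theorem wsum_ed_out (M : LatModel G v) {d} (hd : M.Leaving d) {p q} (w : TriLat.Walk p q)
    (h : (∀ x ∈ w.support, M.π x = v) ∨ (∀ x ∈ w.support, M.π x ≠ v)) :
    wsum (ed d.1 d.2) w = 0 := by
  apply wsum_ed_eq_zero
  rcases h with h | h
  · exact Or.inr fun h' => hd.2.2 (h _ h')
  · exact Or.inl fun h' => h _ h' hd.2.1

theorem geoL_exists [DecidableEq V] (hconn : G.Connected) (M : LatModel G v)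
    (E : V → (ℤ × ℤ) × (ℤ × ℤ))
    (hE : ∀ c, G.Adj v c → TriLat.Adj (E c).1 (E c).2 ∧ M.π (E c).1 = v ∧ M.π (E c).2 = c)
    (g0 x : ℤ × ℤ) (hg0 : M.π g0 = v) (c : V)
    (hc : M.π x ≠ v → G.Adj v c ∧ G.dist c (M.π x) + 1 = G.dist v (M.π x)) :
    ∃ P Q, GeoL M E g0 x c P Q := by
  by_cases hx : M.π x = v
  · obtain ⟨w, hw⟩ := M.conn g0 x (by rw [hg0, hx])
    refine ⟨{v}, w, by simp, by simp [hx], fun h => absurd hx h, fun _ => rfl, by simp, ?_, ?_, ?_, ?_, ?_⟩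
    · intro z hz; simp [hw z hz, hg0]
    · intro a ha h; simp at ha; subst ha; exact absurd h (G.loopless.irrefl _)
    · intro a ha h; simp at ha; subst ha; simp at h
    · intro a ha h; simp at ha; exact absurd ha h
    · intro d hd _
      exact wsum_ed_out M hd w (Or.inl fun z hz => by rw [hw z hz, hg0])
  · obtain ⟨hvc, hL⟩ := hc hx
    obtain ⟨p, h1, h2, h3, h4⟩ := geo_exists hconn hvc hL
    obtain ⟨e1, e2, e3⟩ := hE c hvc
    obtain ⟨w, hw⟩ := M.conn g0 (E c).1 (by rw [hg0, e2])
    obtain ⟨Q, hQ⟩ := M.lift_walk p (E c).2 x e3 rfl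
    refine ⟨insert v p.support.toFinset, w.append (SimpleGraph.Walk.cons e1 Q), by simp, by simp, by simp,
      fun h => absurd h hx, ?_, ?_, ?_, ?_, ?_, ?_⟩
    · intro a ha b hb hab
      simp only [Finset.coe_insert, Set.mem_insert_iff, Finset.mem_coe, List.mem_toFinset] at ha hb hab
      rcases ha with rfl | ha <;> rcases hb with rfl | hb
      · rfl
      · have := (h2 b hb).1; rw [SimpleGraph.dist_self] at hab; omega
      · have := (h2 a ha).1; rw [SimpleGraph.dist_self] at hab; omega
      · exact h3 a ha b hb hab
    · intro y hy
      rw [SimpleGraph.Walk.mem_support_append_iff, SimpleGraph.Walk.support_cons, List.mem_cons] at hy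
      rcases hy with hy | rfl | hy
      · simp [hw y hy, hg0]
      · simp [e2]
      · have := hQ y hy; simp [this]
    · intro a ha hva
      simp only [Finset.mem_insert, List.mem_toFinset] at ha
      rcases ha with rfl | ha
      · exact absurd hva (G.loopless.irrefl _)
      · have := (h2 a ha).1
        rw [SimpleGraph.dist_eq_one_iff_adj.2 hva] at this
        have h0 : G.dist c a = 0 := by omega
        exact ((hconn.dist_eq_zero_iff).1 h0).symm
    · intro a ha hva
      simp only [Finset.mem_insert, List.mem_toFinset] at ha
      rcases ha with rfl | ha
      · simp at hva
      · exact h4 a ha hva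
    · intro a ha hav h hvh hh
      simp only [Finset.mem_insert, List.mem_toFinset] at ha
      rcases ha with rfl | ha
      · exact absurd rfl hav
      · have b1 := (h2 a ha).2
        have b2 : G.dist h (M.π x) ≤ G.dist h a + G.dist a (M.π x) := hconn.dist_triangle
        have b3 : G.dist v (M.π x) ≤ G.dist v h + G.dist h (M.π x) := hconn.dist_triangle
        rw [SimpleGraph.dist_eq_one_iff_adj.2 hvh] at b3
        omega
    · intro d hd hdc
      rw [wsum_append]
      simp only [wsum]
      rw [wsum_ed_out M hd w (Or.inl fun z hz => by rw [hw z hz, hg0]),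
        wsum_ed_out M hd Q (Or.inr fun z hz h => h1 (by have h9 := hQ z hz; rw [h] at h9; exact h9))]
      unfold ed
      rw [if_neg]
      · simp
      · rintro (⟨a, b⟩ | ⟨a, b⟩)
        · exact hdc (Prod.ext a.symm b.symm)
        · apply hd.2.2; rw [← a, e2]

theorem head_exists (hconn : G.Connected) {v z : V} (h : z ≠ v) :
    ∃ c, G.Adj v c ∧ G.dist c z + 1 = G.dist v z := by
  obtain ⟨p, hp⟩ := hconn.exists_walk_length_eq_dist v z
  cases p with
  | nil => exact absurd rfl h
  | cons hadj p =>
    rename_i c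
    refine ⟨c, hadj, ?_⟩
    simp only [SimpleGraph.Walk.length_cons] at hp
    have h1 := SimpleGraph.dist_le p
    have h2 : G.dist v z ≤ G.dist v c + G.dist c z := hconn.dist_triangle
    rw [SimpleGraph.dist_eq_one_iff_adj.2 hadj] at h2
    omega

end geo

section sides
variable {V : Type} [Fintype V] [DecidableEq V] {G : SimpleGraph V} {v : V}

open Classical in
/-- Vertices off `P` with winding parity `β`. -/
noncomputable def side (M : LatModel G v) {p} (C : TriLat.Walk p p) (P : Finset V) (β : ZMod 2) :
    Finset V :=
  Finset.univ.filter (fun w => w ∉ P ∧ ∃ g, M.π g = w ∧ wpt g C = β)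

variable (M : LatModel G v) {p : ℤ × ℤ} (C : TriLat.Walk p p) (P : Finset V)

theorem wpt_fiber (hC : ∀ z ∈ C.support, M.π z ∈ P) {g g'} (hg : M.π g ∉ P) (h : M.π g = M.π g') : wpt g C = wpt g' C := by
  obtain ⟨w, hw⟩ := M.conn g g' h
  apply wpt_walk C w
  intro x hx hx'
  apply hg
  rw [← hw x hx]
  exact hC x hx'

theorem mem_side (hC : ∀ z ∈ C.support, M.π z ∈ P) {g} {β} : M.π g ∈ side M C P β ↔ M.π g ∉ P ∧ wpt g C = β := by
  unfold side
  simp only [Finset.mem_filter, Finset.mem_univ, true_and]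
  constructor
  · rintro ⟨h, g', h1, h2⟩
    refine ⟨h, ?_⟩
    rw [← h2]
    exact wpt_fiber M C P hC h h1.symm
  · rintro ⟨h, h1⟩
    exact ⟨h, g, rfl, h1⟩

theorem side_adj (hC : ∀ z ∈ C.support, M.π z ∈ P) {y z} {β} (hyz : G.Adj y z) (hz : z ∈ side M C P β) : y ∈ P ∨ y ∈ side M C P β := by
  obtain ⟨s, t, hst, rfl, rfl⟩ := M.lift _ _ hyz
  by_cases hs : M.π s ∈ P
  · exact Or.inl hs
  · right
    rw [mem_side M C P hC] at hz ⊢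
    refine ⟨hs, ?_⟩
    rw [← hz.2]
    exact wpt_adj hst C (fun h => hs (hC _ h)) (fun h => hz.1 (hC _ h))

theorem side_disj (hC : ∀ z ∈ C.support, M.π z ∈ P) {β β'} {w} (h : w ∈ side M C P β) (h' : w ∈ side M C P β') : β = β' := by
  obtain ⟨g, rfl⟩ := M.surj w
  rw [mem_side M C P hC] at h h'
  rw [← h.2, ← h'.2]

theorem side_off {β} {w} (h : w ∈ side M C P β) : w ∉ P := by
  unfold side at h
  simp only [Finset.mem_filter] at h
  exact h.2.1

theorem zmod2_add_one_ne (a : ZMod 2) : a ≠ a + 1 := by revert a; decide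
theorem zmod2_other {a b : ZMod 2} (h : a ≠ b) : a = b + 1 := by revert a b; decide

/-- Balanced closed walk. -/
def Bal (W : Finset V) (n : ℕ) : Prop :=
  ∃ (β : ZMod 2) (K : Finset V), (K ∩ W).card ≤ n ∧ P ⊆ K ∧ ∀ g, M.π g ∉ K → wpt g C = β

theorem bal_of (hC : ∀ z ∈ C.support, M.π z ∈ P) (W : Finset V) (n : ℕ) (β : ZMod 2) (h : ((P ∪ side M C P β) ∩ W).card ≤ n) :
    Bal M C P W n := by
  refine ⟨β + 1, P ∪ side M C P β, h, Finset.subset_union_left, ?_⟩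
  intro g hg
  rw [Finset.mem_union, mem_side M C P hC] at hg
  push Not at hg
  exact zmod2_other (hg.2 hg.1)

end sides

section bal
variable {V : Type} [Fintype V] [DecidableEq V] {G : SimpleGraph V} {v : V}

theorem bal_F1 (hconn : G.Connected) (M : LatModel G v) {p : ℤ × ℤ} (C : TriLat.Walk p p)
    (Pp Pq : Finset V) (hC : ∀ z ∈ C.support, M.π z ∈ Pp ∪ Pq) (hv : v ∈ Pp)
    (hp : Set.InjOn (fun z => G.dist v z) (Pp : Set V))
    (hq : Set.InjOn (fun z => G.dist v z) (Pq : Set V))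
    (W : Finset V) (hvW : v ∉ W) (β : ZMod 2) (N : Finset V) (hNc : N.card ≤ 2)
    (hN : ∀ w ∈ Pp ∪ Pq ∪ side M C (Pp ∪ Pq) β, G.Adj v w → w ∈ N) :
    Bal M C (Pp ∪ Pq) W (sn G (fun _ => 2) v) := by
  apply bal_of M C _ hC W _ β
  refine le_trans (Finset.card_le_card ?_) (save_F1 G hconn v Pp Pq (side M C (Pp ∪ Pq) β) hp hq ?_ ?_ N hNc hN)
  · intro w hw
    rw [Finset.mem_inter] at hw
    rw [Finset.mem_erase]
    exact ⟨fun h => hvW (h ▸ hw.2), hw.1⟩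
  · intro y z hyz hz
    right
    have := side_adj M C _ hC hyz hz
    rw [Finset.mem_union]
    exact this
  · intro h
    exact side_off M C _ h (by simp [hv])

theorem bal_small [DecidableRel G.Adj] (hconn : G.Connected) (M : LatModel G v) {p : ℤ × ℤ} (C : TriLat.Walk p p)
    (Pp Pq : Finset V) (hC : ∀ z ∈ C.support, M.π z ∈ Pp ∪ Pq) (hv : v ∈ Pp)
    (hp : Set.InjOn (fun z => G.dist v z) (Pp : Set V))
    (hq : Set.InjOn (fun z => G.dist v z) (Pq : Set V))
    (W : Finset V) (hvW : v ∉ W) (A : Finset V) (hA : ∀ w ∈ Pp ∪ Pq, G.Adj v w → w ∈ A)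
    (hd : G.degree v ≤ 3 ∧ A.card ≤ 2 ∨ G.degree v ≤ 4 ∧ A.card ≤ 1) (hAN : ∀ a ∈ A, G.Adj v a)
    (hAP : ∀ a ∈ A, a ∈ Pp ∪ Pq) :
    Bal M C (Pp ∪ Pq) W (sn G (fun _ => 2) v) := by
  let B : ZMod 2 → Finset V := fun β => (G.neighborFinset v).filter (fun w => w ∈ side M C (Pp ∪ Pq) β)
  have hBd : Disjoint (B 0) (B 1) := by
    rw [Finset.disjoint_left]
    intro w h0 h1
    simp only [B, Finset.mem_filter] at h0 h1
    exact zero_ne_one (side_disj M C _ hC h0.2 h1.2)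
  have hAB : Disjoint A (B 0 ∪ B 1) := by
    rw [Finset.disjoint_left]
    intro w h0 h1
    simp only [B, Finset.mem_filter, Finset.mem_union] at h1
    rcases h1 with h1 | h1 <;> exact side_off M C _ h1.2 (hAP w h0)
  have hcard : A.card + ((B 0).card + (B 1).card) ≤ G.degree v := by
    rw [← Finset.card_union_of_disjoint hBd, ← Finset.card_union_of_disjoint hAB,
      ← SimpleGraph.card_neighborFinset_eq_degree]
    apply Finset.card_le_card
    intro w hw
    simp only [B, Finset.mem_union, Finset.mem_filter, SimpleGraph.mem_neighborFinset] at hw ⊢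
    rcases hw with hw | hw | hw
    · exact hAN w hw
    · exact hw.1
    · exact hw.1
  obtain ⟨β, hβ⟩ : ∃ β, A.card + (B β).card ≤ 2 := by
    by_contra hcon
    push Not at hcon
    have h0 := hcon 0
    have h1 := hcon 1
    omega
  refine bal_F1 hconn M C Pp Pq hC hv hp hq W hvW β (A ∪ B β) ((Finset.card_union_le _ _).trans hβ) ?_
  intro w hw hvw
  rw [Finset.mem_union] at hw ⊢
  rcases hw with hw | hw
  · exact Or.inl (hA w hw hvw)
  · right; simp only [B, Finset.mem_filter, SimpleGraph.mem_neighborFinset]; exact ⟨hvw, hw⟩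

end bal



set_option linter.unusedSectionVars false

section deg
variable {V : Type} [Fintype V] [DecidableEq V] {G : SimpleGraph V} [DecidableRel G.Adj] {v : V}

/-- The conclusion required for the separator lemma. -/
def SepC (M : LatModel G v) (W : Finset V) {g0 : ℤ × ℤ} (x y : ℤ × ℤ) (Qx : TriLat.Walk g0 x)
    (Qy : TriLat.Walk g0 y) : Prop :=
  ∃ (β : ZMod 2) (K : Finset V), 3 * (K ∩ W).card < W.card ∧
      M.π x ∈ K ∧ M.π y ∈ K ∧ ∀ g, M.π g ∉ K →
        wpt g Qx + rho (leftTri g (g.1 + 1, g.2)) x y + wpt g Qy = β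

theorem SepC.symm {M : LatModel G v} {W : Finset V} {g0 x y : ℤ × ℤ} {Qx : TriLat.Walk g0 x}
    {Qy : TriLat.Walk g0 y} (h : SepC M W x y Qx Qy) : SepC M W y x Qy Qx := by
  obtain ⟨β, K, h1, h2, h3, h4⟩ := h
  refine ⟨β, K, h1, h3, h2, fun g hg => ?_⟩
  rw [← h4 g hg, rho_symm _ y x]
  ring

theorem sep_of_bal {M : LatModel G v} {W : Finset V} {n : ℕ} (hn : 3 * n < W.card) {g0 x y : ℤ × ℤ}
    {Qx : TriLat.Walk g0 x} {Qy : TriLat.Walk g0 y} (hxy : TriLat.Adj x y) {P : Finset V}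
    (hx : M.π x ∈ P) (hy : M.π y ∈ P) (h : Bal M (loopWalk Qx hxy Qy) P W n) :
    SepC M W x y Qx Qy := by
  obtain ⟨β, K, h1, h2, h3⟩ := h
  refine ⟨β, K, by omega, h2 hx, h2 hy, fun g hg => ?_⟩
  rw [← h3 g hg]
  unfold wpt
  rw [loopWalk_wsum _ (rho_symm _)]

theorem loop_sup {M : LatModel G v} {g0 x y : ℤ × ℤ} {Qx : TriLat.Walk g0 x}
    {Qy : TriLat.Walk g0 y} (hxy : TriLat.Adj x y) {E} {a b} {Px Py : Finset V}
    (hx : GeoL M E g0 x a Px Qx) (hy : GeoL M E g0 y b Py Qy) :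
    ∀ z ∈ (loopWalk Qx hxy Qy).support, M.π z ∈ Px ∪ Py := by
  intro z hz
  rw [loopWalk_support] at hz
  rw [Finset.mem_union]
  rcases hz with h | h
  · exact Or.inl (hx.sup z h)
  · exact Or.inr (hy.sup z h)

theorem exits_exist (M : LatModel G v) : ∃ E : V → (ℤ × ℤ) × (ℤ × ℤ),
    ∀ c, G.Adj v c → TriLat.Adj (E c).1 (E c).2 ∧ M.π (E c).1 = v ∧ M.π (E c).2 = c := by
  have : ∀ c, ∃ e : (ℤ × ℤ) × (ℤ × ℤ), G.Adj v c → TriLat.Adj e.1 e.2 ∧ M.π e.1 = v ∧ M.π e.2 = c := by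
    intro c
    by_cases h : G.Adj v c
    · obtain ⟨s, t, h1, h2, h3⟩ := M.lift _ _ h
      exact ⟨(s, t), fun _ => ⟨h1, h2, h3⟩⟩
    · exact ⟨((0, 0), (0, 0)), fun h' => absurd h' h⟩
  choose E hE using this
  exact ⟨E, hE⟩

/-- Few heads: the loop is balanced. -/
theorem sep_small (hconn : G.Connected) (M : LatModel G v) {E} {g0 x y : ℤ × ℤ} {a b : V}
    {Px Py : Finset V} {Qx : TriLat.Walk g0 x} {Qy : TriLat.Walk g0 y} (hxy : TriLat.Adj x y)
    (hx : GeoL M E g0 x a Px Qx) (hy : GeoL M E g0 y b Py Qy) (W : Finset V) (hvW : v ∉ W)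
    (hn : 3 * sn G (fun _ => 2) v < W.card)
    (hd : G.degree v ≤ 3 ∨ G.degree v ≤ 4 ∧ (M.π x = v ∨ M.π y = v ∨ a = b)) :
    SepC M W x y Qx Qy := by
  apply sep_of_bal hn hxy (P := Px ∪ Py) (by simp [hx.hx]) (by simp [hy.hx])
  have nvv : ¬ G.Adj v v := G.loopless.irrefl v
  refine bal_small hconn M _ Px Py (loop_sup hxy hx hy) hx.hv hx.inj hy.inj W hvW
    ((G.neighborFinset v).filter (fun w => w ∈ Px ∪ Py)) ?_ ?_ ?_ ?_
  · intro w hw hvw; simp only [Finset.mem_filter, SimpleGraph.mem_neighborFinset]; exact ⟨hvw, hw⟩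
  · have hsub : (G.neighborFinset v).filter (fun w => w ∈ Px ∪ Py) ⊆ {a, b} := by
      intro w hw
      simp only [Finset.mem_filter, SimpleGraph.mem_neighborFinset, Finset.mem_union] at hw
      simp only [Finset.mem_insert, Finset.mem_singleton]
      rcases hw.2 with h | h
      · exact Or.inl (hx.nb w h hw.1)
      · exact Or.inr (hy.nb w h hw.1)
    rcases hd with hd | ⟨hd, h⟩
    · exact Or.inl ⟨hd, (Finset.card_le_card hsub).trans Finset.card_le_two⟩
    · refine Or.inr ⟨hd, ?_⟩
      rcases h with h | h | h
      · refine (Finset.card_le_card (t := {b}) ?_).trans (by simp)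
        intro w hw
        simp only [Finset.mem_filter, SimpleGraph.mem_neighborFinset, Finset.mem_union] at hw
        simp only [Finset.mem_singleton]
        rcases hw.2 with h' | h'
        · rw [hx.null h, Finset.mem_singleton] at h'
          rw [h'] at hw
          exact absurd hw.1 nvv
        · exact hy.nb w h' hw.1
      · refine (Finset.card_le_card (t := {a}) ?_).trans (by simp)
        intro w hw
        simp only [Finset.mem_filter, SimpleGraph.mem_neighborFinset, Finset.mem_union] at hw
        simp only [Finset.mem_singleton]
        rcases hw.2 with h' | h'
        · exact hx.nb w h' hw.1
        · rw [hy.null h, Finset.mem_singleton] at h'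
          rw [h'] at hw
          exact absurd hw.1 nvv
      · rw [h] at hsub
        exact (Finset.card_le_card hsub).trans (by simp)
  · intro w hw; simp only [Finset.mem_filter, SimpleGraph.mem_neighborFinset] at hw; exact hw.1
  · intro w hw; simp only [Finset.mem_filter] at hw; exact hw.2

theorem LatModel.deg3 (hconn : G.Connected) (M : LatModel G v) (hd : G.degree v ≤ 3) :
    Fintype.card V ≤ 3 * sn G (fun _ => 2) v + 1 := by
  by_contra hcon
  push Not at hcon
  obtain ⟨E, hE⟩ := exits_exist M
  obtain ⟨g0, hg0⟩ := M.surj v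
  have hgl : ∀ x, ∃ c P Q, GeoL M E g0 x c P Q := by
    intro x
    by_cases hx : M.π x = v
    · obtain ⟨P, Q, h⟩ := geoL_exists hconn M E hE g0 x hg0 v (fun h => absurd hx h)
      exact ⟨_, P, Q, h⟩
    · obtain ⟨c, hc⟩ := head_exists hconn hx
      obtain ⟨P, Q, h⟩ := geoL_exists hconn M E hE g0 x hg0 c (fun _ => hc)
      exact ⟨_, P, Q, h⟩
  choose c P Q hgl using hgl
  refine separator M g0 Q ?_ (Finset.univ.erase v) (by simp) ?_
  · intro x hx z hz
    have := (hgl x).sup z hz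
    rw [(hgl x).null hx] at this
    simpa using this
  · intro x y hxy
    apply sep_small hconn M hxy (hgl x) (hgl y) _ (by simp) _ (Or.inl hd)
    rw [Finset.card_erase_of_mem (Finset.mem_univ v), Finset.card_univ]
    omega


theorem exit_stat (M : LatModel G v) {E : V → (ℤ × ℤ) × (ℤ × ℤ)}
    (hE : ∀ c, G.Adj v c → TriLat.Adj (E c).1 (E c).2 ∧ M.π (E c).1 = v ∧ M.π (E c).2 = c)
    {a b w : V} (hva : G.Adj v a) (hvb : G.Adj v b) {P : Finset V}
    {p : ℤ × ℤ} (C : TriLat.Walk p p) (hC : ∀ z ∈ C.support, M.π z ∈ P)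
    (hed : ∀ d, M.Leaving d → d ≠ E a → d ≠ E b → wsum (ed d.1 d.2) C = 0)
    (hw : G.Adj v w) (h2 : w ≠ a) (h3 : w ≠ b) (hwP : w ∉ P) :
    wpt (E w).2 C = wsum (rho (leftTri (E w).1 (E w).2)) C := by
  obtain ⟨e1, e2, e3⟩ := hE w hw
  have h4 : (E w).2 ∉ C.support := by
    intro h; have := hC _ h; rw [e3] at this; exact hwP this
  rw [← wind_pt e1.symm C h4]
  have := wind_share e1 C
  have hl : M.Leaving (E w) := ⟨e1, e2, by rw [e3]; exact hw.ne'⟩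
  rw [hed (E w) hl ?_ ?_] at this
  · exact (zmod2_eq_of_add this).symm
  · intro h; apply h2; rw [← e3, h, (hE a hva).2.2]
  · intro h; apply h3; rw [← e3, h, (hE b hvb).2.2]

/-- Two heads, the other neighbours have the same status. -/
theorem bal_same (hconn : G.Connected) (M : LatModel G v) {E : V → (ℤ × ℤ) × (ℤ × ℤ)}
    {g0 x y : ℤ × ℤ} {a b r s : V}
    {Px Py : Finset V} {Qx : TriLat.Walk g0 x} {Qy : TriLat.Walk g0 y}
    (hx : GeoL M E g0 x a Px Qx) (hy : GeoL M E g0 y b Py Qy) (W : Finset V) (hvW : v ∉ W)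
    {p : ℤ × ℤ} (C : TriLat.Walk p p) (hC : ∀ z ∈ C.support, M.π z ∈ Px ∪ Py)
    (hN : ∀ w, G.Adj v w → w = a ∨ w = b ∨ w = r ∨ w = s)
    (β : ZMod 2) (hr : r ∉ side M C (Px ∪ Py) β) (hs : s ∉ side M C (Px ∪ Py) β) :
    Bal M C (Px ∪ Py) W (sn G (fun _ => 2) v) := by
  refine bal_F1 hconn M C Px Py hC hx.hv hx.inj hy.inj W hvW β {a, b} Finset.card_le_two ?_
  intro w hw hvw
  simp only [Finset.mem_insert, Finset.mem_singleton]
  rw [Finset.mem_union, Finset.mem_union] at hw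
  rcases hw with (h | h) | h
  · exact Or.inl (hx.nb w h hvw)
  · exact Or.inr (hy.nb w h hvw)
  · rcases hN w hvw with h1 | h1 | h1 | h1
    · exact Or.inl h1
    · exact Or.inr h1
    · exact absurd (h1 ▸ h) hr
    · exact absurd (h1 ▸ h) hs

/-- Two adjacent heads. -/
theorem bal_adj (hconn : G.Connected) (M : LatModel G v) {E : V → (ℤ × ℤ) × (ℤ × ℤ)}
    (hE : ∀ c, G.Adj v c → TriLat.Adj (E c).1 (E c).2 ∧ M.π (E c).1 = v ∧ M.π (E c).2 = c)
    {g0 x y : ℤ × ℤ} {a b r s : V}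
    {Px Py : Finset V} {Qx : TriLat.Walk g0 x} {Qy : TriLat.Walk g0 y}
    (hx : GeoL M E g0 x a Px Qx) (hy : GeoL M E g0 y b Py Qy) (W : Finset V) (hvW : v ∉ W)
    {p : ℤ × ℤ} (C : TriLat.Walk p p) (hC : ∀ z ∈ C.support, M.π z ∈ Px ∪ Py)
    (hed : ∀ d, M.Leaving d → d ≠ E a → d ≠ E b → wsum (ed d.1 d.2) C = 0)
    (hN : ∀ w, G.Adj v w → w = a ∨ w = b ∨ w = r ∨ w = s) 
    (hva : G.Adj v a) (hvb : G.Adj v b) (hvr : G.Adj v r) (hvs : G.Adj v s)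
    (hra : r ≠ a) (hrb : r ≠ b) (hsa : s ≠ a) (hsb : s ≠ b)
    (hrs : wsum (rho (leftTri (E r).1 (E r).2)) C = wsum (rho (leftTri (E s).1 (E s).2)) C) :
    Bal M C (Px ∪ Py) W (sn G (fun _ => 2) v) := by
  have hout : ∀ w, G.Adj v w → w ≠ a → w ≠ b → w ∉ Px ∪ Py := by
    intro w h1 h2 h3 h
    rw [Finset.mem_union] at h
    rcases h with h | h
    · exact h2 (hx.nb w h h1)
    · exact h3 (hy.nb w h h1)
  rw [← exit_stat M hE hva hvb C hC hed hvr hra hrb (hout r hvr hra hrb),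
    ← exit_stat M hE hva hvb C hC hed hvs hsa hsb (hout s hvs hsa hsb)] at hrs
  refine bal_same hconn M hx hy W hvW C hC hN (wpt (E r).2 C + 1) ?_ ?_
  · intro h
    have h' := (mem_side M C _ hC (g := (E r).2)).1 (by rw [(hE r hvr).2.2]; exact h)
    exact zmod2_add_one_ne _ h'.2
  · intro h
    have h' := (mem_side M C _ hC (g := (E s).2)).1 (by rw [(hE s hvs).2.2]; exact h)
    rw [← hrs] at h'
    exact zmod2_add_one_ne _ h'.2

/-- Opposite heads, one of them pure, the other one of small degree. -/
theorem bal_pure (hconn : G.Connected) (M : LatModel G v) {E : V → (ℤ × ℤ) × (ℤ × ℤ)}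
    {g0 x y : ℤ × ℤ} {q1 p1 r s : V}
    {Pq Pp : Finset V} {Qx : TriLat.Walk g0 x} {Qy : TriLat.Walk g0 y}
    (hx : GeoL M E g0 x q1 Pq Qx) (hy : GeoL M E g0 y p1 Pp Qy) (W : Finset V) (hvW : v ∉ W)
    (hqW : q1 ∉ W)
    {p : ℤ × ℤ} (C : TriLat.Walk p p) (hC : ∀ z ∈ C.support, M.π z ∈ Pp ∪ Pq)
    (hN : ∀ w, G.Adj v w → w = q1 ∨ w = p1 ∨ w = r ∨ w = s)
    (hvq : G.Adj v q1) (hvp : G.Adj v p1) (hpq : p1 ≠ q1) (hxv : M.π x ≠ v) (hyv : M.π y ≠ v)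
    (hdeg : G.degree q1 ≤ 5)
    (hpure : ∀ h, G.Adj v h → G.dist h (M.π y) + 1 = G.dist v (M.π y) → h = p1) :
    Bal M C (Pp ∪ Pq) W (sn G (fun _ => 2) v) := by
  by_cases hsame : ∃ β, r ∉ side M C (Pp ∪ Pq) β ∧ s ∉ side M C (Pp ∪ Pq) β
  · obtain ⟨β, h1, h2⟩ := hsame
    exact bal_same hconn M hy hx W hvW C hC (fun w hw => by have := hN w hw; tauto) β h1 h2
  push Not at hsame
  let B : ZMod 2 → Finset V := fun β => (G.neighborFinset q1).filter (fun w => w ∈ side M C (Pp ∪ Pq) β)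
  let A : Finset V := (G.neighborFinset q1).filter (fun w => w ∈ Pq ∧ w ≠ v)
  have hA : A.card ≤ 1 := by
    rw [Finset.card_le_one]
    intro a ha b hb
    simp only [A, Finset.mem_filter, SimpleGraph.mem_neighborFinset] at ha hb
    have key : ∀ a, G.Adj q1 a → a ∈ Pq → a ≠ v → G.dist v a = 2 := by
      intro a h1 h2 h3
      have t1 : G.dist v a ≤ G.dist v q1 + G.dist q1 a := hconn.dist_triangle
      rw [SimpleGraph.dist_eq_one_iff_adj.2 hvq, SimpleGraph.dist_eq_one_iff_adj.2 h1] at t1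
      have t2 : G.dist v a ≠ 0 := by
        intro h; exact h3 (hconn.dist_eq_zero_iff.1 h).symm
      have t3 : G.dist v a ≠ 1 := by
        intro h
        have := hx.nb a h2 (SimpleGraph.dist_eq_one_iff_adj.1 h)
        rw [this] at h1
        exact G.loopless.irrefl _ h1
      omega
    apply hx.inj ha.2.1 hb.2.1
    simp only
    rw [key a ha.1 ha.2.1 ha.2.2, key b hb.1 hb.2.1 hb.2.2]
  have hBd : Disjoint (B 0) (B 1) := by
    rw [Finset.disjoint_left]
    intro w h0 h1
    simp only [B, Finset.mem_filter] at h0 h1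
    exact zero_ne_one (side_disj M C _ hC h0.2 h1.2)
  have hAB : Disjoint A (B 0 ∪ B 1) := by
    rw [Finset.disjoint_left]
    intro w h0 h1
    simp only [A, Finset.mem_filter] at h0
    simp only [B, Finset.mem_filter, Finset.mem_union] at h1
    rcases h1 with h1 | h1 <;> exact side_off M C _ h1.2 (by simp [h0.2.1])
  have hvd : v ∉ A ∪ (B 0 ∪ B 1) := by
    intro h
    simp only [A, B, Finset.mem_union, Finset.mem_filter] at h
    rcases h with h | h | h
    · exact h.2.2 rfl
    · exact side_off M C _ h.2 (by simp [hx.hv])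
    · exact side_off M C _ h.2 (by simp [hx.hv])
  have hcard : A.card + ((B 0).card + (B 1).card) + 1 ≤ G.degree q1 := by
    rw [← Finset.card_union_of_disjoint hBd, ← Finset.card_union_of_disjoint hAB,
      ← Finset.card_insert_of_notMem hvd,
      ← SimpleGraph.card_neighborFinset_eq_degree]
    apply Finset.card_le_card
    intro w hw
    simp only [A, B, Finset.mem_insert, Finset.mem_union, Finset.mem_filter,
      SimpleGraph.mem_neighborFinset] at hw ⊢
    rcases hw with rfl | hw | hw | hw
    · exact hvq.symm
    · exact hw.1
    · exact hw.1
    · exact hw.1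
  obtain ⟨β, hβ⟩ : ∃ β, A.card + (B β).card ≤ 2 := by
    by_contra hcon
    push Not at hcon
    have h0 := hcon 0
    have h1 := hcon 1
    omega
  obtain ⟨r', hr'⟩ : ∃ r', ∀ w ∈ side M C (Pp ∪ Pq) β, G.Adj v w → w = r' := by
    have hns : ∀ w ∈ side M C (Pp ∪ Pq) β, G.Adj v w → w = r ∨ w = s := by
      intro w hw hvw
      rcases hN w hvw with h1 | h1 | h1 | h1
      · exact absurd (by rw [h1]; simp [hx.hc hxv]) (side_off M C _ hw)
      · exact absurd (by rw [h1]; simp [hy.hc hyv]) (side_off M C _ hw)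
      · exact Or.inl h1
      · exact Or.inr h1
    have h1 := hsame (β + 1)
    by_cases hr : r ∈ side M C (Pp ∪ Pq) (β + 1)
    · refine ⟨s, fun w hw hvw => ?_⟩
      rcases hns w hw hvw with h | h
      · rw [h] at hw
        exact absurd (side_disj M C _ hC hw hr) (zmod2_add_one_ne _)
      · exact h
    · have hs := h1 hr
      refine ⟨r, fun w hw hvw => ?_⟩
      rcases hns w hw hvw with h | h
      · exact h
      · rw [h] at hw
        exact absurd (side_disj M C _ hC hw hs) (zmod2_add_one_ne _)
  apply bal_of M C _ hC W _ β
  refine le_trans (Finset.card_le_card ?_) (save_F2 G hconn v Pp Pq (side M C (Pp ∪ Pq) β) hy.inj hx.inj ?_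
    p1 q1 r' (hy.hc hyv) hvp hvq hpq ?_ ?_ hr' ?_ (A ∪ B β) ((Finset.card_union_le _ _).trans hβ) ?_)
  · intro w hw
    rw [Finset.mem_inter] at hw
    rw [Finset.mem_erase, Finset.mem_erase]
    exact ⟨fun h => hqW (h ▸ hw.2), fun h => hvW (h ▸ hw.2), hw.1⟩
  · intro y z hyz hz
    right
    have := side_adj M C _ hC hyz hz
    rw [Finset.mem_union]
    exact this
  · intro z hz hzv h hvh hh
    exact hpure h hvh (hy.heads z hz hzv h hvh hh)
  · intro w hw hvw
    rw [Finset.mem_union] at hw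
    rcases hw with h | h
    · exact Or.inl (hy.nb w h hvw)
    · exact Or.inr (hx.nb w h hvw)
  · intro z hz h; exact hx.two z hz h
  · intro w hw hwv hqw
    rw [Finset.mem_union] at hw ⊢
    simp only [A, B, Finset.mem_filter, SimpleGraph.mem_neighborFinset]
    rcases hw with h | h
    · exact Or.inl ⟨hqw, h, hwv⟩
    · exact Or.inr ⟨hqw, h⟩

end deg



set_option linter.unusedSectionVars false

section deg4
variable {V : Type} [Fintype V] [DecidableEq V] {G : SimpleGraph V} [DecidableRel G.Adj] {v : V}

theorem fin4_cover (i1 i2 k : Fin 4) (h1 : i1 = 0 ∨ i1 = 2) (h2 : i2 = 1 ∨ i2 = 3) :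
    k = i1 ∨ k = i2 ∨ k = i1 + 2 ∨ k = i2 + 2 := by
  revert i1 i2 k; decide

theorem fin4_cover' (i k : Fin 4) : k = i ∨ k = i + 1 ∨ k = i + 2 ∨ k = i + 3 := by
  revert i k; decide

theorem loop_hed (M : LatModel G v) {E : V → (ℤ × ℤ) × (ℤ × ℤ)} {g0 x y : ℤ × ℤ} {a b : V}
    {Px Py : Finset V} {Qx : TriLat.Walk g0 x} {Qy : TriLat.Walk g0 y} (hxy : TriLat.Adj x y)
    (hx : GeoL M E g0 x a Px Qx) (hy : GeoL M E g0 y b Py Qy) (hxv : M.π x ≠ v) (hyv : M.π y ≠ v) :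
    ∀ d, M.Leaving d → d ≠ E a → d ≠ E b → wsum (ed d.1 d.2) (loopWalk Qx hxy Qy) = 0 := by
  intro d hd h1 h2
  rw [loopWalk_wsum _ (ed_symm _ _), hx.leav d hd h1, hy.leav d hd h2]
  unfold ed
  rw [if_neg]
  · simp
  · rintro (⟨rfl, -⟩ | ⟨-, rfl⟩)
    · exact hxv hd.2.1
    · exact hyv hd.2.1

theorem LatModel.deg4 (hconn : G.Connected) (M : LatModel G v) (hd : G.degree v = 4) :
    Fintype.card V ≤ 6 * sn G (fun _ => 2) v + 5 ∨
      ∃ a c, a ≠ c ∧ G.Adj v a ∧ G.Adj v c ∧ 6 ≤ G.degree a ∧ 6 ≤ G.degree c := by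
  by_contra hcon
  push Not at hcon
  obtain ⟨hcard, hcon⟩ := hcon
  obtain ⟨E, hE⟩ := exits_exist M
  obtain ⟨g0, hg0⟩ := M.surj v
  obtain ⟨n, ninj, hnN, hrot⟩ := M.rotation E (G.neighborFinset v) (by simpa using hd) (by simp)
    (fun c hc => hE c (by simpa using hc))
  have hvn : ∀ i, G.Adj v (n i) := fun i => by simpa using hnN i
  have nsurj : ∀ w, G.Adj v w → ∃ k, w = n k := by
    intro w hw
    have h1 : Finset.univ.image n = G.neighborFinset v := by
      apply Finset.eq_of_subset_of_card_le
      · intro w hw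
        simp only [Finset.mem_image, Finset.mem_univ, true_and] at hw
        obtain ⟨i, rfl⟩ := hw
        exact hnN i
      · rw [Finset.card_image_of_injective _ ninj, SimpleGraph.card_neighborFinset_eq_degree, hd]
        simp
    have : w ∈ Finset.univ.image n := by rw [h1]; simpa using hw
    simp only [Finset.mem_image, Finset.mem_univ, true_and] at this
    obtain ⟨k, hk⟩ := this
    exact ⟨k, hk.symm⟩
  obtain ⟨i1, hi1, hdeg1⟩ : ∃ i1 : Fin 4, (i1 = 0 ∨ i1 = 2) ∧ G.degree (n i1) ≤ 5 := by
    by_cases h : G.degree (n 0) ≤ 5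
    · exact ⟨0, Or.inl rfl, h⟩
    · refine ⟨2, Or.inr rfl, ?_⟩
      have := hcon (n 0) (n 2) (fun h => absurd (ninj h) (by decide)) (hvn _) (hvn _) (by omega)
      omega
  obtain ⟨i2, hi2, hdeg2⟩ : ∃ i2 : Fin 4, (i2 = 1 ∨ i2 = 3) ∧ G.degree (n i2) ≤ 5 := by
    by_cases h : G.degree (n 1) ≤ 5
    · exact ⟨1, Or.inl rfl, h⟩
    · refine ⟨3, Or.inr rfl, ?_⟩
      have := hcon (n 1) (n 3) (fun h => absurd (ninj h) (by decide)) (hvn _) (hvn _) (by omega)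
      omega
  let L : V → Fin 4 → Prop := fun z i => G.dist (n i) z + 1 = G.dist v z
  have hLd : ∀ z i, Decidable (L z i) := fun z i => inferInstanceAs (Decidable (_ = _))
  let idx : V → Fin 4 := fun z => if L z i1 then i1 else if L z i2 then i2 else
    if L z (i1 + 2) then i1 + 2 else i2 + 2
  have hidx : ∀ z, z ≠ v → L z (idx z) := by
    intro z hz
    obtain ⟨c, hc1, hc2⟩ := head_exists hconn hz
    obtain ⟨k, rfl⟩ := nsurj c hc1
    have hk : L z k := hc2
    simp only [idx]
    split_ifs with a b c
    · exact a
    · exact b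
    · exact c
    · rcases fin4_cover i1 i2 k hi1 hi2 with h | h | h | h
      · rw [h] at hk; exact absurd hk a
      · rw [h] at hk; exact absurd hk b
      · rw [h] at hk; exact absurd hk c
      · rw [h] at hk; exact hk
  have hid1 : ∀ z, idx z = i1 + 2 → ¬ L z i1 ∧ ¬ L z i2 := by
    intro z
    simp only [idx]
    split_ifs with a b c
    · intro h; exfalso; clear * - h; revert i1; decide
    · intro h; exfalso; clear * - h hi1 hi2; revert i1 i2; decide
    · intro _; exact ⟨a, b⟩
    · intro _; exact ⟨a, b⟩
  have hid2 : ∀ z, idx z = i2 + 2 → ¬ L z i1 ∧ ¬ L z i2 ∧ ¬ L z (i1 + 2) := by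
    intro z
    simp only [idx]
    split_ifs with a b c
    · intro h; exfalso; clear * - h hi1 hi2; revert i1 i2; decide
    · intro h; exfalso; clear * - h; revert i2; decide
    · intro h; exfalso; clear * - h hi1 hi2; revert i1 i2; decide
    · intro _; exact ⟨a, b, c⟩
  have hgl : ∀ x, ∃ P Q, GeoL M E g0 x (n (idx (M.π x))) P Q := fun x =>
    geoL_exists hconn M E hE g0 x hg0 _ (fun h => ⟨hvn _, hidx _ h⟩)
  choose P Q hgl using hgl
  let W : Finset V := Finset.univ \ (insert v (G.neighborFinset v))
  have hvW : v ∉ W := by simp [W]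
  have hWc : 6 * sn G (fun _ => 2) v < W.card := by
    have h1 : (insert v (G.neighborFinset v)).card = 5 := by
      rw [Finset.card_insert_of_notMem (by simp), SimpleGraph.card_neighborFinset_eq_degree, hd]
    have h2 := Finset.card_sdiff_add_card_eq_card (Finset.subset_univ (insert v (G.neighborFinset v)))
    rw [h1, Finset.card_univ] at h2
    simp only [W]
    omega
  have hnW : ∀ i, n i ∉ W := by intro i; simp [W, hvn i]
  have adjBal : ∀ (x y : ℤ × ℤ) (i j : Fin 4) (Px Py : Finset V) (Qx : TriLat.Walk g0 x)
      (Qy : TriLat.Walk g0 y), GeoL M E g0 x (n i) Px Qx → GeoL M E g0 y (n j) Py Qy →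
      ∀ (p : ℤ × ℤ) (C : TriLat.Walk p p), (∀ z ∈ C.support, M.π z ∈ Px ∪ Py) →
      (∀ d, M.Leaving d → d ≠ E (n i) → d ≠ E (n j) → wsum (ed d.1 d.2) C = 0) →
      i ≠ j → j ≠ i + 2 → Bal M C (Px ∪ Py) W (sn G (fun _ => 2) v) := by
    intro x y i j Px Py Qx Qy hx hy p C hC hed hij hij2
    have hcase : j = i + 1 ∨ i = j + 1 := by
      clear * - hij hij2; revert i j; decide
    rcases hcase with h | h
    · refine bal_adj hconn M hE hx hy W hvW C hC hed (r := n (i + 2)) (s := n (i + 3)) ?_ (hvn _) (hvn _)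
        (hvn _) (hvn _) ?_ ?_ ?_ ?_ ?_
      · intro w hw
        obtain ⟨k, rfl⟩ := nsurj w hw
        rcases fin4_cover' i k with h' | h' | h' | h' <;> simp [h', h]
      · intro h'; exact absurd (ninj h') (by clear * -; revert i; decide)
      · intro h'; rw [h] at h'; exact absurd (ninj h') (by clear * -; revert i; decide)
      · intro h'; exact absurd (ninj h') (by clear * -; revert i; decide)
      · intro h'; rw [h] at h'; exact absurd (ninj h') (by clear * -; revert i; decide)
      · refine hrot i p C (fun d h1 h2 h3 => hed d h1 h2 (by rw [h]; exact h3))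
    · refine bal_adj hconn M hE hx hy W hvW C hC hed (r := n (j + 2)) (s := n (j + 3)) ?_ (hvn _) (hvn _)
        (hvn _) (hvn _) ?_ ?_ ?_ ?_ ?_
      · intro w hw
        obtain ⟨k, rfl⟩ := nsurj w hw
        rcases fin4_cover' j k with h' | h' | h' | h' <;> simp [h', h]
      · intro h'; rw [h] at h'; exact absurd (ninj h') (by clear * -; revert j; decide)
      · intro h'; exact absurd (ninj h') (by clear * -; revert j; decide)
      · intro h'; rw [h] at h'; exact absurd (ninj h') (by clear * -; revert j; decide)
      · intro h'; exact absurd (ninj h') (by clear * -; revert j; decide)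
      · refine hrot j p C (fun d h1 h2 h3 => hed d h1 (by rw [h]; exact h3) h2)
  have T : ∀ x y, TriLat.Adj x y → M.π x ≠ v → M.π y ≠ v → idx (M.π y) = idx (M.π x) + 2 →
      (idx (M.π y) = i1 + 2 ∨ idx (M.π y) = i2 + 2) → SepC M W x y (Q x) (Q y) := by
    intro x y hxy hxv hyv hop hpr
    have hdq : G.degree (n (idx (M.π x))) ≤ 5 := by
      rcases hpr with h | h
      · rw [h] at hop; rw [← add_right_cancel hop]; exact hdeg1
      · rw [h] at hop; rw [← add_right_cancel hop]; exact hdeg2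
    by_cases halt : idx (M.π y) = i1 + 2 ∧ L (M.π y) (i2 + 2)
    · obtain ⟨ha, hb⟩ := halt
      obtain ⟨P', Q', hgl'⟩ := geoL_exists hconn M E hE g0 y hg0 (n (i2 + 2)) (fun h => ⟨hvn _, hb⟩)
      have hxi : idx (M.π x) = i1 := by rw [ha] at hop; exact (add_right_cancel hop).symm
      obtain ⟨β1, K1, a1, a2, a3⟩ := adjBal x y _ _ _ _ _ _ (hgl x) hgl' _ (loopWalk (Q x) hxy Q')
        (loop_sup hxy (hgl x) hgl') (loop_hed M hxy (hgl x) hgl' hxv hyv) (by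
          rw [hxi]; clear * - hi1 hi2; revert i1 i2; decide) (by
          rw [hxi]; clear * - hi1 hi2; revert i1 i2; decide)
      obtain ⟨β2, K2, b1, b2, b3⟩ := adjBal y y _ _ _ _ _ _ (hgl y) hgl' _ ((Q y).append Q'.reverse)
        (by
          intro z hz
          rw [SimpleGraph.Walk.mem_support_append_iff, SimpleGraph.Walk.support_reverse, List.mem_reverse] at hz
          rw [Finset.mem_union]
          rcases hz with h | h
          · exact Or.inl ((hgl y).sup z h)
          · exact Or.inr (hgl'.sup z h)) (by
          intro d hd h1 h2
          rw [wsum_append, wsum_reverse _ (ed_symm _ _), (hgl y).leav d hd h1, hgl'.leav d hd h2, add_zero]) (by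
          rw [ha]; clear * - hi1 hi2; revert i1 i2; decide) (by
          rw [ha]; clear * - hi1 hi2; revert i1 i2; decide)
      refine ⟨β1 + β2, K1 ∪ K2, ?_, ?_, ?_, ?_⟩
      · rw [Finset.union_inter_distrib_right]
        have := Finset.card_union_le (K1 ∩ W) (K2 ∩ W)
        omega
      · rw [Finset.mem_union]; left; apply a2; simp [(hgl x).hx]
      · rw [Finset.mem_union]; right; apply b2; simp [(hgl y).hx]
      · intro g hg
        rw [Finset.mem_union] at hg
        push Not at hg
        rw [← a3 g hg.1, ← b3 g hg.2]
        unfold wpt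
        rw [loopWalk_wsum _ (rho_symm _), wsum_append, wsum_reverse _ (rho_symm _)]
        linear_combination -zmod2_add_self (wsum (rho (leftTri g (g.1 + 1, g.2))) Q')
    · apply sep_of_bal (n := sn G (fun _ => 2) v) (by omega) hxy (P := P y ∪ P x) (by simp [(hgl x).hx]) (by simp [(hgl y).hx])
      refine bal_pure hconn M (hgl x) (hgl y) W hvW (hnW _) _ ?_ (r := n (idx (M.π x) + 1))
        (s := n (idx (M.π x) + 3)) ?_ (hvn _) (hvn _) ?_ hxv hyv hdq ?_
      · intro z hz
        rw [Finset.union_comm]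
        exact loop_sup hxy (hgl x) (hgl y) z hz
      · intro w hw
        obtain ⟨k, rfl⟩ := nsurj w hw
        rcases fin4_cover' (idx (M.π x)) k with h' | h' | h' | h' <;> simp [h', hop]
      · intro h
        have h2 := ninj h
        rw [hop] at h2
        exact absurd h2 (by generalize idx (M.π x) = i; clear * -; revert i; decide)
      · intro h hvh hh
        obtain ⟨k, rfl⟩ := nsurj h hvh
        have hk : L (M.π y) k := hh
        congr 1
        rcases hpr with hp | hp
        · have := hid1 _ hp
          rcases fin4_cover i1 i2 k hi1 hi2 with h | h | h | h
          · rw [h] at hk; exact absurd hk this.1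
          · rw [h] at hk; exact absurd hk this.2
          · rw [h, hp]
          · rw [h] at hk; exact absurd ⟨hp, hk⟩ halt
        · have := hid2 _ hp
          rcases fin4_cover i1 i2 k hi1 hi2 with h | h | h | h
          · rw [h] at hk; exact absurd hk this.1
          · rw [h] at hk; exact absurd hk this.2.1
          · rw [h] at hk; exact absurd hk this.2.2
          · rw [h, hp]
  refine separator M g0 Q ?_ W hvW ?_
  · intro x hx z hz
    have := (hgl x).sup z hz
    rw [(hgl x).null hx] at this
    exact Finset.mem_singleton.1 this
  · intro x y hxy
    by_cases hs : M.π x = v ∨ M.π y = v ∨ n (idx (M.π x)) = n (idx (M.π y))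
    · exact sep_small hconn M hxy (hgl x) (hgl y) W hvW (by omega) (Or.inr ⟨by omega, hs⟩)
    push Not at hs
    obtain ⟨hxv, hyv, hne⟩ := hs
    have hne' : idx (M.π x) ≠ idx (M.π y) := fun h => hne (by rw [h])
    by_cases hop : idx (M.π y) = idx (M.π x) + 2
    · have hop' : idx (M.π x) = idx (M.π y) + 2 := by
        rw [hop]; generalize idx (M.π x) = i; clear * -; revert i; decide
      rcases fin4_cover i1 i2 (idx (M.π y)) hi1 hi2 with h | h | h | h
      · exact (T y x hxy.symm hyv hxv hop' (Or.inl (by rw [hop', h]))).symm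
      · exact (T y x hxy.symm hyv hxv hop' (Or.inr (by rw [hop', h]))).symm
      · exact T x y hxy hxv hyv hop (Or.inl h)
      · exact T x y hxy hxv hyv hop (Or.inr h)
    · exact sep_of_bal (n := sn G (fun _ => 2) v) (by omega) hxy (P := P x ∪ P y) (by simp [(hgl x).hx])
        (by simp [(hgl y).hx]) (adjBal x y _ _ _ _ _ _ (hgl x) (hgl y) _ (loopWalk (Q x) hxy (Q y))
        (loop_sup hxy (hgl x) (hgl y)) (loop_hed M hxy (hgl x) (hgl y) hxv hyv) hne' hop)

end deg4



set_option linter.unusedSectionVars false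

section EulerAbstract
open Finset
variable {V : Type} [Fintype V] [DecidableEq V] (G : SimpleGraph V) [DecidableRel G.Adj]

/-- An edge set with even degrees in a triangle-free graph has at least four edges. -/
theorem even_four (htf : ∀ a b c, G.Adj a b → G.Adj b c → ¬ G.Adj c a)
    (B : Finset G.edgeSet) (hne : B.Nonempty)
    (hev : ∀ w : V, (((B.filter (fun ε : G.edgeSet => w ∈ (ε : Sym2 V))).card : ℕ) : ZMod 2) = 0) :
    4 ≤ B.card := by
  have hnext : ∀ w : V, ∀ ε ∈ B, w ∈ (ε : Sym2 V) → ∃ ε' ∈ B, w ∈ (ε' : Sym2 V) ∧ ε' ≠ ε := by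
    intro w ε hε hw
    by_contra hcon
    push Not at hcon
    have : B.filter (fun ε : G.edgeSet => w ∈ (ε : Sym2 V)) = {ε} := by
      ext x
      simp only [mem_filter, mem_singleton]
      constructor
      · rintro ⟨h1, h2⟩; exact hcon x h1 h2
      · rintro rfl; exact ⟨hε, hw⟩
    have h2 := hev w
    rw [this] at h2
    simp at h2
  have hnext' : ∀ w a : V, ∀ h : s(w, a) ∈ G.edgeSet, (⟨s(w, a), h⟩ : G.edgeSet) ∈ B →
      ∃ b, ∃ h' : s(w, b) ∈ G.edgeSet, (⟨s(w, b), h'⟩ : G.edgeSet) ∈ B ∧ b ≠ a := by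
    intro w a h hB
    obtain ⟨⟨ε', hε'⟩, h1, h2, h3⟩ := hnext w _ hB (by simp)
    obtain ⟨b, rfl⟩ := Sym2.mem_iff_exists.1 h2
    exact ⟨b, hε', h1, by rintro rfl; exact h3 rfl⟩
  obtain ⟨⟨ε, hε⟩, hB⟩ := hne
  induction ε using Sym2.ind with
  | _ a b =>
    obtain ⟨d, hd, hdB, hdb⟩ := hnext' a b hε hB
    have hε2 : s(b, a) ∈ G.edgeSet := by rw [Sym2.eq_swap]; exact hε
    have hB2 : (⟨s(b, a), hε2⟩ : G.edgeSet) ∈ B := by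
      convert hB using 2
      exact Sym2.eq_swap
    obtain ⟨c, hc, hcB, hca⟩ := hnext' b a hε2 hB2
    have hε3 : s(c, b) ∈ G.edgeSet := by rw [Sym2.eq_swap]; exact hc
    have hB3 : (⟨s(c, b), hε3⟩ : G.edgeSet) ∈ B := by
      convert hcB using 2
      exact Sym2.eq_swap
    obtain ⟨x, hx, hxB, hxb⟩ := hnext' c b hε3 hB3
    rw [SimpleGraph.mem_edgeSet] at *
    have hcd : c ≠ d := by
      rintro rfl
      exact htf a b c hε hc hd.symm
    have hsub : ({⟨s(a, b), hε⟩, ⟨s(a, d), hd⟩, ⟨s(b, c), hc⟩, ⟨s(c, x), hx⟩} : Finset G.edgeSet) ⊆ B := by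
      intro y hy
      simp only [mem_insert, mem_singleton] at hy
      rcases hy with rfl | rfl | rfl | rfl <;> assumption
    refine le_trans (le_of_eq ?_) (card_le_card hsub)
    have hab := hε.ne
    have had := hd.ne
    have hbc := hc.ne
    rw [card_insert_of_notMem, card_insert_of_notMem, card_insert_of_notMem, card_singleton]
    all_goals
      intro hmem
      simp only [mem_insert, mem_singleton, Subtype.mk.injEq, Sym2.eq_iff] at hmem
      clear hnext hnext' hev hsub
      grind

set_option maxHeartbeats 1000000 in
theorem euler_abs (hconn : G.Connected) (hn : 3 ≤ Fintype.card V)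
    (htf : ∀ a b c, G.Adj a b → G.Adj b c → ¬ G.Adj c a)
    {Φ : Type} [DecidableEq Φ] (F1 F2 : G.edgeSet → Φ)
    (hA : ∀ α : G.edgeSet → ZMod 2,
      (∀ f, ∑ ε, α ε * ((if F1 ε = f then 1 else 0) + (if F2 ε = f then 1 else 0)) = 0) →
      ∃ u : V → ZMod 2, ∀ a b (h : G.Adj a b), α ⟨s(a, b), h⟩ = u a + u b)
    (hB : ∀ f (w : V), ∑ ε : G.edgeSet, (if w ∈ (ε : Sym2 V) then (1 : ZMod 2) else 0) *
      ((if F1 ε = f then 1 else 0) + (if F2 ε = f then 1 else 0)) = 0) :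
    Fintype.card G.edgeSet + 4 ≤ 2 * Fintype.card V := by
  classical
  let E := G.edgeSet
  let B : Φ → E → ZMod 2 := fun f ε => (if F1 ε = f then 1 else 0) + (if F2 ε = f then 1 else 0)
  let D : Finset Φ := ((univ.filter (fun ε : E => F1 ε ≠ F2 ε)).image F1) ∪
    ((univ.filter (fun ε : E => F1 ε ≠ F2 ε)).image F2)
  let L : (E → ZMod 2) →ₗ[ZMod 2] (D → ZMod 2) :=
    { toFun := fun α f => ∑ ε, α ε * B f ε
      map_add' := by intro x y; ext f; simp [add_mul, sum_add_distrib]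
      map_smul' := by intro x y; ext f; simp [mul_sum, mul_assoc] }
  let δ : (V → ZMod 2) →ₗ[ZMod 2] (E → ZMod 2) :=
    { toFun := fun u ε => ∑ w, (if w ∈ (ε : Sym2 V) then u w else 0)
      map_add' := by
        intro x y; ext f; simp only [Pi.add_apply, ← sum_add_distrib]
        apply sum_congr rfl; intro w _; split_ifs <;> simp
      map_smul' := by intro x y; ext f; simp [mul_sum] }
  have hδ : ∀ u a b (h : G.Adj a b), δ u ⟨s(a, b), h⟩ = u a + u b := by
    intro u a b h
    show ∑ w, (if w ∈ s(a, b) then u w else 0) = _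
    rw [← sum_filter]
    have : univ.filter (fun w => w ∈ s(a, b)) = {a, b} := by ext w; simp
    rw [this, sum_pair h.ne]
  have hBz : ∀ f, f ∉ D → ∀ ε, B f ε = 0 := by
    intro f hf ε
    simp only [D, mem_union, mem_image, mem_filter, mem_univ, true_and, not_or, not_exists, not_and] at hf
    simp only [B]
    by_cases h : F1 ε = F2 ε
    · rw [h, zmod2_add_self]
    · rw [if_neg (hf.1 ε h), if_neg (hf.2 ε h), add_zero]
  have hker : LinearMap.ker L ≤ LinearMap.range δ := by
    intro α hα
    rw [LinearMap.mem_ker] at hα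
    obtain ⟨u, hu⟩ := hA α (by
      intro f
      by_cases hf : f ∈ D
      · exact congrFun hα ⟨f, hf⟩
      · apply sum_eq_zero
        intro ε _
        have := hBz f hf ε
        simp only [B] at this
        rw [this, mul_zero])
    refine ⟨u, ?_⟩
    ext ⟨ε, hε⟩
    induction ε using Sym2.ind with
    | _ a b => rw [hδ u a b hε]; exact (hu a b hε).symm
  have hne : Nonempty V := hconn.nonempty
  have hδr : Module.finrank (ZMod 2) (LinearMap.range δ) + 1 ≤ Fintype.card V := by
    have h1 := LinearMap.finrank_range_add_finrank_ker δ
    rw [Module.finrank_fintype_fun_eq_card] at h1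
    have h2 : 0 < Module.finrank (ZMod 2) (LinearMap.ker δ) := by
      apply Module.finrank_pos_iff_exists_ne_zero.2
      refine ⟨⟨fun _ => 1, ?_⟩, ?_⟩
      · rw [LinearMap.mem_ker]
        ext ⟨ε, hε⟩
        induction ε using Sym2.ind with
        | _ a b => rw [hδ _ a b hε]; exact zmod2_add_self 1
      · intro h
        have h3 := congrFun (congrArg Subtype.val h) (Classical.arbitrary V)
        exact one_ne_zero h3
    omega
  have hkr := Submodule.finrank_mono hker
  have hLr := LinearMap.finrank_range_add_finrank_ker L
  rw [Module.finrank_fintype_fun_eq_card] at hLr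
  have hE : Fintype.card E = Fintype.card G.edgeSet := rfl
  by_cases hr : D = ∅
  · have h0 : Module.finrank (ZMod 2) (LinearMap.range L) ≤ 0 := by
      have := Submodule.finrank_le (LinearMap.range L)
      rw [Module.finrank_fintype_fun_eq_card] at this
      simpa [hr] using this
    omega
  · have hDne : D.Nonempty := nonempty_iff_ne_empty.2 hr
    let σ : (D → ZMod 2) →ₗ[ZMod 2] ZMod 2 :=
      { toFun := fun x => ∑ f, x f
        map_add' := by intro x y; simp [sum_add_distrib]
        map_smul' := by intro x y; simp [mul_sum] }
    have hsum : ∀ ε, ∑ f : D, B f ε = 0 := by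
      intro ε
      rw [show ∑ f : D, B f ε = ∑ f ∈ D, B f ε from sum_coe_sort D (fun f => B f ε)]
      by_cases h : F1 ε = F2 ε
      · apply sum_eq_zero
        intro f _
        simp only [B]
        rw [h, zmod2_add_self]
      · simp only [B, sum_add_distrib, sum_ite_eq]
        rw [if_pos, if_pos]
        · decide
        · simp only [D, mem_union, mem_image, mem_filter, mem_univ, true_and]
          exact Or.inr ⟨ε, h, rfl⟩
        · simp only [D, mem_union, mem_image, mem_filter, mem_univ, true_and]
          exact Or.inl ⟨ε, h, rfl⟩
    have hrk : LinearMap.range L ≤ LinearMap.ker σ := by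
      rintro _ ⟨α, rfl⟩
      rw [LinearMap.mem_ker]
      show ∑ f : D, ∑ ε, α ε * B f ε = 0
      rw [sum_comm]
      apply sum_eq_zero
      intro ε _
      rw [← mul_sum, hsum, mul_zero]
    have hσr : Module.finrank (ZMod 2) (LinearMap.ker σ) + 1 ≤ D.card := by
      have h1 := LinearMap.finrank_range_add_finrank_ker σ
      rw [Module.finrank_fintype_fun_eq_card, Fintype.card_coe] at h1
      have h2 : 0 < Module.finrank (ZMod 2) (LinearMap.range σ) := by
        apply Module.finrank_pos_iff_exists_ne_zero.2
        obtain ⟨f, hf⟩ := hDne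
        refine ⟨⟨1, Pi.single ⟨f, hf⟩ 1, ?_⟩, ?_⟩
        · show ∑ g, (Pi.single (⟨f, hf⟩ : D) (1 : ZMod 2) : D → ZMod 2) g = 1
          rw [sum_pi_single']
          simp
        · intro h
          exact one_ne_zero (congrArg Subtype.val h)
      omega
    have h3 := Submodule.finrank_mono hrk
    have h4 : 4 * D.card ≤ 2 * Fintype.card G.edgeSet := by
      have hb : ∀ f ∈ D, 4 ≤ (univ.filter (fun ε : E => B f ε ≠ 0)).card := by
        intro f hf
        apply even_four G htf
        · simp only [D, mem_union, mem_image, mem_filter, mem_univ, true_and] at hf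
          rcases hf with ⟨ε, h, rfl⟩ | ⟨ε, h, rfl⟩
          · refine ⟨ε, ?_⟩
            simp [B, Ne.symm h]
          · refine ⟨ε, ?_⟩
            simp [B, h]
        · intro w
          refine Eq.trans ?_ (hB f w)
          rw [filter_filter, card_filter]
          push_cast
          apply sum_congr rfl
          intro ε _
          have key : ∀ (b : ZMod 2) (P : Prop) [Decidable P],
              (if b ≠ 0 ∧ P then (1 : ZMod 2) else 0) = (if P then 1 else 0) * b := by
            intro b P _
            by_cases hP : P
            · simp only [hP, and_true, if_true, one_mul]; revert b; decide
            · simp [hP]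
          exact key (B f ε) (w ∈ (ε : Sym2 V))
      have hs : ∑ f ∈ D, (univ.filter (fun ε : E => B f ε ≠ 0)).card ≤ 2 * Fintype.card G.edgeSet := by
        simp only [card_filter]
        rw [sum_comm]
        have : ∀ ε : E, ∑ f ∈ D, (if B f ε ≠ 0 then 1 else 0) ≤ 2 := by
          intro ε
          rw [← card_filter]
          have : D.filter (fun f => B f ε ≠ 0) ⊆ {F1 ε, F2 ε} := by
            intro f hf
            simp only [mem_filter, B] at hf
            simp only [mem_insert, mem_singleton]
            by_contra hcon
            push Not at hcon
            apply hf.2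
            rw [if_neg (Ne.symm hcon.1), if_neg (Ne.symm hcon.2), add_zero]
          exact (card_le_card this).trans card_le_two
        calc _ ≤ ∑ ε : E, 2 := sum_le_sum (fun ε _ => this ε)
          _ = _ := by simp [E, mul_comm]
      have := card_nsmul_le_sum D _ 4 hb
      simp only [smul_eq_mul] at this
      omega
    omega

end EulerAbstract


open Finset in
theorem wsum_sum {α ι : Type*} {H : SimpleGraph α} (s : Finset ι) (c : ι → α → α → ZMod 2)
    (k : ι → ZMod 2) {p q : α} (w : H.Walk p q) :
    wsum (fun a b => ∑ i ∈ s, k i * c i a b) w = ∑ i ∈ s, k i * wsum (c i) w := by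
  induction w with
  | nil => simp [wsum]
  | cons h w ih => simp only [wsum, ih, mul_add, sum_add_distrib]

/-- rotation of darts -/
def rotDart : ((ℤ × ℤ) × (ℤ × ℤ)) ≃ ((ℤ × ℤ) × (ℤ × ℤ)) where
  toFun d := (d.2, third d.1 d.2)
  invFun d := (third d.1 d.2, d.1)
  left_inv d := by simp [third_cycle]
  right_inv d := by simp [third_cycle']

theorem dart_sum_zero (φ : (ℤ × ℤ) × (ℤ × ℤ) → ZMod 2) (hf : (Function.support φ).Finite)
    (h : ∀ d, φ d + φ (rotDart d) + φ (rotDart (rotDart d)) = 0) : ∑ᶠ d, φ d = 0 := by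
  have h1 : ∑ᶠ d, φ (rotDart d) = ∑ᶠ d, φ d := finsum_comp_equiv rotDart
  have h2 : ∑ᶠ d, φ (rotDart (rotDart d)) = ∑ᶠ d, φ d := by
    rw [finsum_comp_equiv rotDart (f := fun d => φ (rotDart d)), h1]
  have f1 : (Function.support (fun d => φ (rotDart d))).Finite :=
    hf.preimage rotDart.injective.injOn
  have f2 : (Function.support (fun d => φ (rotDart (rotDart d)))).Finite :=
    f1.preimage rotDart.injective.injOn
  have f3 : (Function.support (fun d => φ d + φ (rotDart d))).Finite :=
    (hf.union f1).subset (Function.support_add _ _)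
  have h3 : ∑ᶠ d, (φ d + φ (rotDart d) + φ (rotDart (rotDart d))) = 0 := by
    simp only [h, finsum_zero]
  rw [finsum_add_distrib f3 f2, finsum_add_distrib hf f1, h1, h2, zmod2_add_self, zero_add] at h3
  exact h3

section
variable {V : Type} [Fintype V] [DecidableEq V] {G : SimpleGraph V} [DecidableRel G.Adj] {v : V}

set_option maxHeartbeats 1000000 in
theorem LatModel.euler (hconn : G.Connected) (M : LatModel G v) (hn : 3 ≤ Fintype.card V)
    (htf : ∀ a b c, G.Adj a b → G.Adj b c → ¬ G.Adj c a) :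
    Fintype.card G.edgeSet + 4 ≤ 2 * Fintype.card V := by
  classical
  have hl : ∀ ε : G.edgeSet, ∃ d : (ℤ × ℤ) × (ℤ × ℤ), TriLat.Adj d.1 d.2 ∧
      s(M.π d.1, M.π d.2) = ε := by
    rintro ⟨ε, hε⟩
    induction ε using Sym2.ind with
    | _ a b =>
      obtain ⟨s, t, h1, rfl, rfl⟩ := M.lift a b hε
      exact ⟨(s, t), h1, rfl⟩
  choose d hd hdε using hl
  have hdne : ∀ ε, M.π (d ε).1 ≠ M.π (d ε).2 := by
    intro ε h
    have h2 := ε.2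
    rw [← hdε ε, h] at h2
    exact G.loopless.irrefl _ h2
  -- the walls
  let K : ℤ × ℤ → ℤ × ℤ → Prop := fun s t => M.π s = M.π t ∨ ∃ ε, d ε = (s, t) ∨ d ε = (t, s)
  let R : ℤ × ℤ → ℤ × ℤ → Prop := fun τ τ' => ∃ s t, TriLat.Adj s t ∧ ¬ K s t ∧
    τ = leftTri s t ∧ τ' = leftTri t s
  let Φ := Quot R
  let F1 : G.edgeSet → Φ := fun ε => Quot.mk R (leftTri (d ε).1 (d ε).2)
  let F2 : G.edgeSet → Φ := fun ε => Quot.mk R (leftTri (d ε).2 (d ε).1)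
  apply euler_abs G hconn hn htf F1 F2
  · -- kernel
    intro α hα
    let c : V → V → ZMod 2 := fun a b => if h : G.Adj a b then α ⟨s(a, b), h⟩ else 0
    -- lifting of walks
    have hlift : ∀ {a b : V} (p : G.Walk a b) (g x : ℤ × ℤ), M.π g = a → M.π x = b →
        ∃ Q : TriLat.Walk g x, (∀ ε, wsum (ed (d ε).1 (d ε).2) Q =
          wsum (fun a b => if s(a, b) = (ε : Sym2 V) then 1 else 0) p) ∧
          ∀ s t, TriLat.Adj s t → ¬ K s t → wsum (ed s t) Q = 0 := by
      have hflat : ∀ g x, M.π g = M.π x → ∃ Q : TriLat.Walk g x, 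
          ∀ s t, M.π s ≠ M.π t → wsum (ed s t) Q = 0 := by
        intro g x h
        obtain ⟨Q, hQ⟩ := M.conn g x h
        refine ⟨Q, fun s t hst => wsum_ed_eq_zero Q ?_⟩
        by_contra hcon
        push Not at hcon
        exact hst ((hQ s hcon.1).trans (hQ t hcon.2).symm)
      intro a b p
      induction p with
      | nil =>
        intro g x hg hx
        obtain ⟨Q, hQ⟩ := hflat g x (hg.trans hx.symm)
        refine ⟨Q, fun ε => ?_, fun s t _ hK => hQ s t (fun h => hK (Or.inl h))⟩
        rw [hQ _ _ (hdne ε)]; rfl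
      | cons hab p ih =>
        rename_i a b e
        intro g x hg hx
        let ε0 : G.edgeSet := ⟨s(a, b), hab⟩
        -- an oriented lift
        obtain ⟨s0, t0, hst, hs0, ht0, hor⟩ : ∃ s0 t0, TriLat.Adj s0 t0 ∧ M.π s0 = a ∧ M.π t0 = b ∧
            (d ε0 = (s0, t0) ∨ d ε0 = (t0, s0)) := by
          have h1 := hdε ε0
          simp only [ε0, Sym2.eq_iff] at h1
          rcases h1 with ⟨h1, h2⟩ | ⟨h1, h2⟩
          · exact ⟨_, _, hd _, h1, h2, Or.inl rfl⟩
          · exact ⟨_, _, (hd _).symm, h2, h1, Or.inr rfl⟩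
        obtain ⟨Q1, hQ1⟩ := hflat g s0 (hg.trans hs0.symm)
        obtain ⟨Q2, hQ2, hQ2'⟩ := ih t0 x ht0 hx
        refine ⟨Q1.append (SimpleGraph.Walk.cons hst Q2), ?_, ?_⟩
        · intro ε
          rw [wsum_append, hQ1 _ _ (hdne ε), zero_add]
          simp only [wsum]
          rw [hQ2 ε]
          congr 1
          unfold ed
          congr 1
          apply propext
          constructor
          · rintro (⟨h1, h2⟩ | ⟨h1, h2⟩)
            · rw [← hdε ε, ← h1, ← h2, hs0, ht0]
            · rw [← hdε ε, ← h1, ← h2, hs0, ht0, Sym2.eq_swap]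
          · intro h
            have : ε = ε0 := Subtype.ext h.symm
            rw [this]
            rcases hor with h | h <;> rw [h] <;> simp
        · intro s t h1 h2
          rw [wsum_append, hQ1 _ _ (fun h => h2 (Or.inl h)), zero_add]
          simp only [wsum]
          rw [hQ2' s t h1 h2, add_zero]
          unfold ed
          rw [if_neg]
          rintro (⟨rfl, rfl⟩ | ⟨rfl, rfl⟩)
          · exact h2 (Or.inr ⟨ε0, hor⟩)
          · exact h2 (Or.inr ⟨ε0, hor.symm⟩)
    have hclosed : ∀ {a : V} (p : G.Walk a a), wsum c p = 0 := by
      intro a p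
      obtain ⟨g, hg⟩ := M.surj a
      obtain ⟨Q, hQ1, hQ2⟩ := hlift p g g hg hg
      let h : Φ → ZMod 2 := Quot.lift (fun τ => wsum (rho τ) Q) (by
        rintro τ τ' ⟨s, t, h1, h2, rfl, rfl⟩
        have := wind_share h1 Q
        rw [hQ2 s t h1 h2] at this
        exact zmod2_eq_of_add this)
      have e1 : wsum c p = ∑ ε, α ε * wsum (fun a b => if s(a, b) = (ε : Sym2 V) then 1 else 0) p := by
        rw [← wsum_sum]
        apply wsum_congr
        intro a b hab _ _
        simp only [c]
        rw [dif_pos hab, Finset.sum_eq_single ⟨s(a, b), hab⟩]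
        · simp
        · intro ε _ hne
          rw [if_neg, mul_zero]
          intro h; exact hne (Subtype.ext h.symm)
        · simp
      have e2 : ∀ ε : G.edgeSet, wsum (fun a b => if s(a, b) = (ε : Sym2 V) then 1 else 0) p =
          h (F1 ε) + h (F2 ε) := by
        intro ε
        rw [← hQ1, ← wind_share (hd ε) Q]
      rw [e1]
      simp only [e2]
      let D : Finset Φ := Finset.univ.image F1 ∪ Finset.univ.image F2
      have e3 : ∀ ε, h (F1 ε) + h (F2 ε) = ∑ f ∈ D, h f * ((if F1 ε = f then 1 else 0) +
          (if F2 ε = f then 1 else 0)) := by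
        intro ε
        simp only [mul_add, Finset.sum_add_distrib, mul_ite, mul_one, mul_zero, Finset.sum_ite_eq]
        rw [if_pos (by simp [D]), if_pos (by simp [D])]
      simp only [e3, Finset.mul_sum]
      rw [Finset.sum_comm]
      apply Finset.sum_eq_zero
      intro f _
      have := congrArg (fun z => h f * z) (hα f)
      simp only [Finset.mul_sum, mul_zero] at this
      refine Eq.trans ?_ this
      apply Finset.sum_congr rfl
      intro ε _
      ring
    have hcs : ∀ a b, c a b = c b a := by
      intro a b
      simp only [c]
      by_cases h : G.Adj a b
      · rw [dif_pos h, dif_pos h.symm]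
        congr 2
        exact Sym2.eq_swap
      · rw [dif_neg h, dif_neg (fun h' => h h'.symm)]
    have W : ∀ a, Nonempty (G.Walk v a) := fun a => hconn.preconnected v a
    refine ⟨fun a => wsum c (W a).some, fun a b h => ?_⟩
    have := hclosed (((W a).some.append (SimpleGraph.Walk.cons h (W b).some.reverse)))
    rw [wsum_append] at this
    simp only [wsum] at this
    rw [wsum_reverse c hcs] at this
    have e : c a b = α ⟨s(a, b), h⟩ := dif_pos h
    rw [e] at this
    linear_combination this - zmod2_add_self (wsum c (W a).some) - zmod2_add_self (wsum c (W b).some)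
  · intro f w
    let u : ℤ × ℤ → ZMod 2 := fun g => if M.π g = w then 1 else 0
    let φ : (ℤ × ℤ) × (ℤ × ℤ) → ZMod 2 := fun e =>
      if TriLat.Adj e.1 e.2 ∧ Quot.mk R (leftTri e.1 e.2) = f then u e.1 + u e.2 else 0
    obtain ⟨m, hm⟩ := M.fin
    have hfin : (Function.support φ).Finite := by
      let I := Set.Icc (-(m + 1)) (m + 1)
      have hI : I.Finite := Set.finite_Icc _ _
      refine (((hI.prod hI).prod (hI.prod hI))).subset ?_
      rintro ⟨⟨a, b⟩, ⟨a', b'⟩⟩ h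
      rw [Function.mem_support] at h
      simp only [φ] at h
      split_ifs at h with h1
      · obtain ⟨h1, -⟩ := h1
        rw [lat_adj] at h1
        have h2 : ¬ (M.π (a, b) = v ∧ M.π (a', b') = v) := by
          rintro ⟨h3, h4⟩
          apply h
          simp only [u, h3, h4]
          exact zmod2_add_self _
        have h3 : ¬ ((m < |a| ∨ m < |b|) ∧ (m < |a'| ∨ m < |b'|)) :=
          fun h => h2 ⟨hm _ h.1, hm _ h.2⟩
        simp only [Set.mem_prod, I, Set.mem_Icc]
        simp only [lt_abs] at h3
        simp only at h1
        omega
      · exact absurd rfl h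
    have hS : ∑ᶠ e, φ e = 0 := by
      apply dart_sum_zero φ hfin
      rintro ⟨s, t⟩
      simp only [rotDart, Equiv.coe_fn_mk, third_cycle]
      by_cases h : TriLat.Adj s t
      · have h1 := third_adj h
        have h2 := third_adj' h
        simp only [φ, leftTri_cycle, leftTri_cycle', h, h1.symm, h2, true_and]
        split_ifs
        · linear_combination zmod2_add_self (u s) + zmod2_add_self (u t) + zmod2_add_self (u (third s t))
        · simp
      · have h2 : ¬ TriLat.Adj t (third s t) := by
          intro h2
          apply h
          have := third_adj' (third_adj' h2)
          rwa [third_cycle, third_cycle'] at this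
        have h1 : ¬ TriLat.Adj (third s t) s := by
          intro h1
          apply h
          have := third_adj' h1
          rwa [third_cycle'] at this
        simp [φ, h, h1, h2]
    let ch : (ℤ × ℤ) × (ℤ × ℤ) → Prop := fun e => ∃ ε, d ε = e ∨ d ε = e.swap
    let θ : (ℤ × ℤ) × (ℤ × ℤ) → ZMod 2 := fun e => if ch e then 0 else φ e
    let χ : (ℤ × ℤ) × (ℤ × ℤ) → ZMod 2 := fun e => if ch e then φ e else 0
    have hθf : (Function.support θ).Finite := by
      refine hfin.subset ?_
      intro e he
      simp only [Function.mem_support, θ] at he ⊢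
      split_ifs at he
      · exact absurd rfl he
      · exact he
    have hχf : (Function.support χ).Finite := by
      refine hfin.subset ?_
      intro e he
      simp only [Function.mem_support, χ] at he ⊢
      split_ifs at he
      · exact he
      · exact absurd rfl he
    have hsplit : ∑ᶠ e, φ e = ∑ᶠ e, θ e + ∑ᶠ e, χ e := by
      rw [← finsum_add_distrib hθf hχf]
      congr 1
      ext e
      simp only [θ, χ]
      split_ifs <;> simp
    have hθs : ∀ e, θ e + θ e.swap = 0 := by
      rintro ⟨s, t⟩
      have hch : ch (s, t) ↔ ch (t, s) := by
        simp only [ch, Prod.swap_prod_mk]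
        constructor <;> rintro ⟨ε, h⟩ <;> exact ⟨ε, h.symm⟩
      simp only [θ, Prod.swap_prod_mk]
      by_cases h : ch (s, t)
      · rw [if_pos h, if_pos (hch.1 h), add_zero]
      · rw [if_neg h, if_neg (fun h' => h (hch.2 h'))]
        by_cases hadj : TriLat.Adj s t
        · by_cases hK : K s t
          · have : u s = u t := by
              rcases hK with h1 | ⟨ε, h1⟩
              · simp only [u, h1]
              · exact absurd ⟨ε, h1⟩ h
            simp only [φ, this, zmod2_add_self, ite_self, add_zero]
          · have : Quot.mk R (leftTri s t) = Quot.mk R (leftTri t s) :=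
              Quot.sound ⟨s, t, hadj, hK, rfl, rfl⟩
            simp only [φ, hadj, hadj.symm, this, true_and, add_comm (u t)]
            exact zmod2_add_self _
        · have : ¬ TriLat.Adj t s := fun h => hadj h.symm
          simp [φ, hadj, this]
    have hθ0 : ∑ᶠ e, θ e = 0 := by
      rw [finsum_eq_sum_of_support_toFinset_subset θ hθf (Finset.Subset.refl _)]
      apply Finset.sum_involution (fun e _ => e.swap)
      · intro e _; exact hθs e
      · intro e he hne heq
        obtain ⟨s, t⟩ := e
        simp only [Prod.swap_prod_mk, Prod.mk.injEq] at heq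
        apply hne
        obtain ⟨rfl, -⟩ := heq
        simp [θ, φ]
      · intro e _; simp
      · intro e he
        simp only [Set.Finite.mem_toFinset, Function.mem_support] at he ⊢
        rwa [← zmod2_eq_of_add (hθs e)]
    have hdinj : Function.Injective d := by
      intro ε ε' h
      apply Subtype.ext
      rw [← hdε, ← hdε ε', h]
    have hdsw : ∀ ε ε', d ε ≠ (d ε').swap := by
      intro ε ε' h
      have : ε = ε' := by
        apply Subtype.ext
        rw [← hdε, ← hdε ε', h, Prod.fst_swap, Prod.snd_swap, Sym2.eq_swap]
      subst this
      apply hdne ε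
      have h2 : (d ε).1 = (d ε).2 := by
        conv_lhs => rw [h]
        simp
      rw [h2]
    have hχ : ∑ᶠ e, χ e = ∑ ε, χ (d ε) + ∑ ε, χ (d ε).swap := by
      rw [finsum_eq_sum_of_support_subset χ (s := Finset.univ.image d ∪ Finset.univ.image (fun ε => (d ε).swap)),
        Finset.sum_union, Finset.sum_image, Finset.sum_image]
      · intro a _ b _ h
        exact hdinj (Prod.swap_injective h)
      · intro a _ b _ h
        exact hdinj h
      · rw [Finset.disjoint_left]
        intro e he he'
        simp only [Finset.mem_image, Finset.mem_univ, true_and] at he he'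
        obtain ⟨ε, rfl⟩ := he
        obtain ⟨ε', h⟩ := he'
        exact hdsw ε ε' h.symm
      · intro e he
        simp only [Function.mem_support, χ] at he
        split_ifs at he with h
        · obtain ⟨ε, h | h⟩ := h
          · simp [← h]
          · simp only [Finset.coe_union, Set.mem_union]
            right
            rw [Finset.mem_coe, Finset.mem_image]
            exact ⟨ε, Finset.mem_univ _, by rw [h, Prod.swap_swap]⟩
        · exact absurd rfl he
    rw [hsplit, hθ0, zero_add, hχ, ← Finset.sum_add_distrib] at hS
    refine Eq.trans ?_ hS
    apply Finset.sum_congr rfl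
    intro ε _
    have h1 : ch (d ε) := ⟨ε, Or.inl rfl⟩
    have h2 : ch (d ε).swap := ⟨ε, Or.inr (by simp)⟩
    have h3 : (if w ∈ (ε : Sym2 V) then (1 : ZMod 2) else 0) = u (d ε).1 + u (d ε).2 := by
      rw [← hdε ε]
      have := hdne ε
      simp only [Sym2.mem_iff, u]
      by_cases a1 : M.π (d ε).1 = w
      · have a2 : M.π (d ε).2 ≠ w := fun h => this (a1.trans h.symm)
        simp [a1, a2]
      · by_cases a2 : M.π (d ε).2 = w
        · simp [a1, a2]
        · simp [a1, a2, Ne.symm a1, Ne.symm a2]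
    rw [h3]
    simp only [χ, h1, h2, if_true, φ, hd ε, (hd ε).symm, true_and, Prod.fst_swap, Prod.snd_swap, F1, F2]
    rw [add_comm (u (d ε).2), mul_add]
    simp only [mul_ite, mul_one, mul_zero]
end



open Finset in
theorem discharge {V : Type} [Fintype V] [DecidableEq V] (G : SimpleGraph V) [DecidableRel G.Adj]
    (s : V → ℕ) (hn : 3 ≤ Fintype.card V)
    (he : G.edgeFinset.card + 4 ≤ 2 * Fintype.card V)
    (h2 : ∀ v, G.degree v ≤ 2 → Fintype.card V ≤ s v + 1)
    (h3 : ∀ v, G.degree v ≤ 3 → Fintype.card V ≤ 3 * s v + 1)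
    (h4 : ∀ v, G.degree v = 4 → Fintype.card V ≤ 6 * s v + 5 ∨
      ∃ a c, a ≠ c ∧ G.Adj v a ∧ G.Adj v c ∧ 6 ≤ G.degree a ∧ 6 ≤ G.degree c) :
    (Fintype.card V : ℝ) ^ 2 < 9 * ∑ v, (s v : ℝ) := by
  set n : ℝ := (Fintype.card V : ℝ) with hnd
  have hn3 : (3 : ℝ) ≤ n := by rw [hnd]; exact_mod_cast hn
  let T : V → V → ℝ := fun x y => if G.Adj x y ∧ 6 ≤ G.degree x ∧ G.degree y = 4 then n / 2 else 0
  have hT0 : ∀ x y, 0 ≤ T x y := by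
    intro x y; simp only [T]; split_ifs <;> positivity
  have key : ∀ v, ∑ y, T v y - ∑ y, T y v ≤ 9 * (s v : ℝ) + 9 + (2 * (G.degree v : ℝ) - 9) * n := by
    intro v
    have hin : 0 ≤ ∑ y, T y v := sum_nonneg (fun y _ => hT0 y v)
    have hout : G.degree v < 6 → ∑ y, T v y = 0 := by
      intro h
      apply sum_eq_zero
      intro y _
      simp only [T]
      rw [if_neg]
      rintro ⟨-, h', -⟩
      omega
    have hs0 : (0 : ℝ) ≤ s v := by positivity
    rcases lt_or_ge (G.degree v) 6 with h | h
    · rw [hout h]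
      have hd : G.degree v ≤ 2 ∨ G.degree v = 3 ∨ G.degree v = 4 ∨ G.degree v = 5 := by omega
      rcases hd with hd | hd | hd | hd
      · have a : n ≤ s v + 1 := by rw [hnd]; exact_mod_cast h2 v hd
        have : 0 ≤ (G.degree v : ℝ) * n := by positivity
        linarith
      · have a : n ≤ 3 * s v + 1 := by rw [hnd]; exact_mod_cast h3 v (by omega)
        rw [hd]; push_cast; linarith
      · rcases h4 v hd with a | ⟨a, c, hac, ha, hc, ha6, hc6⟩
        · have a : n ≤ 6 * s v + 5 := by rw [hnd]; exact_mod_cast a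
          rw [hd]; push_cast; linarith
        · have : n ≤ ∑ y, T y v := by
            have h1 : ∑ y ∈ ({a, c} : Finset V), T y v ≤ ∑ y, T y v :=
              sum_le_sum_of_subset_of_nonneg (subset_univ _) (fun y _ _ => hT0 y v)
            rw [sum_pair hac] at h1
            have e1 : T a v = n / 2 := if_pos ⟨ha.symm, ha6, hd⟩
            have e2 : T c v = n / 2 := if_pos ⟨hc.symm, hc6, hd⟩
            rw [e1, e2] at h1
            linarith
          rw [hd]; push_cast; linarith
      · rw [hd]; push_cast; linarith
    · have h1 : ∑ y, T v y ≤ (G.degree v : ℝ) * (n / 2) := by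
        calc ∑ y, T v y ≤ ∑ y, (if G.Adj v y then n / 2 else 0) := by
              apply sum_le_sum
              intro y _
              simp only [T]
              split_ifs with h1 h2 h2
              · exact le_rfl
              · exact absurd h1.1 h2
              · positivity
              · exact le_rfl
          _ = _ := by
              rw [← sum_filter, sum_const, ← G.card_neighborFinset_eq_degree v, nsmul_eq_mul]
              congr 3
              ext y; simp
      have h6 : (6 : ℝ) ≤ G.degree v := by exact_mod_cast h
      nlinarith
  have hsum := sum_le_sum (fun v (_ : v ∈ univ) => key v)
  rw [sum_sub_distrib, sum_comm, sub_self, sum_add_distrib, sum_add_distrib, ← mul_sum, ← sum_mul,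
    sum_sub_distrib, ← mul_sum] at hsum
  have hdeg : ∑ v, (G.degree v : ℝ) = 2 * (G.edgeFinset.card : ℝ) := by
    exact_mod_cast G.sum_degrees_eq_twice_card_edges
  have he' : (G.edgeFinset.card : ℝ) + 4 ≤ 2 * n := by rw [hnd]; exact_mod_cast he
  rw [hdeg] at hsum
  simp only [sum_const, card_univ, nsmul_eq_mul, ← hnd] at hsum
  nlinarith

theorem final_of_model {V : Type} [Fintype V] (G : SimpleGraph V)
    (hconn : G.Connected) (hM : ∀ v, Nonempty (LatModel G v))
    (hn : 2 ≤ Fintype.card V)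
    (htriangle : ∀ (v : V) (c : G.Walk v v), c.IsCycle → c.length ≠ 3) :
    survivingRate G (fun _ => 2) > 1 / 9 := by
  classical
  have htf : ∀ a b c, G.Adj a b → G.Adj b c → ¬ G.Adj c a := by
    intro a b c h1 h2 h3
    refine htriangle a (SimpleGraph.Walk.cons h1 (SimpleGraph.Walk.cons h2
      (SimpleGraph.Walk.cons h3 SimpleGraph.Walk.nil))) ?_ (by simp)
    have := h1.ne
    have := h2.ne
    have := h3.ne
    rw [SimpleGraph.Walk.cons_isCycle_iff]
    simp [SimpleGraph.Walk.cons_isPath_iff, h1.ne', h2.ne, h3.ne, h1.ne, h3.ne']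
  have h2 : ∀ v, G.degree v ≤ 2 → Fintype.card V ≤ sn G (fun _ => 2) v + 1 := by
    intro v hd
    have := save_F1 G hconn v ∅ ∅ (Finset.univ.erase v) (by simp) (by simp)
      (by intro y z _ _; by_cases h : y = v <;> simp [h]) (by simp) (G.neighborFinset v)
      (by rwa [SimpleGraph.card_neighborFinset_eq_degree]) (by intro w _ h; simpa using h)
    simp only [Finset.union_empty, Finset.empty_union, Finset.erase_idem] at this
    rw [Finset.card_erase_of_mem (Finset.mem_univ v), Finset.card_univ] at this
    omega
  have hnpos : (0 : ℝ) < (Fintype.card V : ℝ) ^ 2 := by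
    have : (0 : ℝ) < Fintype.card V := by exact_mod_cast (by omega : 0 < Fintype.card V)
    positivity
  unfold survivingRate
  rw [gt_iff_lt, lt_div_iff₀ hnpos]
  suffices h : (Fintype.card V : ℝ) ^ 2 < 9 * ∑ v, (sn G (fun _ => 2) v : ℝ) by linarith
  rcases Nat.lt_or_ge 2 (Fintype.card V) with h | h
  · apply discharge G (fun v => sn G (fun _ => 2) v) h
    · haveI := hconn.nonempty
      have := (hM (Classical.arbitrary V)).some.euler hconn h htf
      rw [SimpleGraph.edgeFinset_card]
      exact this
    · exact h2
    · intro v hd; exact (hM v).some.deg3 hconn hd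
    · intro v hd; exact (hM v).some.deg4 hconn hd
  · have hc : Fintype.card V = 2 := le_antisymm h hn
    have : ∀ v, (1 : ℝ) ≤ (sn G (fun _ => 2) v : ℝ) := by
      intro v
      have := h2 v (by have := G.degree_lt_card_verts v; omega)
      exact_mod_cast (by omega : 1 ≤ sn G (fun _ => 2) v)
    have h5 := Finset.sum_le_sum (fun v (_ : v ∈ Finset.univ) => this v)
    simp only [Finset.sum_const, Finset.card_univ, hc, nsmul_eq_mul] at h5
    rw [hc]
    push_cast at h5 ⊢
    linarith



theorem voronoi {P V : Type} [Countable P] (H : SimpleGraph P) (A : Set P) (L : P → V) :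
    ∃ L' : P → V, (∀ y ∈ A, L' y = L y) ∧ ∀ x, (∃ y ∈ A, H.Reachable x y) →
      ∃ y ∈ A, ∃ w : H.Walk x y, ∀ z ∈ w.support, L' z = L y := by
  classical
  obtain ⟨enc, henc⟩ := Countable.exists_injective_nat P
  let key : P → P → ℕ ×ₗ ℕ := fun x y => toLex (H.dist x y, enc y)
  have hmin : ∀ x, (∃ y ∈ A, H.Reachable x y) → ∃ y, (y ∈ A ∧ H.Reachable x y) ∧
      ∀ y', (y' ∈ A ∧ H.Reachable x y') → key x y ≤ key x y' := by
    rintro x ⟨y, hy⟩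
    obtain ⟨y0, h0, h1⟩ := (InvImage.wf (key x) (wellFounded_lt (α := ℕ ×ₗ ℕ))).has_min
      {y | y ∈ A ∧ H.Reachable x y} ⟨y, hy⟩
    exact ⟨y0, h0, fun y' hy' => not_lt.1 (h1 y' hy')⟩
  have hmin' : ∀ x, ∃ y, (∃ y ∈ A, H.Reachable x y) → ((y ∈ A ∧ H.Reachable x y) ∧
      ∀ y', (y' ∈ A ∧ H.Reachable x y') → key x y ≤ key x y') := by
    intro x
    by_cases h : ∃ y ∈ A, H.Reachable x y
    · obtain ⟨y, hy⟩ := hmin x h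
      exact ⟨y, fun _ => hy⟩
    · exact ⟨x, fun h' => absurd h' h⟩
  choose r hr using hmin'
  have huniq : ∀ x y, y ∈ A → H.Reachable x y → (∀ y', y' ∈ A → H.Reachable x y' → key x y ≤ key x y') →
      r x = y := by
    intro x y hy hxy h
    obtain ⟨h1, h2⟩ := hr x ⟨y, hy, hxy⟩
    have e := le_antisymm (h2 y ⟨hy, hxy⟩) (h _ h1.1 h1.2)
    simp only [key, EmbeddingLike.apply_eq_iff_eq, Prod.mk.injEq] at e
    exact henc e.2
  refine ⟨fun x => L (r x), ?_, ?_⟩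
  · intro y hy
    have : r y = y := by
      apply huniq y y hy (SimpleGraph.Reachable.refl _)
      intro y' hy' hr'
      by_cases h : y = y'
      · rw [h]
      · simp only [key, Prod.Lex.toLex_le_toLex]
        left
        rw [SimpleGraph.dist_self]
        exact hr'.pos_dist_of_ne h
    simp only [this]
  · intro x hx
    obtain ⟨⟨h1, h1'⟩, h2⟩ := hr x hx
    obtain ⟨w, hw⟩ := h1'.exists_walk_length_eq_dist
    refine ⟨r x, h1, w, ?_⟩
    intro z hz
    have hxz : H.Reachable x z := ⟨w.takeUntil z hz⟩
    have hzr : H.Reachable z (r x) := ⟨w.dropUntil z hz⟩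
    have hlen : (w.takeUntil z hz).length + (w.dropUntil z hz).length = w.length := by
      rw [← SimpleGraph.Walk.length_append, SimpleGraph.Walk.take_spec]
    have hd1 := SimpleGraph.dist_le (w.takeUntil z hz)
    have hd2 := SimpleGraph.dist_le (w.dropUntil z hz)
    have : r z = r x := by
      apply huniq z (r x) h1 hzr
      intro y' hy' hzy'
      have h3 := h2 y' ⟨hy', hxz.trans hzy'⟩
      simp only [key, Prod.Lex.toLex_le_toLex] at h3 ⊢
      have htri : H.dist x y' ≤ H.dist x z + H.dist z y' := by
        obtain ⟨p, hp⟩ := hxz.exists_walk_length_eq_dist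
        obtain ⟨q, hq⟩ := hzy'.exists_walk_length_eq_dist
        have := SimpleGraph.dist_le (p.append q)
        rw [SimpleGraph.Walk.length_append] at this
        omega
      omega
    simp only [this]

/-- Connected rectangles of lattice points. -/
theorem rect_walk (a b c d : ℤ) : ∀ (n : ℕ) (x y : ℤ × ℤ), (x.1 - y.1).natAbs + (x.2 - y.2).natAbs = n →
    (a ≤ x.1 ∧ x.1 ≤ b ∧ c ≤ x.2 ∧ x.2 ≤ d) → (a ≤ y.1 ∧ y.1 ≤ b ∧ c ≤ y.2 ∧ y.2 ≤ d) →
    ∃ w : TriLat.Walk x y, ∀ z ∈ w.support, a ≤ z.1 ∧ z.1 ≤ b ∧ c ≤ z.2 ∧ z.2 ≤ d := by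
  intro n
  induction n with
  | zero =>
    rintro ⟨x1, x2⟩ ⟨y1, y2⟩ h hx hy
    have e1 : x1 = y1 := by simp only at h; omega
    have e2 : x2 = y2 := by simp only at h; omega
    subst e1 e2
    exact ⟨SimpleGraph.Walk.nil, by simpa using hx⟩
  | succ n ih =>
    rintro ⟨x1, x2⟩ ⟨y1, y2⟩ h hx hy
    simp only at h hx hy
    obtain ⟨x', hadj, hx', hlen⟩ : ∃ x' : ℤ × ℤ, TriLat.Adj (x1, x2) x' ∧
        (a ≤ x'.1 ∧ x'.1 ≤ b ∧ c ≤ x'.2 ∧ x'.2 ≤ d) ∧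
        (x'.1 - y1).natAbs + (x'.2 - y2).natAbs = n := by
      by_cases h1 : x1 < y1
      · exact ⟨(x1 + 1, x2), by rw [lat_adj]; simp, by simp only; omega, by simp only; omega⟩
      · by_cases h2 : y1 < x1
        · exact ⟨(x1 - 1, x2), by rw [lat_adj]; simp, by simp only; omega, by simp only; omega⟩
        · by_cases h3 : x2 < y2
          · exact ⟨(x1, x2 + 1), by rw [lat_adj]; simp, by simp only; omega, by simp only; omega⟩
          · exact ⟨(x1, x2 - 1), by rw [lat_adj]; simp, by simp only; omega, by simp only; omega⟩
    obtain ⟨w, hw⟩ := ih x' (y1, y2) hlen hx' hy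
    refine ⟨SimpleGraph.Walk.cons hadj w, ?_⟩
    intro z hz
    rw [SimpleGraph.Walk.support_cons, List.mem_cons] at hz
    rcases hz with rfl | hz
    · exact hx
    · exact hw z hz

theorem rect_conn (a b c d : ℤ) (x y : ℤ × ℤ) 
    (hx : a ≤ x.1 ∧ x.1 ≤ b ∧ c ≤ x.2 ∧ x.2 ≤ d) (hy : a ≤ y.1 ∧ y.1 ≤ b ∧ c ≤ y.2 ∧ y.2 ≤ d) :
    ∃ w : TriLat.Walk x y, ∀ z ∈ w.support, a ≤ z.1 ∧ z.1 ≤ b ∧ c ≤ z.2 ∧ z.2 ≤ d :=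
  rect_walk a b c d _ x y rfl hx hy

/-- Lattice connectivity of a set. -/
def LC (S : Set (ℤ × ℤ)) : Prop := ∀ x ∈ S, ∀ y ∈ S, ∃ w : TriLat.Walk x y, ∀ z ∈ w.support, z ∈ S

theorem join_walk {S : Set (ℤ × ℤ)} {x y z : ℤ × ℤ}
    (h1 : ∃ w : TriLat.Walk x y, ∀ z ∈ w.support, z ∈ S)
    (h2 : ∃ w : TriLat.Walk y z, ∀ z ∈ w.support, z ∈ S) :
    ∃ w : TriLat.Walk x z, ∀ z ∈ w.support, z ∈ S := by
  obtain ⟨w1, h1⟩ := h1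
  obtain ⟨w2, h2⟩ := h2
  refine ⟨w1.append w2, ?_⟩
  intro u hu
  rw [SimpleGraph.Walk.mem_support_append_iff] at hu
  exact hu.elim (h1 u) (h2 u)

theorem rev_walk {S : Set (ℤ × ℤ)} {x y : ℤ × ℤ}
    (h1 : ∃ w : TriLat.Walk x y, ∀ z ∈ w.support, z ∈ S) :
    ∃ w : TriLat.Walk y x, ∀ z ∈ w.support, z ∈ S := by
  obtain ⟨w1, h1⟩ := h1
  exact ⟨w1.reverse, by simpa using h1⟩

/-- The complement of a box is connected. -/
theorem outside_conn (m : ℤ) (hm : 0 ≤ m) : LC {x | m < |x.1| ∨ m < |x.2|} := by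
  have key : ∀ x : ℤ × ℤ, (m < |x.1| ∨ m < |x.2|) →
      ∃ w : TriLat.Walk x (m + 1, m + 1), ∀ z ∈ w.support, z ∈ {x : ℤ × ℤ | m < |x.1| ∨ m < |x.2|} := by
    have mono : ∀ {x y : ℤ × ℤ} (a b c d : ℤ), (∀ z : ℤ × ℤ, (a ≤ z.1 ∧ z.1 ≤ b ∧ c ≤ z.2 ∧ z.2 ≤ d) →
        (m < |z.1| ∨ m < |z.2|)) → (a ≤ x.1 ∧ x.1 ≤ b ∧ c ≤ x.2 ∧ x.2 ≤ d) →
        (a ≤ y.1 ∧ y.1 ≤ b ∧ c ≤ y.2 ∧ y.2 ≤ d) →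
        ∃ w : TriLat.Walk x y, ∀ z ∈ w.support, z ∈ {x : ℤ × ℤ | m < |x.1| ∨ m < |x.2|} := by
      intro x y a b c d h hx hy
      obtain ⟨w, hw⟩ := rect_conn a b c d x y hx hy
      exact ⟨w, fun z hz => h z (hw z hz)⟩
    have right : ∀ x : ℤ × ℤ, m < x.1 → ∃ w : TriLat.Walk x (m + 1, m + 1), ∀ z ∈ w.support, z ∈ {x : ℤ × ℤ | m < |x.1| ∨ m < |x.2|} := by
      intro x hx
      apply mono (m + 1) (max x.1 (m + 1)) (min x.2 (m + 1)) (max x.2 (m + 1))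
      · intro z hz
        simp only [lt_abs]; omega
      · omega
      · simp only; omega
    have top : ∀ x : ℤ × ℤ, m < x.2 → ∃ w : TriLat.Walk x (m + 1, m + 1), ∀ z ∈ w.support, z ∈ {x : ℤ × ℤ | m < |x.1| ∨ m < |x.2|} := by
      intro x hx
      apply mono (min x.1 (m + 1)) (max x.1 (m + 1)) (m + 1) (max x.2 (m + 1)) 
      · intro z hz
        simp only [lt_abs]; omega
      · omega
      · simp only; omega
    intro x hx
    simp only [lt_abs] at hx
    rcases hx with (h | h) | (h | h)
    · exact right x h
    · refine join_walk ?_ (top (x.1, m + 1) (by simp only; omega))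
      apply mono x.1 x.1 (min x.2 (m + 1)) (max x.2 (m + 1))
      · intro z hz
        simp only [lt_abs]; omega
      · omega
      · simp only; omega
    · exact top x h
    · refine join_walk ?_ (right (m + 1, x.2) (by simp only; omega))
      apply mono (min x.1 (m + 1)) (max x.1 (m + 1)) x.2 x.2
      · intro z hz
        simp only [lt_abs]; omega
      · omega
      · simp only; omega
  intro x hx y hy
  exact join_walk (key x hx) (rev_walk (key y hy))



theorem reach_of_walk (H : SimpleGraph (ℤ × ℤ)) (S : Set (ℤ × ℤ))
    (h : ∀ x ∈ S, ∀ y ∈ S, TriLat.Adj x y → H.Adj x y) {x y : ℤ × ℤ} (w : TriLat.Walk x y)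
    (hw : ∀ z ∈ w.support, z ∈ S) : H.Reachable x y := by
  induction w with
  | nil => exact SimpleGraph.Reachable.refl _
  | cons hadj w ih =>
    have h1 := h _ (hw _ (by simp)) _ (hw _ (by simp)) hadj
    exact h1.reachable.trans (ih (fun z hz => hw z (by simp [hz])))

theorem walk_inv (H : SimpleGraph (ℤ × ℤ)) (Q : ℤ × ℤ → Prop)
    (h : ∀ x y, H.Adj x y → Q x → Q y) {x y : ℤ × ℤ} (w : H.Walk x y) (hx : Q x) :
    ∀ z ∈ w.support, Q z := by
  induction w with
  | nil => simpa using hx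
  | cons hadj w ih =>
    intro z hz
    rw [SimpleGraph.Walk.support_cons, List.mem_cons] at hz
    rcases hz with rfl | hz
    · exact hx
    · exact ih (h _ _ hadj hx) z hz

theorem walk_to_lat {H : SimpleGraph (ℤ × ℤ)} (hle : ∀ x y, H.Adj x y → TriLat.Adj x y)
    {x y : ℤ × ℤ} (w : H.Walk x y) : ∃ w' : TriLat.Walk x y, ∀ z ∈ w'.support, z ∈ w.support := by
  induction w with
  | nil => exact ⟨SimpleGraph.Walk.nil, by simp⟩
  | cons hadj w ih =>
    obtain ⟨w', hw'⟩ := ih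
    refine ⟨SimpleGraph.Walk.cons (hle _ _ hadj) w', ?_⟩
    intro z hz
    simp only [SimpleGraph.Walk.support_cons, List.mem_cons] at hz ⊢
    exact hz.imp id (hw' z)

theorem model_of_discrete {V : Type} (G : SimpleGraph V) (v : V) (m : ℤ) (hm : 0 ≤ m)
    (hex : ∃ w, w ≠ v) (F : V → Set (ℤ × ℤ)) (N : V → V → Set (ℤ × ℤ))
    (hFbox : ∀ w, w ≠ v → ∀ x ∈ F w, |x.1| ≤ m ∧ |x.2| ≤ m)
    (hFne : ∀ w, w ≠ v → (F w).Nonempty) (hFc : ∀ w, w ≠ v → LC (F w))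
    (hFd : ∀ w w', w ≠ v → w' ≠ v → w ≠ w' → ∀ x ∈ F w, x ∉ F w')
    (hFv : ∀ w, G.Adj w v → ∃ x ∈ F w, |x.1| = m ∨ |x.2| = m)
    (hNbox : ∀ a b, G.Adj a b → a ≠ v → b ≠ v → ∀ x ∈ N a b, |x.1| ≤ m ∧ |x.2| ≤ m)
    (hNc : ∀ a b, G.Adj a b → a ≠ v → b ≠ v → LC (N a b))
    (hNa : ∀ a b, G.Adj a b → a ≠ v → b ≠ v → (N a b ∩ F a).Nonempty)
    (hNb : ∀ a b, G.Adj a b → a ≠ v → b ≠ v → (N a b ∩ F b).Nonempty)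
    (hNF : ∀ a b, G.Adj a b → a ≠ v → b ≠ v → ∀ x, x ≠ v → x ≠ a → x ≠ b → ∀ z ∈ N a b, z ∉ F x)
    (hNN : ∀ a b, G.Adj a b → a ≠ v → b ≠ v → ∀ c d, G.Adj c d → c ≠ v → d ≠ v →
      s(a, b) ≠ s(c, d) → ∀ z ∈ N a b, z ∉ N c d) : Nonempty (LatModel G v) := by
  classical
  let E : V → V → Prop := fun a b => G.Adj a b ∧ a ≠ v ∧ b ≠ v
  let box : ℤ × ℤ → Prop := fun x => |x.1| ≤ m ∧ |x.2| ≤ m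
  let H1 : SimpleGraph (ℤ × ℤ) :=
    { Adj := fun x y => TriLat.Adj x y ∧ ∃ a b, E a b ∧ x ∈ N a b ∧ y ∈ N a b
      symm := ⟨by
        rintro x y ⟨h, a, b, h1, h2, h3⟩
        exact ⟨h.symm, a, b, h1, h3, h2⟩⟩
      loopless := ⟨fun x h => TriLat.loopless.irrefl x h.1⟩ }
  let H2 : SimpleGraph (ℤ × ℤ) :=
    { Adj := fun x y => TriLat.Adj x y ∧ box x ∧ box y
      symm := ⟨by
        rintro x y ⟨h, h1, h2⟩
        exact ⟨h.symm, h2, h1⟩⟩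
      loopless := ⟨fun x h => TriLat.loopless.irrefl x h.1⟩ }
  let A1 : Set (ℤ × ℤ) := {x | ∃ w, w ≠ v ∧ x ∈ F w}
  have hL0 : ∀ x, ∃ w, x ∈ A1 → (w ≠ v ∧ x ∈ F w) := by
    intro x
    by_cases h : x ∈ A1
    · obtain ⟨w, hw⟩ := h
      exact ⟨w, fun _ => hw⟩
    · exact ⟨v, fun h' => absurd h' h⟩
  choose L0 hL0 using hL0
  obtain ⟨L1, hL1, hL1'⟩ := voronoi H1 A1 L0
  let A2 : Set (ℤ × ℤ) := {x | x ∈ A1 ∨ ∃ a b, E a b ∧ x ∈ N a b}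
  obtain ⟨L2, hL2, hL2'⟩ := voronoi H2 A2 L1
  have hA2box : ∀ x ∈ A2, box x := by
    rintro x (⟨w, h1, h2⟩ | ⟨a, b, h1, h2⟩)
    · exact hFbox w h1 x h2
    · exact hNbox a b h1.1 h1.2.1 h1.2.2 x h2
  have hL0F : ∀ w, w ≠ v → ∀ x ∈ F w, L0 x = w := by
    intro w hw x hx
    obtain ⟨h1, h2⟩ := hL0 x ⟨w, hw, hx⟩
    by_contra hcon
    exact hFd (L0 x) w h1 hw hcon x h2 hx
  -- every point of `A2` walks to `A1`
  have f2 : ∀ x ∈ A2, ∃ y ∈ A1, H1.Reachable x y := by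
    rintro x (h | ⟨a, b, h1, h2⟩)
    · exact ⟨x, h, SimpleGraph.Reachable.refl _⟩
    · obtain ⟨y, hy, hy'⟩ := hNa a b h1.1 h1.2.1 h1.2.2
      obtain ⟨w, hw⟩ := hNc a b h1.1 h1.2.1 h1.2.2 x h2 y hy
      exact ⟨y, ⟨a, h1.2.1, hy'⟩, reach_of_walk H1 (N a b)
        (fun p hp q hq hpq => ⟨hpq, a, b, h1, hp, hq⟩) w hw⟩
  have f3 : ∀ x ∈ A2, ∃ y ∈ A1, ∃ w : TriLat.Walk x y, ∀ z ∈ w.support, z ∈ A2 ∧ L1 z = L0 y := by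
    intro x hx
    obtain ⟨y, hy, w, hw⟩ := hL1' x (f2 x hx)
    have hin := walk_inv H1 (fun z => z ∈ A2)
      (by rintro p q ⟨-, a, b, h1, -, h3⟩ _; exact Or.inr ⟨a, b, h1, h3⟩) w hx
    obtain ⟨w', hw'⟩ := walk_to_lat (H := H1) (fun p q h => h.1) w
    exact ⟨y, hy, w', fun z hz => ⟨hin z (hw' z hz), hw z (hw' z hz)⟩⟩
  have f7 : ∀ a b, E a b → ∀ x ∈ N a b, L1 x = a ∨ L1 x = b := by
    intro a b hE x hx
    obtain ⟨y, hy, w, hw⟩ := hL1' x (f2 x (Or.inr ⟨a, b, hE, hx⟩))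
    have hin := walk_inv H1 (fun z => ∃ c d, E c d ∧ s(a, b) = s(c, d) ∧ z ∈ N c d)
      (by
        rintro p q ⟨-, a', b', h1, h2, h3⟩ ⟨c, d, e1, e2, e3⟩
        refine ⟨a', b', h1, ?_, h3⟩
        by_contra hcon
        rw [e2] at hcon
        exact hNN c d e1.1 e1.2.1 e1.2.2 a' b' h1.1 h1.2.1 h1.2.2 hcon p e3 h2) w
      ⟨a, b, hE, rfl, hx⟩ y (SimpleGraph.Walk.end_mem_support _)
    obtain ⟨c, d, e1, e2, e3⟩ := hin
    rw [hw x (SimpleGraph.Walk.start_mem_support _)]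
    obtain ⟨h1, h2⟩ := hL0 y hy
    by_contra hcon
    push Not at hcon
    refine hNF c d e1.1 e1.2.1 e1.2.2 (L0 y) h1 ?_ ?_ y e3 h2
    · rintro h
      rw [Sym2.eq_iff] at e2
      rcases e2 with ⟨rfl, rfl⟩ | ⟨rfl, rfl⟩
      · exact hcon.1 h
      · exact hcon.2 h
    · rintro h
      rw [Sym2.eq_iff] at e2
      rcases e2 with ⟨rfl, rfl⟩ | ⟨rfl, rfl⟩
      · exact hcon.2 h
      · exact hcon.1 h
  have boxconn : ∀ x y, box x → box y → ∃ w : TriLat.Walk x y, ∀ z ∈ w.support, z ∈ {z | box z} := by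
    intro x y hx hy
    simp only [box, abs_le] at hx hy
    obtain ⟨w, hw⟩ := rect_conn (-m) m (-m) m x y (by omega) (by omega)
    refine ⟨w, fun z hz => ?_⟩
    have := hw z hz
    simp only [box, abs_le, Set.mem_setOf_eq]
    omega
  have f4 : ∀ x, box x → ∃ y ∈ A2, ∃ w : TriLat.Walk x y, ∀ z ∈ w.support, box z ∧ L2 z = L1 y := by
    intro x hx
    obtain ⟨w0, hw0⟩ := hex
    obtain ⟨y0, hy0⟩ := hFne w0 hw0
    have hy0' : y0 ∈ A2 := Or.inl ⟨w0, hw0, hy0⟩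
    obtain ⟨p, hp⟩ := boxconn x y0 hx (hA2box y0 hy0')
    obtain ⟨y, hy, w, hw⟩ := hL2' x ⟨y0, hy0', reach_of_walk H2 _
      (fun p hp q hq hpq => ⟨hpq, hp, hq⟩) p hp⟩
    have hin := walk_inv H2 box (fun p q h _ => h.2.2) w hx
    obtain ⟨w', hw'⟩ := walk_to_lat (H := H2) (fun p q h => h.1) w
    exact ⟨y, hy, w', fun z hz => ⟨hin z (hw' z hz), hw z (hw' z hz)⟩⟩
  let π : ℤ × ℤ → V := fun g => if box g then L2 g else v
  have hπA2 : ∀ x ∈ A2, π x = L1 x := by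
    intro x hx
    simp only [π]
    rw [if_pos (hA2box x hx), hL2 x hx]
  have hπF : ∀ w, w ≠ v → ∀ x ∈ F w, π x = w := by
    intro w hw x hx
    have : x ∈ A1 := ⟨w, hw, hx⟩
    rw [hπA2 x (Or.inl this), hL1 x this, hL0F w hw x hx]
  have f5 : ∀ x, box x → ∃ w, w ≠ v ∧ π x = w ∧ ∃ y ∈ F w, ∃ p : TriLat.Walk x y,
      ∀ z ∈ p.support, z ∈ {z | π z = w} := by
    intro x hx
    obtain ⟨y, hy, p, hp⟩ := f4 x hx
    obtain ⟨y', hy', q, hq⟩ := f3 y hy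
    obtain ⟨h1, h2⟩ := hL0 y' hy'
    have e1 : L1 y = L0 y' := (hq y (SimpleGraph.Walk.start_mem_support _)).2
    have hp' : ∀ z ∈ p.support, π z = L0 y' := by
      intro z hz
      obtain ⟨a1, a2⟩ := hp z hz
      simp only [π]
      rw [if_pos a1, a2, e1]
    refine ⟨L0 y', h1, hp' x (SimpleGraph.Walk.start_mem_support _), y', h2, ?_⟩
    refine join_walk ⟨p, hp'⟩ ⟨q, fun z hz => ?_⟩
    obtain ⟨a1, a2⟩ := hq z hz
    exact (hπA2 z a1).trans a2
  have hπv : ∀ x, π x = v ↔ ¬ box x := by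
    intro x
    constructor
    · intro h hb
      obtain ⟨w, h1, h2, -⟩ := f5 x hb
      exact h1 (h2 ▸ h)
    · intro h; exact if_neg h
  have hout : ∀ x : ℤ × ℤ, ¬ box x ↔ (m < |x.1| ∨ m < |x.2|) := by
    intro x
    simp only [box, not_and_or, not_le]
  have hliftv : ∀ a, G.Adj a v → ∃ s t, TriLat.Adj s t ∧ π s = a ∧ π t = v := by
    intro a ha
    obtain ⟨x, hx, hx'⟩ := hFv a ha
    have hbx := hFbox a ha.ne x hx
    have hpx := hπF a ha.ne x hx
    have : ∃ t, TriLat.Adj x t ∧ ¬ box t := by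
      rcases hx' with h | h
      · rcases abs_choice x.1 with h' | h'
        · refine ⟨(x.1 + 1, x.2), by rw [lat_adj]; simp, ?_⟩
          rw [hout]; left; simp only [lt_abs]; omega
        · refine ⟨(x.1 - 1, x.2), by rw [lat_adj]; simp, ?_⟩
          rw [hout]; left; simp only [lt_abs]; omega
      · rcases abs_choice x.2 with h' | h'
        · refine ⟨(x.1, x.2 + 1), by rw [lat_adj]; simp, ?_⟩
          rw [hout]; right; simp only [lt_abs]; omega
        · refine ⟨(x.1, x.2 - 1), by rw [lat_adj]; simp, ?_⟩
          rw [hout]; right; simp only [lt_abs]; omega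
    obtain ⟨t, ht, ht'⟩ := this
    exact ⟨x, t, ht, hpx, (hπv t).2 ht'⟩
  refine ⟨⟨π, ?_, ?_, ?_, ?_, ?_⟩⟩
  · intro g g' h
    by_cases hg : box g
    · have hg' : box g' := by
        by_contra hcon
        rw [(hπv g').2 hcon] at h
        exact (hπv g).1 h hg
      obtain ⟨w, h1, h2, y, hy, h3⟩ := f5 g hg
      obtain ⟨w', h1', h2', y', hy', h3'⟩ := f5 g' hg'
      have : w = w' := by rw [← h2, ← h2', h]
      subst this
      rw [h2]
      refine join_walk h3 (join_walk ?_ (rev_walk h3'))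
      obtain ⟨p, hp⟩ := hFc w h1 y hy y' hy'
      exact ⟨p, fun z hz => hπF w h1 z (hp z hz)⟩
    · have hgv := (hπv g).2 hg
      have hg' : ¬ box g' := (hπv g').1 (h ▸ hgv)
      obtain ⟨p, hp⟩ := outside_conn m hm g ((hout g).1 hg) g' ((hout g').1 hg')
      refine ⟨p, fun z hz => ?_⟩
      rw [hgv, hπv, hout]
      exact hp z hz
  · intro a b hab
    by_cases ha : a = v
    · subst ha
      obtain ⟨s, t, h1, h2, h3⟩ := hliftv b hab.symm
      exact ⟨t, s, h1.symm, h3, h2⟩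
    · by_cases hb : b = v
      · subst hb
        exact hliftv a hab
      · obtain ⟨x, hx, hx'⟩ := hNa a b hab ha hb
        obtain ⟨y, hy, hy'⟩ := hNb a b hab ha hb
        obtain ⟨p, hp⟩ := hNc a b hab ha hb x hx y hy
        obtain ⟨d, hd, hd1, hd2⟩ := p.exists_boundary_dart {z | π z = a} (hπF a ha x hx')
          (by rw [Set.mem_setOf_eq, hπF b hb y hy']; exact hab.ne')
        refine ⟨d.fst, d.snd, d.adj, hd1, ?_⟩
        have hz := hp d.snd (SimpleGraph.Walk.dart_snd_mem_support_of_mem_darts _ hd)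
        have hz' : d.snd ∈ A2 := Or.inr ⟨a, b, ⟨hab, ha, hb⟩, hz⟩
        have := f7 a b ⟨hab, ha, hb⟩ _ hz
        rw [← hπA2 _ hz'] at this
        exact this.resolve_left hd2
  · exact ⟨m, fun g hg => (hπv g).2 ((hout g).2 hg)⟩
  · intro g g' h h'
    have hb : box g := by
      by_contra hcon; exact h ((hπv g).2 hcon)
    have hb' : box g' := by
      by_contra hcon; exact h' ((hπv g').2 hcon)
    obtain ⟨p, hp⟩ := boxconn g g' hb hb'
    exact ⟨p, fun z hz hz' => (hπv z).1 hz' (hp z hz)⟩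
  · intro a
    by_cases ha : a = v
    · refine ⟨(m + 1, 0), ?_⟩
      rw [ha, hπv, hout]
      left; simp only [lt_abs]; omega
    · obtain ⟨x, hx⟩ := hFne a ha
      exact ⟨x, hπF a ha x hx⟩



/-- Lattice points of the box close to a scaled point. -/
def Rk (m : ℤ) (c : ℝ) (p : ℝ × ℝ) : Set (ℤ × ℤ) :=
  {x | |x.1| ≤ m ∧ |x.2| ≤ m ∧ |(x.1 : ℝ) - c * p.1| ≤ 1 ∧ |(x.2 : ℝ) - c * p.2| ≤ 1}

/-- Lattice points of the box close to a scaled set. -/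
def Nk (m : ℤ) (c : ℝ) (S : Set (ℝ × ℝ)) : Set (ℤ × ℤ) := {x | ∃ p ∈ S, x ∈ Rk m c p}

theorem rk_conn (m : ℤ) (c : ℝ) (p : ℝ × ℝ) : LC (Rk m c p) := by
  have key : ∀ (x : ℤ) (y : ℝ), (|x| ≤ m ∧ |(x : ℝ) - y| ≤ 1) ↔
      (max (-m) ⌈y - 1⌉ ≤ x ∧ x ≤ min m ⌊y + 1⌋) := by
    intro x y
    rw [abs_le, abs_le, max_le_iff, le_min_iff, Int.ceil_le, Int.le_floor]
    constructor
    · rintro ⟨⟨h1, h2⟩, h3, h4⟩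
      exact ⟨⟨h1, by linarith⟩, h2, by linarith⟩
    · rintro ⟨⟨h1, h3⟩, h2, h4⟩
      exact ⟨⟨h1, h2⟩, by linarith, by linarith⟩
  have key2 : ∀ x : ℤ × ℤ, x ∈ Rk m c p ↔
      (max (-m) ⌈c * p.1 - 1⌉ ≤ x.1 ∧ x.1 ≤ min m ⌊c * p.1 + 1⌋ ∧
      max (-m) ⌈c * p.2 - 1⌉ ≤ x.2 ∧ x.2 ≤ min m ⌊c * p.2 + 1⌋) := by
    intro x
    have h1 := key x.1 (c * p.1)
    have h2 := key x.2 (c * p.2)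
    change (_ ∧ _ ∧ _ ∧ _) ↔ _
    tauto
  intro x hx y hy
  obtain ⟨w, hw⟩ := rect_conn _ _ _ _ x y ((key2 x).1 hx) ((key2 y).1 hy)
  exact ⟨w, fun z hz => (key2 z).2 (hw z hz)⟩

theorem round_box (m : ℤ) (y : ℝ) (hy : |y| ≤ m) : |round y| ≤ m := by
  have h := abs_le.1 (abs_sub_round y)
  rw [abs_le] at hy ⊢
  have h1 : ((round y : ℤ) : ℝ) < ((m + 1 : ℤ) : ℝ) := by push_cast; linarith
  have h2 : ((-m - 1 : ℤ) : ℝ) < ((round y : ℤ) : ℝ) := by push_cast; linarith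
  have h1 := Int.cast_lt.1 h1
  have h2 := Int.cast_lt.1 h2
  omega

theorem round_mem (m : ℤ) (c : ℝ) (p q : ℝ × ℝ) (hp : |c * p.1| ≤ m ∧ |c * p.2| ≤ m)
    (h1 : |c * p.1 - c * q.1| ≤ 1 / 2) (h2 : |c * p.2 - c * q.2| ≤ 1 / 2) :
    (round (c * p.1), round (c * p.2)) ∈ Rk m c q := by
  refine ⟨round_box _ _ hp.1, round_box _ _ hp.2, ?_, ?_⟩
  · have h := abs_le.1 (abs_sub_round (c * p.1))
    rw [abs_le] at h1 ⊢
    constructor <;> simp only <;> linarith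
  · have h := abs_le.1 (abs_sub_round (c * p.2))
    rw [abs_le] at h2 ⊢
    constructor <;> simp only <;> linarith

theorem nk_mem (m : ℤ) (c : ℝ) (p : ℝ × ℝ) (hp : |c * p.1| ≤ m ∧ |c * p.2| ≤ m) :
    (round (c * p.1), round (c * p.2)) ∈ Rk m c p :=
  round_mem m c p p hp (by simp) (by simp)

theorem nk_conn (m : ℤ) (c : ℝ) (S : Set (ℝ × ℝ)) (hS : IsPreconnected S)
    (hb : ∀ p ∈ S, |c * p.1| ≤ m ∧ |c * p.2| ≤ m) : LC (Nk m c S) := by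
  let P : ℝ × ℝ → ℝ × ℝ → Prop := fun p q => ∀ x ∈ Rk m c p, ∀ y ∈ Rk m c q,
    ∃ w : TriLat.Walk x y, ∀ z ∈ w.support, z ∈ Nk m c S
  have step : ∀ p ∈ S, ∀ x ∈ Rk m c p, ∀ y ∈ Rk m c p,
      ∃ w : TriLat.Walk x y, ∀ z ∈ w.support, z ∈ Nk m c S := by
    intro p hp x hx y hy
    obtain ⟨w, hw⟩ := rk_conn m c p x hx y hy
    exact ⟨w, fun z hz => ⟨p, hp, hw z hz⟩⟩
  have main : ∀ p ∈ S, ∀ q ∈ S, P p q := by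
    intro p hp q hq
    refine hS.induction₂' P ?_ ?_ hp hq
    · intro p hp
      have c1 : Filter.Tendsto (fun q : ℝ × ℝ => |c * p.1 - c * q.1|) (nhdsWithin p S) (nhds 0) := by
        have : Continuous (fun q : ℝ × ℝ => |c * p.1 - c * q.1|) := by fun_prop
        have := this.tendsto p
        simp only [sub_self, abs_zero] at this
        exact this.mono_left nhdsWithin_le_nhds
      have c2 : Filter.Tendsto (fun q : ℝ × ℝ => |c * p.2 - c * q.2|) (nhdsWithin p S) (nhds 0) := by
        have : Continuous (fun q : ℝ × ℝ => |c * p.2 - c * q.2|) := by fun_prop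
        have := this.tendsto p
        simp only [sub_self, abs_zero] at this
        exact this.mono_left nhdsWithin_le_nhds
      have e1 := c1.eventually (gt_mem_nhds (show (0 : ℝ) < 1 / 2 by norm_num))
      have e2 := c2.eventually (gt_mem_nhds (show (0 : ℝ) < 1 / 2 by norm_num))
      filter_upwards [e1, e2, self_mem_nhdsWithin] with q h1 h2 hq
      have hpq : P p q := by
        intro x hx y hy
        have a1 := nk_mem m c p (hb p hp)
        have a2 := round_mem m c p q (hb p hp) h1.le h2.le
        exact join_walk (step p hp _ hx _ a1) (step q hq _ a2 _ hy)
      exact ⟨hpq, fun x hx y hy => rev_walk (hpq y hy x hx)⟩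
    · intro p q r hp hq hr h1 h2 x hx y hy
      have a1 := nk_mem m c q (hb q hq)
      exact join_walk (h1 x hx _ a1) (h2 _ a1 y hy)
  rintro x ⟨p, hp, hx⟩ y ⟨q, hq, hy⟩
  exact main p hp q hq x hx y hy

/-- Far apart sets (at scale `c`). -/
def FarSets (c : ℝ) (A B : Set (ℝ × ℝ)) : Prop := ∀ x ∈ A, ∀ y ∈ B, 2 < c * dist x y

theorem nk_disj {m : ℤ} {c : ℝ} (hc : 0 < c) {A B : Set (ℝ × ℝ)} (h : FarSets c A B) :
    ∀ x ∈ Nk m c A, x ∉ Nk m c B := by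
  rintro x ⟨p, hp, _, _, h1, h2⟩ ⟨q, hq, _, _, h3, h4⟩
  have := h p hp q hq
  rw [Prod.dist_eq, Real.dist_eq, Real.dist_eq] at this
  rw [abs_le] at h1 h2 h3 h4
  rcases max_choice |p.1 - q.1| |p.2 - q.2| with e | e <;> rw [e] at this
  · rcases abs_choice (p.1 - q.1) with e | e <;> rw [e] at this <;> nlinarith
  · rcases abs_choice (p.2 - q.2) with e | e <;> rw [e] at this <;> nlinarith

theorem sep_eventually (R : ℝ) (hR : 0 < R) (A B : Set (ℝ × ℝ)) (hA : IsCompact A) (hB : IsCompact B)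
    (hd : Disjoint A B) : ∀ᶠ m : ℕ in Filter.atTop, FarSets ((m : ℝ) / R) A B := by
  obtain ⟨r, hr, h⟩ := Metric.exists_pos_forall_lt_edist hA hB.isClosed hd
  have hr' : (0 : ℝ) < r := hr
  obtain ⟨k, hk⟩ := exists_nat_gt (2 * R / r)
  filter_upwards [Filter.eventually_ge_atTop k] with m hm x hx y hy
  have h1 := h x hx y hy
  have h2 : (r : ℝ) < dist x y := by
    rw [edist_nndist] at h1
    exact_mod_cast h1
  have h3 : (k : ℝ) ≤ m := by exact_mod_cast hm
  rw [div_lt_iff₀ hr'] at hk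
  rw [div_mul_eq_mul_div, lt_div_iff₀ hR]
  nlinarith

theorem model_of_cont {V : Type} [Finite V] (G : SimpleGraph V) (v : V) (hex : ∃ w, w ≠ v)
    (R : ℝ) (hR : 0 < R) (S : V → Set (ℝ × ℝ)) (J : V → V → Set (ℝ × ℝ))
    (hSk : ∀ w, w ≠ v → IsCompact (S w)) (hSc : ∀ w, w ≠ v → IsPreconnected (S w))
    (hSn : ∀ w, w ≠ v → (S w).Nonempty) (hSb : ∀ w, w ≠ v → ∀ p ∈ S w, ‖p‖ ≤ R)
    (hSd : ∀ w w', w ≠ v → w' ≠ v → w ≠ w' → Disjoint (S w) (S w'))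
    (hSv : ∀ w, G.Adj w v → ∃ p ∈ S w, ‖p‖ = R)
    (hJk : ∀ a b, G.Adj a b → a ≠ v → b ≠ v → IsCompact (J a b))
    (hJc : ∀ a b, G.Adj a b → a ≠ v → b ≠ v → IsPreconnected (J a b))
    (hJb : ∀ a b, G.Adj a b → a ≠ v → b ≠ v → ∀ p ∈ J a b, ‖p‖ ≤ R)
    (hJ1 : ∀ a b, G.Adj a b → a ≠ v → b ≠ v → (J a b ∩ S a).Nonempty)
    (hJ2 : ∀ a b, G.Adj a b → a ≠ v → b ≠ v → (J a b ∩ S b).Nonempty)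
    (hJS : ∀ a b, G.Adj a b → a ≠ v → b ≠ v → ∀ x, x ≠ v → x ≠ a → x ≠ b → Disjoint (J a b) (S x))
    (hJJ : ∀ a b, G.Adj a b → a ≠ v → b ≠ v → ∀ c d, G.Adj c d → c ≠ v → d ≠ v →
      s(a, b) ≠ s(c, d) → Disjoint (J a b) (J c d)) : Nonempty (LatModel G v) := by
  have e1 : ∀ᶠ m : ℕ in Filter.atTop, ∀ w w', w ≠ v → w' ≠ v → w ≠ w' →
      FarSets ((m : ℝ) / R) (S w) (S w') := by
    simp only [Filter.eventually_all]
    intro w w' h1 h2 h3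
    exact sep_eventually R hR _ _ (hSk w h1) (hSk w' h2) (hSd w w' h1 h2 h3)
  have e2 : ∀ᶠ m : ℕ in Filter.atTop, ∀ a b, G.Adj a b → a ≠ v → b ≠ v →
      ∀ x, x ≠ v → x ≠ a → x ≠ b → FarSets ((m : ℝ) / R) (J a b) (S x) := by
    simp only [Filter.eventually_all]
    intro a b h h1 h2 x h3 h4 h5
    exact sep_eventually R hR _ _ (hJk a b h h1 h2) (hSk x h3) (hJS a b h h1 h2 x h3 h4 h5)
  have e3 : ∀ᶠ m : ℕ in Filter.atTop, ∀ a b, G.Adj a b → a ≠ v → b ≠ v →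
      ∀ c d, G.Adj c d → c ≠ v → d ≠ v → s(a, b) ≠ s(c, d) →
      FarSets ((m : ℝ) / R) (J a b) (J c d) := by
    simp only [Filter.eventually_all]
    intro a b h h1 h2 c d h3 h4 h5 h6
    exact sep_eventually R hR _ _ (hJk a b h h1 h2) (hJk c d h3 h4 h5)
      (hJJ a b h h1 h2 c d h3 h4 h5 h6)
  obtain ⟨m, h1, h2, h3, hm⟩ := (e1.and (e2.and (e3.and (Filter.eventually_gt_atTop 0)))).exists
  have hm' : (0 : ℝ) < m := by exact_mod_cast hm
  set c : ℝ := (m : ℝ) / R with hcdef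
  have hc : 0 < c := div_pos hm' hR
  have hcR : c * R = m := by rw [hcdef]; field_simp
  have bd : ∀ p : ℝ × ℝ, ‖p‖ ≤ R → |c * p.1| ≤ ((m : ℤ) : ℝ) ∧ |c * p.2| ≤ ((m : ℤ) : ℝ) := by
    intro p hp
    rw [Prod.norm_def, max_le_iff, Real.norm_eq_abs, Real.norm_eq_abs] at hp
    rw [abs_mul, abs_mul, abs_of_pos hc, Int.cast_natCast, ← hcR]
    exact ⟨mul_le_mul_of_nonneg_left hp.1 hc.le, mul_le_mul_of_nonneg_left hp.2 hc.le⟩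
  have nonem : ∀ p : ℝ × ℝ, ‖p‖ ≤ R → (round (c * p.1), round (c * p.2)) ∈ Rk m c p :=
    fun p hp => nk_mem _ _ _ (bd p hp)
  refine model_of_discrete G v m (by positivity) hex (fun w => Nk m c (S w))
    (fun a b => Nk m c (J a b)) ?_ ?_ ?_ ?_ ?_ ?_ ?_ ?_ ?_ ?_ ?_
  · rintro w hw x ⟨p, hp, hx⟩
    exact ⟨hx.1, hx.2.1⟩
  · intro w hw
    obtain ⟨p, hp⟩ := hSn w hw
    exact ⟨_, p, hp, nonem p (hSb w hw p hp)⟩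
  · intro w hw
    exact nk_conn _ _ _ (hSc w hw) (fun p hp => bd p (hSb w hw p hp))
  · intro w w' hw hw' hne
    exact nk_disj hc (h1 w w' hw hw' hne)
  · intro w hw
    obtain ⟨p, hp, hpR⟩ := hSv w hw
    refine ⟨_, ⟨p, hp, nonem p hpR.le⟩, ?_⟩
    have aux : ∀ y : ℝ, |y| = R → |round (c * y)| = (m : ℤ) := by
      intro y hy
      rcases abs_choice y with e | e
      · have : y = R := by rw [← hy, e]
        rw [this, hcR, round_natCast]; simp
      · have : y = -R := by rw [← hy, e]; simp
        have h5 : c * y = ((-(m : ℤ) : ℤ) : ℝ) := by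
          rw [this]; push_cast; rw [← hcR]; ring
        rw [h5, round_intCast]; simp
    rw [Prod.norm_def, Real.norm_eq_abs, Real.norm_eq_abs] at hpR
    rcases max_choice |p.1| |p.2| with e | e <;> rw [e] at hpR
    · exact Or.inl (aux _ hpR)
    · exact Or.inr (aux _ hpR)
  · rintro a b hab ha hb x ⟨p, hp, hx⟩
    exact ⟨hx.1, hx.2.1⟩
  · intro a b hab ha hb
    exact nk_conn _ _ _ (hJc a b hab ha hb) (fun p hp => bd p (hJb a b hab ha hb p hp))
  · intro a b hab ha hb
    obtain ⟨p, hp, hp'⟩ := hJ1 a b hab ha hb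
    have := nonem p (hJb a b hab ha hb p hp)
    exact ⟨_, ⟨p, hp, this⟩, ⟨p, hp', this⟩⟩
  · intro a b hab ha hb
    obtain ⟨p, hp, hp'⟩ := hJ2 a b hab ha hb
    have := nonem p (hJb a b hab ha hb p hp)
    exact ⟨_, ⟨p, hp, this⟩, ⟨p, hp', this⟩⟩
  · intro a b hab ha hb x hx hxa hxb
    exact nk_disj hc (h2 a b hab ha hb x hx hxa hxb)
  · intro a b hab ha hb c d hcd hc' hd hne
    exact nk_disj hc (h3 a b hab ha hb c d hcd hc' hd hne)



/-- Inversion centred at `c` (for the sup norm). -/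
noncomputable def inver (c z : ℝ × ℝ) : ℝ × ℝ := (‖z - c‖ ^ 2)⁻¹ • (z - c)

theorem norm_inver (c z : ℝ × ℝ) : ‖inver c z‖ = ‖z - c‖⁻¹ := by
  unfold inver
  rw [norm_smul, norm_inv, norm_pow, norm_norm]
  by_cases h : ‖z - c‖ = 0
  · simp [h]
  · field_simp

theorem inver_inj (c : ℝ × ℝ) : Function.Injective (inver c) := by
  intro x y h
  have h1 : ‖x - c‖ = ‖y - c‖ := by
    have := congrArg norm h
    rw [norm_inver, norm_inver] at this
    exact inv_injective this
  unfold inver at h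
  rw [h1] at h
  by_cases h0 : ‖y - c‖ = 0
  · rw [h0] at h1
    rw [norm_eq_zero] at h0 h1
    exact sub_left_injective (h1.trans h0.symm)
  · have h2 : (‖y - c‖ ^ 2)⁻¹ ≠ 0 := by positivity
    exact sub_left_injective (smul_right_injective _ h2 h)

theorem inver_cont (c : ℝ × ℝ) (s : Set (ℝ × ℝ)) (hs : c ∉ s) : ContinuousOn (inver c) s := by
  unfold inver
  have h1 : ContinuousOn (fun z : ℝ × ℝ => ‖z - c‖ ^ 2) s := by fun_prop
  have h2 : ContinuousOn (fun z : ℝ × ℝ => z - c) s := by fun_prop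
  refine ContinuousOn.smul (h1.inv₀ ?_) h2
  intro z hz h
  apply hs
  have : z = c := by simpa [sub_eq_zero] using h
  exact this ▸ hz

section emb
variable {V : Type} {G : SimpleGraph V} (E : PlaneEmbedding G)

theorem emb_same {a b x y : V} (hab : G.Adj a b) (hxy : G.Adj x y) {t s : ℝ}
    (ht : t ∈ Set.Ioo (0 : ℝ) 1) (hs : s ∈ Set.Icc (0 : ℝ) 1) (h : E.arc a b t = E.arc x y s) :
    s(a, b) = s(x, y) := by
  by_contra hne
  have := (E.arc_meet hab hxy hne ⟨⟨t, ⟨ht.1.le, ht.2.le⟩, rfl⟩, ⟨s, hs, h.symm⟩⟩).1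
  rcases this with h1 | h1
  · exact E.arc_avoid hab a ⟨t, ht, h1⟩
  · exact E.arc_avoid hab b ⟨t, ht, h1⟩

theorem emb_ne {a b v : V} (hab : G.Adj a b) (ha : a ≠ v) (hb : b ≠ v) {t : ℝ}
    (ht : t ∈ Set.Icc (0 : ℝ) 1) : E.arc a b t ≠ E.pos v := by
  intro h
  rcases eq_or_lt_of_le ht.1 with h0 | h0
  · rw [← h0, E.arc_zero hab] at h
    exact ha (E.pos_inj h)
  rcases eq_or_lt_of_le ht.2 with h1 | h1
  · rw [h1, E.arc_one hab] at h
    exact hb (E.pos_inj h)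
  exact E.arc_avoid hab v ⟨t, ⟨h0, h1⟩, h⟩

/-- The star around a vertex. -/
def starSet (τ : V → V → ℝ) (w : V) : Set (ℝ × ℝ) :=
  {E.pos w} ∪ ⋃ x, ⋃ (_ : G.Adj w x), E.arc w x '' Set.Icc 0 (τ w x)

theorem mem_starSet (τ : V → V → ℝ) (w : V) (p : ℝ × ℝ) : p ∈ starSet E τ w ↔
    p = E.pos w ∨ ∃ x, G.Adj w x ∧ ∃ t ∈ Set.Icc 0 (τ w x), E.arc w x t = p := by
  simp [starSet]

theorem star_pt (τ : V → V → ℝ) (hτ : ∀ w x, G.Adj w x → τ w x < 1) (w : V) (p : ℝ × ℝ)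
    (hp : p ∈ starSet E τ w) : p = E.pos w ∨ ∃ x, G.Adj w x ∧ ∃ t ∈ Set.Ioo (0 : ℝ) 1,
      t ≤ τ w x ∧ E.arc w x t = p := by
  rw [mem_starSet] at hp
  rcases hp with hp | ⟨x, hx, t, ht, rfl⟩
  · exact Or.inl hp
  · rcases eq_or_lt_of_le ht.1 with h | h
    · left; rw [← h, E.arc_zero hx]
    · exact Or.inr ⟨x, hx, t, ⟨h, ht.2.trans_lt (hτ w x hx)⟩, ht.2, rfl⟩

theorem star_compact [Finite V] (τ : V → V → ℝ) (w : V) : IsCompact (starSet E τ w) := by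
  refine IsCompact.union isCompact_singleton ?_
  refine isCompact_iUnion (fun x => ?_)
  by_cases h : G.Adj w x
  · simp only [h, Set.iUnion_true]
    exact isCompact_Icc.image (E.arc_cont h)
  · simp [h]

theorem star_conn (τ : V → V → ℝ) (hτ0 : ∀ w x, G.Adj w x → 0 ≤ τ w x) (w : V) :
    IsPreconnected (starSet E τ w) := by
  refine isPreconnected_of_forall (E.pos w) ?_
  intro y hy
  have hy' := hy
  rw [mem_starSet] at hy
  rcases hy with rfl | ⟨x, hx, t, ht, rfl⟩
  · exact ⟨{E.pos w}, by simpa using hy', rfl, rfl, isPreconnected_singleton⟩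
  · refine ⟨E.arc w x '' Set.Icc 0 (τ w x), ?_, ⟨0, ⟨le_rfl, hτ0 w x hx⟩, E.arc_zero hx⟩,
      ⟨t, ht, rfl⟩, isPreconnected_Icc.image _ (E.arc_cont hx).continuousOn⟩
    rintro _ ⟨s, hs, rfl⟩
    rw [mem_starSet]
    exact Or.inr ⟨x, hx, s, hs, rfl⟩

theorem star_disj (τ : V → V → ℝ) (v : V) (hτ : ∀ w x, G.Adj w x → τ w x < 1)
    (hτ3 : ∀ w x, G.Adj w x → x ≠ v → τ w x ≤ 1 / 3) (w w' : V) (hw : w ≠ v) (hw' : w' ≠ v)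
    (hne : w ≠ w') : Disjoint (starSet E τ w) (starSet E τ w') := by
  rw [Set.disjoint_left]
  intro p hp hp'
  rcases star_pt E τ hτ w p hp with h | ⟨x, hx, t, ht, htτ, h⟩
  · rcases star_pt E τ hτ w' p hp' with h' | ⟨x', hx', t', ht', htτ', h'⟩
    · exact hne (E.pos_inj (h.symm.trans h'))
    · exact E.arc_avoid hx' w ⟨t', ht', h'.trans h⟩
  · rcases star_pt E τ hτ w' p hp' with h' | ⟨x', hx', t', ht', htτ', h'⟩
    · exact E.arc_avoid hx w' ⟨t, ht, h.trans h'⟩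
    · have hs := emb_same E hx hx' ht ⟨ht'.1.le, ht'.2.le⟩ (h.trans h'.symm)
      rw [Sym2.eq_iff] at hs
      rcases hs with ⟨h1, _⟩ | ⟨h1, h2⟩
      · exact hne h1
      · subst h1 h2
        have a1 := hτ3 w x hx hw'
        have a2 := hτ3 x w hx' hw
        rw [E.arc_symm hx] at h'
        have := E.arc_injOn hx ⟨ht.1.le, ht.2.le⟩ (x₂ := 1 - t')
          ⟨by linarith [ht'.2], by linarith [ht'.1]⟩ (h.trans h'.symm)
        linarith

theorem joint_pt {a b : V} {p : ℝ × ℝ} (hp : p ∈ E.arc a b '' Set.Icc (1 / 3) (2 / 3)) :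
    ∃ t ∈ Set.Ioo (0 : ℝ) 1, E.arc a b t = p := by
  obtain ⟨t, ht, rfl⟩ := hp
  exact ⟨t, ⟨by linarith [ht.1], by linarith [ht.2]⟩, rfl⟩

theorem joint_star (τ : V → V → ℝ) (hτ : ∀ w x, G.Adj w x → τ w x < 1) (a b : V)
    (hab : G.Adj a b) (x : V) (hxa : x ≠ a) (hxb : x ≠ b) :
    Disjoint (E.arc a b '' Set.Icc (1 / 3) (2 / 3)) (starSet E τ x) := by
  rw [Set.disjoint_left]
  intro p hp hp'
  obtain ⟨t, ht, h⟩ := joint_pt E hp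
  rcases star_pt E τ hτ x p hp' with h' | ⟨x', hx', t', ht', htτ', h'⟩
  · exact E.arc_avoid hab x ⟨t, ht, h.trans h'⟩
  · have hs := emb_same E hab hx' ht ⟨ht'.1.le, ht'.2.le⟩ (h.trans h'.symm)
    rw [Sym2.eq_iff] at hs
    rcases hs with ⟨h1, _⟩ | ⟨_, h1⟩
    · exact hxa h1.symm
    · exact hxb h1.symm

theorem joint_joint (a b : V) (hab : G.Adj a b) (c d : V) (hcd : G.Adj c d)
    (hne : s(a, b) ≠ s(c, d)) : Disjoint (E.arc a b '' Set.Icc (1 / 3) (2 / 3))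
      (E.arc c d '' Set.Icc (1 / 3) (2 / 3)) := by
  rw [Set.disjoint_left]
  intro p hp hp'
  obtain ⟨t, ht, h⟩ := joint_pt E hp
  obtain ⟨t', ht', h'⟩ := joint_pt E hp'
  exact hne (emb_same E hab hcd ht ⟨ht'.1.le, ht'.2.le⟩ (h.trans h'.symm))

theorem first_hit (w v : V) (hwv : G.Adj w v) (r : ℝ) (hr : 0 < r) (hrw : r < ‖E.pos w - E.pos v‖) :
    ∃ t : ℝ, 0 ≤ t ∧ t < 1 ∧ ‖E.arc w v t - E.pos v‖ = r ∧
      ∀ s ∈ Set.Icc 0 t, r ≤ ‖E.arc w v s - E.pos v‖ := by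
  set f : ℝ → ℝ := fun t => ‖E.arc w v t - E.pos v‖ with hf
  have hc : Continuous f := ((E.arc_cont hwv).sub continuous_const).norm
  have f0 : r < f 0 := by simpa [hf, E.arc_zero hwv] using hrw
  have f1 : f 1 = 0 := by simp [hf, E.arc_one hwv]
  have hT : IsCompact (Set.Icc (0 : ℝ) 1 ∩ {t | f t ≤ r}) :=
    isCompact_Icc.inter_right (isClosed_le hc continuous_const)
  obtain ⟨t, ⟨ht, htr⟩, hmin⟩ := hT.exists_isLeast ⟨1, by simp, by simp [f1, hr.le]⟩
  change f t ≤ r at htr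
  obtain ⟨s, hs, hsr⟩ := intermediate_value_Icc' ht.1 hc.continuousOn ⟨htr, f0.le⟩
  have hst : t ≤ s := hmin ⟨⟨hs.1, hs.2.trans ht.2⟩, hsr.le⟩
  have hst : s = t := le_antisymm hs.2 hst
  subst hst
  refine ⟨s, ht.1, lt_of_le_of_ne ht.2 ?_, hsr, ?_⟩
  · rintro rfl
    linarith
  · intro u hu
    by_contra hlt
    have h1 : s ≤ u := hmin ⟨⟨hu.1, hu.2.trans ht.2⟩, (not_le.1 hlt).le⟩
    have h2 : u = s := le_antisymm hu.2 h1
    rw [h2] at hlt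
    exact hlt hsr.ge

theorem exists_radius [Finite V] (v : V) : ∃ r : ℝ, 0 < r ∧ (∀ w, w ≠ v → r < ‖E.pos w - E.pos v‖) ∧
    ∀ a b, G.Adj a b → a ≠ v → b ≠ v → ∀ t ∈ Set.Icc (0 : ℝ) 1, r < ‖E.arc a b t - E.pos v‖ := by
  have ev : ∀ x : ℝ, 0 < x → ∀ᶠ r in nhdsWithin (0 : ℝ) (Set.Ioi 0), r < x := fun x hx =>
    nhdsWithin_le_nhds (Iio_mem_nhds hx)
  have e1 : ∀ᶠ r in nhdsWithin (0 : ℝ) (Set.Ioi 0), ∀ w, w ≠ v → r < ‖E.pos w - E.pos v‖ := by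
    simp only [Filter.eventually_all]
    intro w hw
    exact ev _ (norm_pos_iff.2 (sub_ne_zero.2 (fun h => hw (E.pos_inj h))))
  have e2 : ∀ᶠ r in nhdsWithin (0 : ℝ) (Set.Ioi 0), ∀ a b, G.Adj a b → a ≠ v → b ≠ v →
      ∀ t ∈ Set.Icc (0 : ℝ) 1, r < ‖E.arc a b t - E.pos v‖ := by
    rw [Filter.eventually_all]; intro a
    rw [Filter.eventually_all]; intro b
    rw [Filter.eventually_all]; intro hab
    rw [Filter.eventually_all]; intro ha
    rw [Filter.eventually_all]; intro hb
    have hc : Continuous (fun t => ‖E.arc a b t - E.pos v‖) :=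
      ((E.arc_cont hab).sub continuous_const).norm
    obtain ⟨t, ht, hmin⟩ := (isCompact_Icc (a := (0 : ℝ)) (b := 1)).exists_isMinOn
      ⟨0, by simp⟩ hc.continuousOn
    filter_upwards [ev _ (norm_pos_iff.2 (sub_ne_zero.2 (emb_ne E hab ha hb ht)))] with r hr s hs
    exact hr.trans_le (hmin hs)
  obtain ⟨r, h1, h2, h3⟩ := (e1.and (e2.and self_mem_nhdsWithin)).exists
  exact ⟨r, h3, h1, h2⟩

theorem model_of_embedding {V : Type} {G : SimpleGraph V} (E : PlaneEmbedding G) [Finite V] (v : V) (hex : ∃ w, w ≠ v) : Nonempty (LatModel G v) := by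
  classical
  obtain ⟨r, hr, hr1, hr2⟩ := exists_radius E v
  have h0 : ∀ w, ∃ t : ℝ, G.Adj w v → 0 ≤ t ∧ t < 1 ∧ ‖E.arc w v t - E.pos v‖ = r ∧
      ∀ s ∈ Set.Icc 0 t, r ≤ ‖E.arc w v s - E.pos v‖ := by
    intro w
    by_cases h : G.Adj w v
    · obtain ⟨t, ht⟩ := first_hit E w v h r hr (hr1 w h.ne)
      exact ⟨t, fun _ => ht⟩
    · exact ⟨0, fun h' => absurd h' h⟩
  choose T hT using h0
  let τ : V → V → ℝ := fun w x => if x = v then T w else 1 / 3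
  have τv : ∀ w, τ w v = T w := fun w => if_pos rfl
  have τn : ∀ w x, x ≠ v → τ w x = 1 / 3 := fun w x h => if_neg h
  have hτ : ∀ w x, G.Adj w x → τ w x < 1 := by
    intro w x h
    by_cases hx : x = v
    · subst hx; rw [τv]; exact (hT w h).2.1
    · rw [τn w x hx]; norm_num
  have hτ0 : ∀ w x, G.Adj w x → 0 ≤ τ w x := by
    intro w x h
    by_cases hx : x = v
    · subst hx; rw [τv]; exact (hT w h).1
    · rw [τn w x hx]; norm_num
  have hτ3 : ∀ w x, G.Adj w x → x ≠ v → τ w x ≤ 1 / 3 := fun w x _ hx => (τn w x hx).le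
  have farS : ∀ w, w ≠ v → ∀ p ∈ starSet E τ w, r ≤ ‖p - E.pos v‖ := by
    intro w hw p hp
    rw [mem_starSet] at hp
    rcases hp with rfl | ⟨x, hx, t, ht, rfl⟩
    · exact (hr1 w hw).le
    · by_cases hxv : x = v
      · subst hxv
        rw [τv] at ht
        exact (hT w hx).2.2.2 t ht
      · rw [τn w x hxv] at ht
        exact (hr2 w x hx hw hxv t ⟨ht.1, ht.2.trans (by norm_num)⟩).le
  have farJ : ∀ a b, G.Adj a b → a ≠ v → b ≠ v →
      ∀ p ∈ E.arc a b '' Set.Icc (1 / 3) (2 / 3), r ≤ ‖p - E.pos v‖ := by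
    intro a b hab ha hb p hp
    obtain ⟨t, ht, rfl⟩ := joint_pt E hp
    exact (hr2 a b hab ha hb t ⟨ht.1.le, ht.2.le⟩).le
  have noS : ∀ B : Set (ℝ × ℝ), (∀ p ∈ B, r ≤ ‖p - E.pos v‖) → E.pos v ∉ B := by
    intro B hB h
    have := hB _ h
    simp only [sub_self, norm_zero] at this
    linarith
  have nb : ∀ B : Set (ℝ × ℝ), (∀ p ∈ B, r ≤ ‖p - E.pos v‖) →
      ∀ q ∈ inver (E.pos v) '' B, ‖q‖ ≤ r⁻¹ := by
    rintro B hB _ ⟨p, hp, rfl⟩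
    rw [norm_inver]
    exact inv_anti₀ hr (hB p hp)
  have dj := fun (A B : Set (ℝ × ℝ)) => (Set.disjoint_image_iff (s := A) (t := B) (inver_inj (E.pos v))).2
  refine model_of_cont G v hex r⁻¹ (inv_pos.2 hr) (fun w => inver (E.pos v) '' starSet E τ w)
    (fun a b => inver (E.pos v) '' (E.arc a b '' Set.Icc (1 / 3) (2 / 3)))
    ?_ ?_ ?_ ?_ ?_ ?_ ?_ ?_ ?_ ?_ ?_ ?_ ?_
  · intro w hw
    exact (star_compact E τ w).image_of_continuousOn (inver_cont _ _ (noS _ (farS w hw)))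
  · intro w hw
    exact (star_conn E τ hτ0 w).image _ (inver_cont _ _ (noS _ (farS w hw)))
  · intro w hw
    exact ⟨_, E.pos w, (mem_starSet E τ w _).2 (Or.inl rfl), rfl⟩
  · intro w hw
    exact nb _ (farS w hw)
  · intro w w' hw hw' hne
    exact dj _ _ (star_disj E τ v hτ hτ3 w w' hw hw' hne)
  · intro w hw
    refine ⟨_, ⟨E.arc w v (T w), (mem_starSet E τ w _).2 (Or.inr ⟨v, hw, T w, ?_, rfl⟩), rfl⟩, ?_⟩
    · rw [τv]; exact ⟨(hT w hw).1, le_rfl⟩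
    · rw [norm_inver, (hT w hw).2.2.1]
  · intro a b hab ha hb
    exact (isCompact_Icc.image (E.arc_cont hab)).image_of_continuousOn
      (inver_cont _ _ (noS _ (farJ a b hab ha hb)))
  · intro a b hab ha hb
    exact (isPreconnected_Icc.image _ (E.arc_cont hab).continuousOn).image _
      (inver_cont _ _ (noS _ (farJ a b hab ha hb)))
  · intro a b hab ha hb
    exact nb _ (farJ a b hab ha hb)
  · intro a b hab ha hb
    refine ⟨_, ⟨E.arc a b (1 / 3), ⟨1 / 3, by norm_num, rfl⟩, rfl⟩, ⟨E.arc a b (1 / 3), ?_, rfl⟩⟩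
    rw [mem_starSet]
    exact Or.inr ⟨b, hab, 1 / 3, ⟨by norm_num, (τn a b hb).ge⟩, rfl⟩
  · intro a b hab ha hb
    refine ⟨_, ⟨E.arc a b (2 / 3), ⟨2 / 3, by norm_num, rfl⟩, rfl⟩, ⟨E.arc a b (2 / 3), ?_, rfl⟩⟩
    rw [mem_starSet]
    refine Or.inr ⟨a, hab.symm, 1 / 3, ⟨by norm_num, (τn b a ha).ge⟩, ?_⟩
    rw [E.arc_symm hab]
    norm_num
  · intro a b hab ha hb x hx hxa hxb
    exact dj _ _ (joint_star E τ hτ a b hab x hxa hxb)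
  · intro a b hab ha hb c d hcd hc hd hne
    exact dj _ _ (joint_joint E a b hab c d hcd hne)

end emb


/-- Corollary 1.3: a connected triangle-free planar graph on at least 2 vertices has
2-surviving rate greater than `1/9`. -/
theorem surviving_rate_two_triangle_free {V : Type} [Fintype V] (G : SimpleGraph V)
    (hconn : G.Connected) (hplanar : IsPlanar G)
    (hn : 2 ≤ Fintype.card V)
    (htriangle : ∀ (v : V) (c : G.Walk v v), c.IsCycle → c.length ≠ 3) :
    survivingRate G (fun _ => 2) > 1 / 9 := by
  obtain ⟨E⟩ := hplanar
  refine final_of_model G hconn (fun v => model_of_embedding E v ?_) hn htriangle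
  have : Nontrivial V := Fintype.one_lt_card_iff_nontrivial.1 hn
  exact exists_ne v
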